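/- arXiv:1901.03725 — 2 statements merged into one kernel-verified Lean document; each statement's English description precedes it below -/
import Mathlib

section
/- For general lines L_1,…,L_6 in P^3 (i.e., there exists a nonzero polynomial P in the 48 coordinates of spanning vectors a_1,b_1,…,a_6,b_6 ∈ ℂ^4 such that whenever P does not vanish, each pair a_i,b_i is linearly independent, the subspaces L_i = span{a_i,b_i} pairwise intersect only in 0, and the following holds): the ℂ-vector space of homogeneous polynomials F of degree 20 in ℂ[x_0,x_1,x_2,x_3] with F ∈ I(L_i)^6 for i = 1,…,5 and F ∈ I(L_6) has dimension exactly 1. Since binom(23,3) = 1771 < 1876 = 5·371 + 21, the system 𝓛_{20}(6,6,6,6,6,1) has negative virtual dimension, so it is special (unexpected). -/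
open MvPolynomial

noncomputable section

abbrev C4 : Type := Fin 4 → ℂ
abbrev R3 : Type := MvPolynomial (Fin 4) ℂ

/-- The homogeneous ideal of the line in `P^3` corresponding to a linear subspace
`L ⊆ ℂ^4`: all polynomials vanishing identically on `L`. -/
def lineIdeal (L : Submodule ℂ C4) : Ideal R3 where
  carrier := {F | ∀ v ∈ L, eval v F = 0}
  add_mem' := by
    intro a b ha hb v hv
    simp [ha v hv, hb v hv]
  zero_mem' := by
    intro v hv
    simp
  smul_mem' := by
    intro c F hF v hv
    simp [smul_eq_mul, hF v hv]

/-- The linear system `𝓛_d(m_1, …, m_s)`: homogeneous forms of degree `d`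
vanishing to order `m i` along the line `L i`, as a `ℂ`-subspace. -/
def linSys (d : ℕ) {s : ℕ} (L : Fin s → Submodule ℂ C4) (m : Fin s → ℕ) :
    Submodule ℂ R3 :=
  homogeneousSubmodule (Fin 4) ℂ d ⊓
    ⨅ i, Submodule.restrictScalars ℂ ((lineIdeal (L i)) ^ (m i))

/-- A property `Q` holds for `s` *general* lines in `P^3`: there is a nonzero
polynomial `P` in the `8s` coordinates of spanning vectors such that whenever
`P` does not vanish, each pair of vectors is linearly independent, the spanned
planes are pairwise disjoint, and `Q` holds for these lines. -/
def GeneralLines (s : ℕ) (Q : (Fin s → Submodule ℂ C4) → Prop) : Prop :=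
  ∃ P : MvPolynomial (Fin s × Fin 2 × Fin 4) ℂ, P ≠ 0 ∧
    ∀ v : Fin s → Fin 2 → C4,
      MvPolynomial.eval (fun p => v p.1 p.2.1 p.2.2) P ≠ 0 →
      (∀ i, LinearIndependent ℂ ![v i 0, v i 1]) ∧
      (∀ i j, i ≠ j →
        Submodule.span ℂ {v i 0, v i 1} ⊓ Submodule.span ℂ {v j 0, v j 1} = ⊥) ∧
      Q (fun i => Submodule.span ℂ {v i 0, v i 1})

/-!
The quadrics through triples of the first five lines, evaluated at a point `p` and restricted to the
sixth line, combine to two binary quartic forms on the sixth line whose coefficients depend on `p`.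
When `p` lies on the sixth line they have a root at `p`, so their Bézout determinant vanishes there.
After removal of excess quadric factors this determinant has degree 20, and its multiplicity along
each of the first five lines is read off from the number of quadrics containing that line.

Uniqueness amounts to one functional, evaluation at a point, being injective on the linear system.
This is an open condition, so one configuration of lines suffices. The twisted cubics having the
first five special lines as chords form a family with two parameters `x`, `z`. A form of degree 20
restricts to such a cubic with degree 60, and multiplicity six at the ten endpoints of the chords
determines this restriction up to a factor `g(x, z)`, of degree at most four in each parameter. The
cubics meeting the sixth line trace a curve in the parameter plane on which `g` vanishes. With the
point condition this gives five zeros of `g` on the line `z = 5/4`, so `z - 5/4` divides `g`. The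
curve has four points with distinct `z` on the line `x = 7/8`, so the quotient, of degree at most
three in `z`, vanishes there. It is therefore divisible by every power of `x - 7/8`.
-/

namespace SixLines

section Brackets

variable {R S : Type*} [CommRing R] [CommRing S]

/-- The determinant of four vectors of `R⁴`, as the Laplace expansion along the first two, so that
it evaluates quickly on explicit integer vectors. -/
def bracket (a b c d : Fin 4 → R) : R :=
  (a 0 * b 1 - a 1 * b 0) * (c 2 * d 3 - c 3 * d 2)
  - (a 0 * b 2 - a 2 * b 0) * (c 1 * d 3 - c 3 * d 1)
  + (a 0 * b 3 - a 3 * b 0) * (c 1 * d 2 - c 2 * d 1)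
  + (a 1 * b 2 - a 2 * b 1) * (c 0 * d 3 - c 3 * d 0)
  - (a 1 * b 3 - a 3 * b 1) * (c 0 * d 2 - c 2 * d 0)
  + (a 2 * b 3 - a 3 * b 2) * (c 0 * d 1 - c 1 * d 0)

lemma det_eq_bracket (M : Matrix (Fin 4) (Fin 4) R) :
    M.det = bracket (M 0) (M 1) (M 2) (M 3) := by
  simp [Matrix.det_succ_row_zero, Fin.sum_univ_succ, bracket, Fin.succAbove]
  ring

lemma bracket_smul_add_smul (s t : R) (a b c d e : Fin 4 → R) :
    bracket (s • a + t • b) c d e = s * bracket a c d e + t * bracket b c d e := by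
  simp only [bracket, Pi.add_apply, Pi.smul_apply, smul_eq_mul]
  ring

lemma bracket_cramer (p a b c d : Fin 4 → R) :
    bracket p a b c • d - bracket p a b d • c + bracket p a c d • b - bracket p b c d • a
      + bracket a b c d • p = 0 := by
  ext i
  fin_cases i <;> simp [bracket] <;> ring

lemma bracket_map (f : R →+* S) (a b c d : Fin 4 → R) :
    bracket (f ∘ a) (f ∘ b) (f ∘ c) (f ∘ d) = f (bracket a b c d) := by
  simp only [bracket, Function.comp_apply, map_add, map_sub, map_mul]

/-- The determinant of two vectors of `R²`. -/
def cross (x y : Fin 2 → R) : R := x 0 * y 1 - x 1 * y 0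

lemma cross_map (f : R →+* S) (x y : Fin 2 → R) : cross (f ∘ x) (f ∘ y) = f (cross x y) := by
  simp only [cross, Function.comp_apply, map_sub, map_mul]

end Brackets

/-- Two vectors of `R⁴`, thought of as spanning a line in projective 3-space. -/
abbrev Frame (R : Type*) : Type _ := Fin 2 → Fin 4 → R

section Quadrics

variable {R S : Type*} [CommRing R] [CommRing S]

/-- The linear form cutting out the plane through `p` and the line `l`, in the basis of the line
`m`. -/
def planeOn (l m : Frame R) (p : Fin 4 → R) : Fin 2 → R := fun k => bracket p (l 0) (l 1) (m k)

/-- The quadric through three lines, evaluated at `p`: it vanishes when the planes joining `p` to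
the first two lines meet the third line in the same point. -/
def quadric (l : Fin 3 → Frame R) (p : Fin 4 → R) : R :=
  cross (planeOn (l 0) (l 2) p) (planeOn (l 1) (l 2) p)

/-- The polar form of `quadric`. -/
def quadricPolar (l : Fin 3 → Frame R) (p r : Fin 4 → R) : R :=
  cross (planeOn (l 0) (l 2) p) (planeOn (l 1) (l 2) r) +
    cross (planeOn (l 0) (l 2) r) (planeOn (l 1) (l 2) p)

/-- The restriction of `quadric l` to the line `m`: the coefficients of a binary quadratic form in
the basis `m`. -/
def quadricOn (l : Fin 3 → Frame R) (m : Frame R) : Fin 3 → R :=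
  ![quadric l (m 0), quadricPolar l (m 0) (m 1), quadric l (m 1)]

lemma planeOn_smul_add_smul (l m : Frame R) (s t : R) (p r : Fin 4 → R) :
    planeOn l m (s • p + t • r) = s • planeOn l m p + t • planeOn l m r := by
  ext k
  simp [planeOn, bracket_smul_add_smul]

lemma planeOn_self (l m : Frame R) (s t : R) : planeOn l m (s • l 0 + t • l 1) = 0 := by
  ext k
  simp only [planeOn, bracket_smul_add_smul, Pi.zero_apply]
  simp only [bracket]
  ring

lemma quadric_smul_add_smul (l : Fin 3 → Frame R) (s t : R) (p r : Fin 4 → R) :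
    quadric l (s • p + t • r) =
      quadric l p * s ^ 2 + quadricPolar l p r * (s * t) + quadric l r * t ^ 2 := by
  simp only [quadric, quadricPolar, planeOn_smul_add_smul, cross, Pi.add_apply, Pi.smul_apply,
    smul_eq_mul]
  ring

lemma bracket_swap (p e f a b c d : Fin 4 → R) :
    bracket p e f c * bracket p a b d - bracket p e f d * bracket p a b c =
      -(bracket p e f a * bracket p c d b - bracket p e f b * bracket p c d a) := by
  have expand (v : Fin 4 → R) : bracket p e f v =
      bracket p e f (Pi.single 0 1) * v 0 + bracket p e f (Pi.single 1 1) * v 1 +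
      bracket p e f (Pi.single 2 1) * v 2 + bracket p e f (Pi.single 3 1) * v 3 := by
    simp [bracket]
    ring
  have self : bracket p e f p = 0 := by simp only [bracket]; ring
  have cdb : bracket p c d b = bracket p b c d := by simp only [bracket]; ring
  have cda : bracket p c d a = bracket p a c d := by simp only [bracket]; ring
  have cramer (i : Fin 4) := congrFun (bracket_cramer p a b c d) i
  simp only [Pi.add_apply, Pi.sub_apply, Pi.smul_apply, smul_eq_mul, Pi.zero_apply] at cramer
  rw [expand p] at self
  rw [cdb, cda, expand a, expand b, expand c, expand d]
  linear_combination
    (-bracket p e f (Pi.single 0 1)) * cramer 0 - bracket p e f (Pi.single 1 1) * cramer 1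
    - bracket p e f (Pi.single 2 1) * cramer 2 - bracket p e f (Pi.single 3 1) * cramer 3
    + bracket a b c d * self

lemma quadric_swap (l m n : Frame R) (p : Fin 4 → R) :
    quadric ![l, n, m] p = -quadric ![l, m, n] p := by
  have swap := bracket_swap p (l 0) (l 1) (n 0) (n 1) (m 0) (m 1)
  simpa only [quadric, planeOn, cross, Matrix.cons_val] using swap

lemma quadricPolar_swap (l m n : Frame R) (p r : Fin 4 → R) :
    quadricPolar ![l, n, m] p r = -quadricPolar ![l, m, n] p r := by
  have h := quadric_swap l m n ((1 : R) • p + (1 : R) • r)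
  rw [quadric_smul_add_smul, quadric_smul_add_smul, quadric_swap l m n p, quadric_swap l m n r] at h
  linear_combination h

lemma quadricOn_swap (l m n k : Frame R) : quadricOn ![l, n, m] k = -quadricOn ![l, m, n] k := by
  ext i
  fin_cases i
  · exact quadric_swap ..
  · exact quadricPolar_swap ..
  · exact quadric_swap ..

lemma planeOn_map (f : R →+* S) (l m : Frame R) (p : Fin 4 → R) :
    planeOn (fun i => f ∘ l i) (fun i => f ∘ m i) (f ∘ p) = f ∘ planeOn l m p :=
  funext fun _ => bracket_map f ..

lemma quadric_map (f : R →+* S) (l : Fin 3 → Frame R) (p : Fin 4 → R) :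
    quadric (fun i k => f ∘ l i k) (f ∘ p) = f (quadric l p) := by
  simp only [quadric, planeOn_map, cross_map]

lemma quadricOn_map (f : R →+* S) (l : Fin 3 → Frame R) (m : Frame R) :
    quadricOn (fun i k => f ∘ l i k) (fun k => f ∘ m k) = f ∘ quadricOn l m := by
  ext k
  fin_cases k <;> simp [quadricOn, quadricPolar, quadric_map, planeOn_map, cross_map]

end Quadrics

section BinaryForms

variable {R S : Type*} [CommRing R] [CommRing S]

/-- The binary form of degree `n` with the given coefficients, evaluated at `(s, t)`. -/
def evalBinary {n : ℕ} (f : Fin (n + 1) → R) (s t : R) : R :=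
  ∑ i, f i * (s ^ (n - i) * t ^ (i : ℕ))

/-- The product of two binary quadratic forms. -/
def quadMul (a b : Fin 3 → R) : Fin 5 → R :=
  ![a 0 * b 0, a 0 * b 1 + a 1 * b 0, a 0 * b 2 + a 1 * b 1 + a 2 * b 0,
    a 1 * b 2 + a 2 * b 1, a 2 * b 2]

/-- The Bézout matrix of two binary quartic forms. -/
def bezout (f g : Fin 5 → R) : Matrix (Fin 4) (Fin 4) R :=
  let c i j := f i * g j - f j * g i
  !![c 1 0, c 2 0, c 3 0, c 4 0;
     c 2 0, c 3 0 + c 2 1, c 4 0 + c 3 1, c 4 1;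
     c 3 0, c 4 0 + c 3 1, c 4 1 + c 3 2, c 4 2;
     c 4 0, c 4 1, c 4 2, c 4 3]

/-- Two functionals on binary cubic forms which vanish on the multiples of the quadratic form
`c`. -/
def annihilator (c : Fin 3 → R) : Matrix (Fin 2) (Fin 4) R :=
  !![-(c 1 * c 2), c 0 * c 2, 0, -(c 0 * c 0); -(c 2 * c 2), 0, c 0 * c 2, -(c 0 * c 1)]

lemma evalBinary_quadMul (a b : Fin 3 → R) (s t : R) :
    evalBinary (quadMul a b) s t = evalBinary a s t * evalBinary b s t := by
  simp [evalBinary, quadMul, Fin.sum_univ_succ]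
  ring

lemma evalBinary_smul_sub_smul {n : ℕ} (u v : R) (f g : Fin (n + 1) → R) (s t : R) :
    evalBinary (u • f - v • g) s t = u * evalBinary f s t - v * evalBinary g s t := by
  simp only [evalBinary, Finset.mul_sum, ← Finset.sum_sub_distrib, Pi.sub_apply, Pi.smul_apply,
    smul_eq_mul]
  exact Finset.sum_congr rfl fun _ _ => by ring

lemma quadMul_neg (a b : Fin 3 → R) : quadMul a (-b) = -quadMul a b := by
  ext i
  fin_cases i <;> simp [quadMul] <;> ring

lemma bezout_smul_sub_smul (u v u' v' : R) (f f' g g' : Fin 5 → R) :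
    bezout (u • f - v • f') (u' • g - v' • g') =
      (u * u') • bezout f g + (v * v') • bezout f' g'
        - (u * v') • bezout f g' - (v * u') • bezout f' g := by
  ext i j
  fin_cases i <;> fin_cases j <;> simp [bezout] <;> ring

lemma bezout_transpose (f g : Fin 5 → R) : (bezout f g).transpose = bezout f g := by
  ext i j
  fin_cases i <;> fin_cases j <;> rfl

lemma annihilator_mul_bezout (a b q : Fin 3 → R) :
    annihilator q * bezout (quadMul a q) (quadMul b q) = 0 := by
  ext i j
  fin_cases i <;> fin_cases j <;>
    simp [annihilator, bezout, quadMul, Matrix.mul_apply, Fin.sum_univ_four] <;> ring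

lemma bezout_mul_annihilator_transpose (a b q : Fin 3 → R) :
    bezout (quadMul a q) (quadMul b q) * (annihilator q).transpose = 0 := by
  simpa [bezout_transpose] using congrArg Matrix.transpose (annihilator_mul_bezout a b q)

lemma det_bezout_eq_zero [IsDomain R] {f g : Fin 5 → R} {s t : R} (ht : t ≠ 0)
    (hf : evalBinary f s t = 0) (hg : evalBinary g s t = 0) : (bezout f g).det = 0 := by
  refine Matrix.exists_vecMul_eq_zero_iff.mp ⟨![s ^ 3, s ^ 2 * t, s * t ^ 2, t ^ 3], ?_, ?_⟩
  · exact fun h => ht (by simpa using congrFun h 3)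
  have quartic (h : Fin 5 → R) : evalBinary h s t =
      h 0 * s ^ 4 + h 1 * s ^ 3 * t + h 2 * s ^ 2 * t ^ 2 + h 3 * s * t ^ 3 + h 4 * t ^ 4 := by
    simp [evalBinary, Fin.sum_univ_succ]
    ring
  rw [quartic] at hf hg
  ext j
  apply mul_left_cancel₀ (pow_ne_zero (j + 1) ht)
  fin_cases j <;>
    simp only [Fin.reduceFinMk, Matrix.vecMul, dotProduct, Fin.sum_univ_four, bezout,
      Matrix.of_apply, Matrix.cons_val, Pi.zero_apply, mul_zero]
  · linear_combination g 0 * hf - f 0 * hg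
  · linear_combination (g 0 * s + g 1 * t) * hf - (f 0 * s + f 1 * t) * hg
  · linear_combination (g 0 * s ^ 2 + g 1 * s * t + g 2 * t ^ 2) * hf
      - (f 0 * s ^ 2 + f 1 * s * t + f 2 * t ^ 2) * hg
  · linear_combination (g 0 * s ^ 3 + g 1 * s ^ 2 * t + g 2 * s * t ^ 2 + g 3 * t ^ 3) * hf
      - (f 0 * s ^ 3 + f 1 * s ^ 2 * t + f 2 * s * t ^ 2 + f 3 * t ^ 3) * hg

lemma quadMul_map (φ : R →+* S) (a b : Fin 3 → R) : quadMul (φ ∘ a) (φ ∘ b) = φ ∘ quadMul a b := by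
  ext i
  fin_cases i <;> simp [quadMul]

lemma bezout_map (φ : R →+* S) (f g : Fin 5 → R) :
    bezout (φ ∘ f) (φ ∘ g) = (bezout f g).map φ := by
  ext i j
  fin_cases i <;> fin_cases j <;> simp [bezout]

lemma annihilator_map (φ : R →+* S) (c : Fin 3 → R) :
    annihilator (φ ∘ c) = (annihilator c).map φ := by
  ext i j
  fin_cases i <;> fin_cases j <;> simp [annihilator]

end BinaryForms

section ReducedBezout

variable {R S : Type*} [CommRing R] [CommRing S]

/-- The Bézout matrix of `A i * Q i` and `B j * Q j`, restricted on the left to the functionals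
which annihilate the multiples of `Q r`. -/
def partialBezout (Q A B : Fin 3 → Fin 3 → R) (r i j : Fin 3) : Matrix (Fin 2) (Fin 4) R :=
  annihilator (Q r) * bezout (quadMul (A i) (Q i)) (quadMul (B j) (Q j))

variable (R) in
/-- The inclusion of `R²` into `R⁴` as the first two coordinates. -/
def firstTwo : Matrix (Fin 4) (Fin 2) R := !![1, 0; 0, 1; 0, 0; 0, 0]

/-- The Bézout matrix of `a₁q₁A₂Q₂ - a₂q₂A₁Q₁` and `b₁q₁B₂Q₂ - b₂q₂B₁Q₁`, with the excess factors
`q₂` and `q₁` removed from its rows and `q₀` from half of its columns; see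
`diagonal_mul_reducedBezout`. -/
def reducedBezout (q a b : Fin 3 → R) (Q A B : Fin 3 → Fin 3 → R) :
    Matrix (Fin 2 ⊕ Fin 2) (Fin 2 ⊕ Fin 2) R :=
  let W := partialBezout Q A B
  let N := (annihilator (Q 0)).transpose
  Matrix.fromBlocks
    ((q 2 * a 2 * b 2) • (W 2 1 1 * firstTwo R) - (q 1 * a 1 * b 2) • (W 2 2 1 * firstTwo R)
      - (q 1 * a 2 * b 1) • (W 2 1 2 * firstTwo R))
    ((a 0 * b 2) • (W 2 2 1 * N) + (a 2 * b 0) • (W 2 1 2 * N))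
    ((q 1 * a 1 * b 1) • (W 1 2 2 * firstTwo R) - (q 2 * a 1 * b 2) • (W 1 2 1 * firstTwo R)
      - (q 2 * a 2 * b 1) • (W 1 1 2 * firstTwo R))
    (-((a 1 * b 0) • (W 1 2 1 * N) + (a 0 * b 1) • (W 1 1 2 * N)))

lemma partialBezout_self (Q A B : Fin 3 → Fin 3 → R) (r : Fin 3) : partialBezout Q A B r r r = 0 :=
  annihilator_mul_bezout ..

lemma annihilator_mul_bezout_smul_sub_smul (Q A B : Fin 3 → Fin 3 → R) (r : Fin 3)
    (u v u' v' : R) :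
    annihilator (Q r) * bezout (u • quadMul (A 2) (Q 2) - v • quadMul (A 1) (Q 1))
        (u' • quadMul (B 2) (Q 2) - v' • quadMul (B 1) (Q 1)) =
      (u * u') • partialBezout Q A B r 2 2 + (v * v') • partialBezout Q A B r 1 1
        - (u * v') • partialBezout Q A B r 2 1 - (v * u') • partialBezout Q A B r 1 2 := by
  simp only [bezout_smul_sub_smul, Matrix.mul_sub, Matrix.mul_add, Matrix.mul_smul, partialBezout]

lemma partialBezout_mul_annihilator {Q A B : Fin 3 → Fin 3 → R}
    (hA : quadMul (A 2) (Q 2) - quadMul (A 1) (Q 1) = quadMul (A 0) (Q 0))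
    (hB : quadMul (B 2) (Q 2) - quadMul (B 1) (Q 1) = quadMul (B 0) (Q 0)) (r : Fin 3) :
    partialBezout Q A B r 2 2 * (annihilator (Q 0)).transpose
        + partialBezout Q A B r 1 1 * (annihilator (Q 0)).transpose =
      partialBezout Q A B r 2 1 * (annihilator (Q 0)).transpose
        + partialBezout Q A B r 1 2 * (annihilator (Q 0)).transpose := by
  have expand := annihilator_mul_bezout_smul_sub_smul Q A B r 1 1 1 1
  simp only [one_smul, mul_one, hA, hB] at expand
  have vanish := congrArg (· * (annihilator (Q 0)).transpose) expand
  simp only [Matrix.sub_mul, Matrix.add_mul, Matrix.mul_assoc, bezout_mul_annihilator_transpose,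
    Matrix.mul_zero] at vanish
  rw [← sub_eq_zero, vanish]
  abel

lemma diagonal_mul_reducedBezout {q a b : Fin 3 → R} {Q A B : Fin 3 → Fin 3 → R}
    (hA : quadMul (A 2) (Q 2) - quadMul (A 1) (Q 1) = quadMul (A 0) (Q 0))
    (hB : quadMul (B 2) (Q 2) - quadMul (B 1) (Q 1) = quadMul (B 0) (Q 0))
    (ha : a 2 * q 2 - a 1 * q 1 = a 0 * q 0) (hb : b 2 * q 2 - b 1 * q 1 = b 0 * q 0) :
    Matrix.diagonal (Sum.elim (fun _ : Fin 2 => q 2) (fun _ : Fin 2 => q 1)) *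
        reducedBezout q a b Q A B *
        Matrix.diagonal (Sum.elim (fun _ : Fin 2 => 1) (fun _ : Fin 2 => q 0)) =
      Matrix.fromRows (annihilator (Q 2)) (annihilator (Q 1)) *
        bezout ((a 1 * q 1) • quadMul (A 2) (Q 2) - (a 2 * q 2) • quadMul (A 1) (Q 1))
          ((b 1 * q 1) • quadMul (B 2) (Q 2) - (b 2 * q 2) • quadMul (B 1) (Q 1)) *
        Matrix.fromCols (firstTwo R) (annihilator (Q 0)).transpose := by
  have sum₁ := partialBezout_mul_annihilator hA hB 1
  have sum₂ := partialBezout_mul_annihilator hA hB 2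
  rw [Matrix.fromRows_mul, Matrix.fromRows_mul_fromCols, annihilator_mul_bezout_smul_sub_smul,
    annihilator_mul_bezout_smul_sub_smul]
  simp only [partialBezout_self, Matrix.zero_mul] at sum₁ sum₂ ⊢
  ext (i | i) (j | j) <;>
    simp only [Matrix.mul_diagonal, Matrix.diagonal_mul, reducedBezout, Sum.elim_inl, Sum.elim_inr,
      Matrix.fromBlocks_apply₁₁, Matrix.fromBlocks_apply₁₂, Matrix.fromBlocks_apply₂₁,
      Matrix.fromBlocks_apply₂₂, Matrix.sub_mul, Matrix.add_mul, Matrix.smul_mul, Matrix.zero_mul,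
      Matrix.add_apply, Matrix.sub_apply, Matrix.neg_apply, Matrix.smul_apply, Matrix.zero_apply,
      smul_zero, smul_eq_mul]
  · ring
  · have sum := congrFun₂ sum₂ i j
    simp only [Matrix.add_apply, Matrix.zero_apply] at sum
    linear_combination (-(a 2 * q 2) * (b 2 * q 2)) * sum
      - (b 2 * q 2 * (partialBezout Q A B 2 2 1 * (annihilator (Q 0)).transpose) i j) * ha
      - (a 2 * q 2 * (partialBezout Q A B 2 1 2 * (annihilator (Q 0)).transpose) i j) * hb
  · ring
  · have sum := congrFun₂ sum₁ i j
    simp only [Matrix.add_apply, Matrix.zero_apply] at sum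
    linear_combination (-(a 1 * q 1) * (b 1 * q 1)) * sum
      + (a 1 * q 1 * (partialBezout Q A B 1 2 1 * (annihilator (Q 0)).transpose) i j) * hb
      + (b 1 * q 1 * (partialBezout Q A B 1 1 2 * (annihilator (Q 0)).transpose) i j) * ha

lemma evalBinary_relation {Q A : Fin 3 → Fin 3 → R} {q a : Fin 3 → R} {s t : R}
    (hA : quadMul (A 2) (Q 2) - quadMul (A 1) (Q 1) = quadMul (A 0) (Q 0))
    (hq : ∀ i, evalBinary (Q i) s t = q i) (ha : ∀ i, evalBinary (A i) s t = a i) :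
    a 2 * q 2 - a 1 * q 1 = a 0 * q 0 := by
  have eval := congrArg (evalBinary · s t) hA
  have sub := evalBinary_smul_sub_smul 1 1 (quadMul (A 2) (Q 2)) (quadMul (A 1) (Q 1)) s t
  simp only [one_smul, one_mul] at sub
  simpa only [sub, evalBinary_quadMul, hq, ha] using eval

lemma det_mul_mul_eq_zero {m n : Type*} [Fintype m] [Fintype n] [DecidableEq m] [DecidableEq n]
    (e : m ≃ n) (M : Matrix m n R) {B : Matrix n n R} (hB : B.det = 0) (N : Matrix n m R) :
    (M * B * N).det = 0 := by
  have reindexed : (M * B * N).submatrix e.symm e.symm =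
      M.submatrix e.symm id * B * N.submatrix id e.symm := rfl
  rw [← Matrix.det_submatrix_equiv_self e.symm, reindexed, Matrix.det_mul, Matrix.det_mul, hB,
    mul_zero, zero_mul]

lemma det_reducedBezout_eq_zero [IsDomain R] {q a b : Fin 3 → R} {Q A B : Fin 3 → Fin 3 → R}
    {s t : R} (ht : t ≠ 0)
    (hA : quadMul (A 2) (Q 2) - quadMul (A 1) (Q 1) = quadMul (A 0) (Q 0))
    (hB : quadMul (B 2) (Q 2) - quadMul (B 1) (Q 1) = quadMul (B 0) (Q 0))
    (hq : ∀ i, evalBinary (Q i) s t = q i) (ha : ∀ i, evalBinary (A i) s t = a i)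
    (hb : ∀ i, evalBinary (B i) s t = b i) (hne : ∀ i, q i ≠ 0) :
    (reducedBezout q a b Q A B).det = 0 := by
  have common_zero : (bezout
      ((a 1 * q 1) • quadMul (A 2) (Q 2) - (a 2 * q 2) • quadMul (A 1) (Q 1))
      ((b 1 * q 1) • quadMul (B 2) (Q 2) - (b 2 * q 2) • quadMul (B 1) (Q 1))).det = 0 := by
    apply det_bezout_eq_zero (s := s) ht <;>
      simp only [evalBinary_smul_sub_smul, evalBinary_quadMul, hq, ha, hb] <;> ring
  have factor := diagonal_mul_reducedBezout hA hB (evalBinary_relation hA hq ha)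
    (evalBinary_relation hB hq hb)
  have vanish := det_mul_mul_eq_zero finSumFinEquiv
    (Matrix.fromRows (annihilator (Q 2)) (annihilator (Q 1))) common_zero
    (Matrix.fromCols (firstTwo R) (annihilator (Q 0)).transpose)
  rw [← factor, Matrix.det_mul, Matrix.det_mul, Matrix.det_diagonal, Matrix.det_diagonal] at vanish
  simpa [Fintype.prod_sum_type, hne] using vanish

lemma partialBezout_map (φ : R →+* S) (Q A B : Fin 3 → Fin 3 → R) (r i j : Fin 3) :
    partialBezout (φ ∘ Q ·) (φ ∘ A ·) (φ ∘ B ·) r i j = (partialBezout Q A B r i j).map φ := by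
  simp only [partialBezout, quadMul_map, bezout_map, annihilator_map, Matrix.map_mul]

lemma firstTwo_map (φ : R →+* S) : (firstTwo R).map φ = firstTwo S := by
  ext i j
  fin_cases i <;> fin_cases j <;> simp [firstTwo]

lemma reducedBezout_map (φ : R →+* S) (q a b : Fin 3 → R) (Q A B : Fin 3 → Fin 3 → R) :
    reducedBezout (φ ∘ q) (φ ∘ a) (φ ∘ b) (φ ∘ Q ·) (φ ∘ A ·) (φ ∘ B ·) =
      (reducedBezout q a b Q A B).map φ := by
  simp only [reducedBezout, partialBezout_map, ← firstTwo_map φ, annihilator_map]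
  ext (i | i) (j | j) <;> simp [Matrix.mul_apply]

lemma det_mem_graded {ι σ : Type*} [Fintype ι] [DecidableEq ι] [SetLike σ R]
    [AddSubgroupClass σ R] (𝒜 : ℕ → σ) [SetLike.GradedMonoid 𝒜] {M : Matrix ι ι R}
    {d : ι → ι → ℕ} {ρ κ : ι → ℕ} {n : ℕ} (hM : ∀ i j, M i j ∈ 𝒜 (d i j))
    (hd : ∀ i j, ρ i + d i j = κ j) (hn : ∑ i, ρ i + n = ∑ j, κ j) : M.det ∈ 𝒜 n := by
  rw [Matrix.det_apply]
  refine sum_mem fun τ _ => ?_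
  have degree : ∑ i, d (τ i) i = n := by
    rw [← Nat.add_left_cancel_iff (n := ∑ i, ρ i), hn, ← Equiv.sum_comp τ ρ,
      ← Finset.sum_add_distrib]
    exact Finset.sum_congr rfl fun i _ => hd (τ i) i
  have term := SetLike.prod_mem_graded 𝒜 (fun i => d (τ i) i) (fun i => M (τ i) i)
    fun i (_ : i ∈ Finset.univ) => hM (τ i) i
  rw [degree] at term
  rcases Int.units_eq_one_or (Equiv.Perm.sign τ) with h | h
  · rwa [h, one_smul]
  · rw [h, Units.neg_smul, one_smul]
    exact neg_mem term

lemma det_reducedBezout_mem_graded {σ : Type*} [SetLike σ S] [AddSubgroupClass σ S]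
    (𝒜 : ℕ → σ) [SetLike.GradedMonoid 𝒜] {φ : R →+* S} (hφ : ∀ c, φ c ∈ 𝒜 0)
    {q a b : Fin 3 → S} (Q A B : Fin 3 → Fin 3 → R) {x y z : Fin 3 → ℕ} {d e n : ℕ}
    (hq : ∀ i, q i ∈ 𝒜 (x i)) (ha : ∀ i, a i ∈ 𝒜 (y i)) (hb : ∀ i, b i ∈ 𝒜 (z i))
    (hxy : ∀ i, x i + y i = d) (hxz : ∀ i, x i + z i = e)
    (hn : 2 * (x 0 + x 1 + x 2) + n = 4 * (d + e)) :
    (reducedBezout q a b (φ ∘ Q ·) (φ ∘ A ·) (φ ∘ B ·)).det ∈ 𝒜 n := by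
  have smul_mem {c : S} {k : ℕ} (hc : c ∈ 𝒜 k) (M : Matrix (Fin 2) (Fin 2) R) (i j : Fin 2) :
      (c • M.map φ) i j ∈ 𝒜 k := SetLike.mul_mem_graded hc (hφ (M i j))
  have mul₃ {f g h : S} {k l m p : ℕ} (hf : f ∈ 𝒜 k) (hg : g ∈ 𝒜 l) (hh : h ∈ 𝒜 m)
      (hp : k + l + m = p) : f * g * h ∈ 𝒜 p :=
    hp ▸ SetLike.mul_mem_graded (SetLike.mul_mem_graded hf hg) hh
  have mul₂ {f g : S} {k l p : ℕ} (hf : f ∈ 𝒜 k) (hg : g ∈ 𝒜 l) (hp : k + l = p) : f * g ∈ 𝒜 p :=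
    hp ▸ SetLike.mul_mem_graded hf hg
  obtain ⟨hxy₀, hxy₁, hxy₂⟩ := And.intro (hxy 0) (And.intro (hxy 1) (hxy 2))
  obtain ⟨hxz₀, hxz₁, hxz₂⟩ := And.intro (hxz 0) (And.intro (hxz 1) (hxz 2))
  refine det_mem_graded 𝒜 (ρ := Sum.elim (fun _ => x 2) (fun _ => x 1))
    (κ := Sum.elim (fun _ => d + e) (fun _ => e + y 0))
    (d := Sum.elim (fun _ => Sum.elim (fun _ => d + z 2) (fun _ => y 0 + z 2))
      (fun _ => Sum.elim (fun _ => d + z 1) (fun _ => y 0 + z 1))) ?_ ?_ ?_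
  · simp only [reducedBezout, partialBezout_map, annihilator_map, ← firstTwo_map φ,
      ← Matrix.transpose_map, ← Matrix.map_mul]
    rintro (i | i) (j | j) <;> simp only [Sum.elim_inl, Sum.elim_inr]
    · exact sub_mem (sub_mem (smul_mem (mul₃ (hq 2) (ha 2) (hb 2) (by lia)) ..)
        (smul_mem (mul₃ (hq 1) (ha 1) (hb 2) (by lia)) ..))
        (smul_mem (mul₃ (hq 1) (ha 2) (hb 1) (by lia)) ..)
    · exact add_mem (smul_mem (mul₂ (ha 0) (hb 2) (by lia)) ..)
        (smul_mem (mul₂ (ha 2) (hb 0) (by lia)) ..)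
    · exact sub_mem (sub_mem (smul_mem (mul₃ (hq 1) (ha 1) (hb 1) (by lia)) ..)
        (smul_mem (mul₃ (hq 2) (ha 1) (hb 2) (by lia)) ..))
        (smul_mem (mul₃ (hq 2) (ha 2) (hb 1) (by lia)) ..)
    · exact neg_mem (add_mem (smul_mem (mul₂ (ha 1) (hb 0) (by lia)) ..)
        (smul_mem (mul₂ (ha 0) (hb 1) (by lia)) ..))
  · rintro (i | i) (j | j) <;> simp only [Sum.elim_inl, Sum.elim_inr] <;> lia
  · simp only [Fintype.sum_sum_type, Sum.elim_inl, Sum.elim_inr, Fin.sum_univ_two]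
    lia

end ReducedBezout

section UnexpectedForm

variable {R S : Type*} [CommRing R] [CommRing S]

lemma quadMul_quadricOn_pluecker (a b c d n m : Frame R) :
    quadMul (quadricOn ![a, b, n] m) (quadricOn ![c, d, n] m)
        - quadMul (quadricOn ![a, c, n] m) (quadricOn ![b, d, n] m) =
      quadMul (quadricOn ![c, b, n] m) (quadricOn ![a, d, n] m) := by
  ext i
  fin_cases i <;>
    simp only [Fin.reduceFinMk, quadMul, quadricOn, quadric, quadricPolar, cross, Pi.sub_apply,
      Matrix.cons_val] <;>
    ring

lemma evalBinary_quadricOn (l : Fin 3 → Frame R) (m : Frame R) (s t : R) :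
    evalBinary (quadricOn l m) s t = quadric l (s • m 0 + t • m 1) := by
  rw [quadric_smul_add_smul]
  simp [evalBinary, quadricOn, Fin.sum_univ_succ]
  ring

lemma quadric_eq_zero (l : Fin 3 → Frame R) (i : Fin 3) (s t : R) :
    quadric l (s • l i 0 + t • l i 1) = 0 := by
  have eta : l = ![l 0, l 1, l 2] := by ext i; fin_cases i <;> rfl
  fin_cases i
  · simp [quadric, planeOn_self, cross]
  · simp [quadric, planeOn_self, cross]
  · rw [eta, ← neg_eq_zero, ← quadric_swap]
    simp [quadric, planeOn_self, cross]

/-- The triples of lines defining the quadrics `q` and `Q` of `reducedBezout`. -/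
def baseTriple : Fin 3 → Fin 3 → Fin 6 := ![![0, 3, 4], ![1, 3, 4], ![2, 3, 4]]

/-- The triples of lines defining the quadrics `a`, `A` (for `k = 4`) and `b`, `B` (for `k = 3`) of
`reducedBezout`. -/
def pairTriple (k : Fin 6) : Fin 3 → Fin 3 → Fin 6 := ![![2, 1, k], ![0, 2, k], ![0, 1, k]]

/-- The reduced Bézout matrix of six lines at the point `p`. -/
def sixLineMatrix (l : Fin 6 → Frame R) (p : Fin 4 → R) :
    Matrix (Fin 2 ⊕ Fin 2) (Fin 2 ⊕ Fin 2) R :=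
  reducedBezout (fun i => quadric (l ∘ baseTriple i) p) (fun i => quadric (l ∘ pairTriple 4 i) p)
    (fun i => quadric (l ∘ pairTriple 3 i) p) (fun i => quadricOn (l ∘ baseTriple i) (l 5))
    (fun i => quadricOn (l ∘ pairTriple 4 i) (l 5)) (fun i => quadricOn (l ∘ pairTriple 3 i) (l 5))

lemma det_sixLineMatrix_map (φ : R →+* S) (l : Fin 6 → Frame R) (p : Fin 4 → R) :
    (sixLineMatrix (fun j k => φ ∘ l j k) (φ ∘ p)).det = φ (sixLineMatrix l p).det := by
  rw [RingHom.map_det, RingHom.mapMatrix_apply, sixLineMatrix, sixLineMatrix,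
    ← reducedBezout_map]
  congr 2 <;> ext i : 1
  all_goals first | exact quadric_map .. | exact quadricOn_map ..

lemma det_sixLineMatrix_eq_zero [IsDomain R] {l : Fin 6 → Frame R} {s t : R} (ht : t ≠ 0)
    (hne : ∀ i, quadric (l ∘ baseTriple i) (s • l 5 0 + t • l 5 1) ≠ 0) :
    (sixLineMatrix l (s • l 5 0 + t • l 5 1)).det = 0 := by
  refine det_reducedBezout_eq_zero ht ?_ ?_ (fun i => evalBinary_quadricOn ..)
    (fun i => evalBinary_quadricOn ..) (fun i => evalBinary_quadricOn ..) hne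
  · exact quadMul_quadricOn_pluecker (l 0) (l 1) (l 2) (l 3) (l 4) (l 5)
  · have pluecker := quadMul_quadricOn_pluecker (l 0) (l 1) (l 2) (l 4) (l 3) (l 5)
    simp only [quadricOn_swap _ (l 3) (l 4), quadMul_neg] at pluecker
    rw [neg_sub_neg, ← neg_sub, neg_inj] at pluecker
    exact pluecker

end UnexpectedForm

section ExistenceOfForm

/-- The linear span of a frame, a line in projective 3-space. -/
abbrev line (m : Frame ℂ) : Submodule ℂ C4 := Submodule.span ℂ {m 0, m 1}

/-- The form of degree 20 which vanishes to order six along the first five lines and vanishes on the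
last one. -/
def unexpectedForm (l : Fin 6 → Frame ℂ) : R3 :=
  (sixLineMatrix (fun j k => C ∘ l j k) X).det

/-- Whether the line `j` occurs in the triple `T`. -/
def incidence (T : Fin 3 → Fin 6) (j : Fin 6) : ℕ := if ∃ k, T k = j then 1 else 0

lemma eval_unexpectedForm (l : Fin 6 → Frame ℂ) (p : C4) :
    eval p (unexpectedForm l) = (sixLineMatrix l p).det := by
  rw [unexpectedForm, ← det_sixLineMatrix_map]
  congr 2 <;> ext <;> simp

lemma eval_quadric (l : Fin 3 → Frame ℂ) (p : C4) :
    eval p (quadric (fun i k => C ∘ l i k) X) = quadric l p := by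
  rw [← quadric_map]
  congr 1 <;> ext <;> simp

lemma quadric_isHomogeneous (l : Fin 3 → Frame ℂ) :
    (quadric (fun i k => C ∘ l i k) (X : Fin 4 → R3)).IsHomogeneous 2 := by
  have plane (m n : Frame ℂ) (k : Fin 2) :
      (planeOn (fun k => C ∘ m k) (fun k => C ∘ n k) (X : Fin 4 → R3) k).IsHomogeneous 1 := by
    have expand : planeOn (fun k => C ∘ m k) (fun k => C ∘ n k) (X : Fin 4 → R3) k =
        ∑ i, C (planeOn m n (Pi.single i 1) k) * X i := by
      simp [planeOn, bracket, Fin.sum_univ_four]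
      ring
    rw [expand]
    exact IsHomogeneous.sum _ _ _ fun i _ => isHomogeneous_C_mul_X _ i
  exact ((plane _ _ 0).mul (plane _ _ 1)).sub ((plane _ _ 1).mul (plane _ _ 0))

lemma quadric_mem_pow_incidence (l : Fin 6 → Frame ℂ) (T : Fin 3 → Fin 6) (j : Fin 6) :
    quadric ((fun j k => C ∘ l j k) ∘ T) (X : Fin 4 → R3) ∈
      lineIdeal (line (l j)) ^ incidence T j := by
  rw [incidence]
  split_ifs with h
  · obtain ⟨k, rfl⟩ := h
    rw [pow_one]
    intro p hp
    obtain ⟨s, t, rfl⟩ := Submodule.mem_span_pair.mp hp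
    exact (eval_quadric ..).trans (quadric_eq_zero (l ∘ T) k s t)
  · simp

lemma unexpectedForm_mem_graded {σ : Type*} [SetLike σ R3] [AddSubgroupClass σ R3] (𝒜 : ℕ → σ)
    [SetLike.GradedMonoid 𝒜] (hC : ∀ c, C c ∈ 𝒜 0) {l : Fin 6 → Frame ℂ}
    {w : (Fin 3 → Fin 6) → ℕ} {d e n : ℕ}
    (hw : ∀ T, quadric ((fun j k => C ∘ l j k) ∘ T) (X : Fin 4 → R3) ∈ 𝒜 (w T))
    (hd : ∀ i, w (baseTriple i) + w (pairTriple 4 i) = d)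
    (he : ∀ i, w (baseTriple i) + w (pairTriple 3 i) = e)
    (hn : 2 * (w (baseTriple 0) + w (baseTriple 1) + w (baseTriple 2)) + n = 4 * (d + e)) :
    unexpectedForm l ∈ 𝒜 n := by
  have graded := det_reducedBezout_mem_graded 𝒜 hC
    (fun i => quadricOn (l ∘ baseTriple i) (l 5)) (fun i => quadricOn (l ∘ pairTriple 4 i) (l 5))
    (fun i => quadricOn (l ∘ pairTriple 3 i) (l 5)) (fun i => hw (baseTriple i))
    (fun i => hw (pairTriple 4 i)) (fun i => hw (pairTriple 3 i)) hd he hn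
  simp only [← quadricOn_map] at graded
  exact graded

lemma unexpectedForm_isHomogeneous (l : Fin 6 → Frame ℂ) : (unexpectedForm l).IsHomogeneous 20 :=
  unexpectedForm_mem_graded (homogeneousSubmodule (Fin 4) ℂ) (isHomogeneous_C _) (w := fun _ => 2)
    (fun _ => quadric_isHomogeneous _) (fun _ => rfl) (fun _ => rfl) rfl

lemma unexpectedForm_mem_lineIdeal_pow (l : Fin 6 → Frame ℂ) {j : Fin 6} (hj : j ≠ 5) :
    unexpectedForm l ∈ lineIdeal (line (l j)) ^ 6 := by
  refine unexpectedForm_mem_graded (fun n => lineIdeal (line (l j)) ^ n) (by simp)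
    (d := incidence (baseTriple 0) j + incidence (pairTriple 4 0) j)
    (e := incidence (baseTriple 0) j + incidence (pairTriple 3 0) j)
    (fun T => quadric_mem_pow_incidence l T j) ?_ ?_ ?_ <;> revert j <;> decide

lemma unexpectedForm_mem_lineIdeal {l : Fin 6 → Frame ℂ}
    (hne : ∀ i, quadric (l ∘ baseTriple i) (l 5 0) ≠ 0) :
    unexpectedForm l ∈ lineIdeal (line (l 5)) := by
  intro p hp
  obtain ⟨s, t, rfl⟩ := Submodule.mem_span_pair.mp hp
  let m : Fin 6 → Frame (MvPolynomial (Fin 2) ℂ) := fun j k => C ∘ l j k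
  let x : Fin 2 → MvPolynomial (Fin 2) ℂ := X
  have generic : (sixLineMatrix m (x 0 • m 5 0 + x 1 • m 5 1)).det = 0 := by
    refine det_sixLineMatrix_eq_zero (X_ne_zero 1) fun i h => hne i ?_
    have h₀ := congrArg (eval (![1, 0] : Fin 2 → ℂ)) h
    rw [← quadric_map, map_zero] at h₀
    convert h₀ using 2 <;> ext <;> simp [m, x]
  have h := congrArg (eval ![s, t]) generic
  rw [← det_sixLineMatrix_map, map_zero] at h
  rw [eval_unexpectedForm, ← h]
  congr 2 <;> ext <;> simp [m, x]

theorem unexpectedForm_mem_linSys {l : Fin 6 → Frame ℂ}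
    (hne : ∀ i, quadric (l ∘ baseTriple i) (l 5 0) ≠ 0) :
    unexpectedForm l ∈ linSys 20 (fun i => line (l i)) ![6, 6, 6, 6, 6, 1] := by
  refine ⟨unexpectedForm_isHomogeneous l, Submodule.mem_iInf _ |>.mpr fun j => ?_⟩
  induction j using Fin.lastCases with
  | last => simpa using unexpectedForm_mem_lineIdeal hne
  | cast j =>
    have exponent : (![6, 6, 6, 6, 6, 1] : Fin 6 → ℕ) j.castSucc = 6 := by fin_cases j <;> rfl
    rw [exponent]
    exact unexpectedForm_mem_lineIdeal_pow l (Fin.castSucc_lt_last j).ne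

end ExistenceOfForm

/-- Polynomial expressions with integer coefficients, kept as syntax so that degrees and
coefficients of explicit polynomials can be found by computation. -/
inductive PolyExpr (σ : Type*) : Type _
  | var : σ → PolyExpr σ
  | const : ℤ → PolyExpr σ
  | add : PolyExpr σ → PolyExpr σ → PolyExpr σ
  | mul : PolyExpr σ → PolyExpr σ → PolyExpr σ

namespace PolyExpr

variable {σ : Type*}

instance : Add (PolyExpr σ) := ⟨add⟩
instance : Mul (PolyExpr σ) := ⟨mul⟩
instance : Neg (PolyExpr σ) := ⟨mul (const (-1))⟩
instance : Sub (PolyExpr σ) := ⟨fun e f => e + -f⟩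
instance : IntCast (PolyExpr σ) := ⟨const⟩
instance (n : ℕ) : OfNat (PolyExpr σ) n := ⟨const n⟩

section Eval

variable {R S : Type*} [CommRing R] [CommRing S]

/-- The value of an expression at a point with coordinates in a commutative ring. -/
def val (ρ : σ → R) : PolyExpr σ → R
  | var i => ρ i
  | const n => n
  | add e f => e.val ρ + f.val ρ
  | mul e f => e.val ρ * f.val ρ

variable (ρ : σ → R) (e f : PolyExpr σ)

@[simp] lemma val_var (i : σ) : (var i).val ρ = ρ i := rfl
@[simp] lemma val_intCast (n : ℤ) : (n : PolyExpr σ).val ρ = n := rfl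
@[simp] lemma val_add : (e + f).val ρ = e.val ρ + f.val ρ := rfl
@[simp] lemma val_mul : (e * f).val ρ = e.val ρ * f.val ρ := rfl

@[simp] lemma val_zero : (0 : PolyExpr σ).val ρ = 0 := Int.cast_zero
@[simp] lemma val_one : (1 : PolyExpr σ).val ρ = 1 := Int.cast_one

@[simp] lemma val_ofNat (n : ℕ) [n.AtLeastTwo] :
    (ofNat(n) : PolyExpr σ).val ρ = ofNat(n) :=
  Int.cast_natCast n

@[simp] lemma val_neg : (-f).val ρ = -f.val ρ := by
  change ((-1 : ℤ) : R) * f.val ρ = _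
  simp

@[simp] lemma val_sub : (e - f).val ρ = e.val ρ - f.val ρ := by
  change e.val ρ + (-f).val ρ = _
  rw [val_neg, sub_eq_add_neg]

lemma map_val (φ : R →+* S) : φ (e.val ρ) = e.val (φ ∘ ρ) := by
  induction e with
  | var i => rfl
  | const n => exact map_intCast φ n
  | add e f he hf => simp only [val, map_add, he, hf]
  | mul e f he hf => simp only [val, map_mul, he, hf]

end Eval

/-- The polynomial denoted by an expression. -/
def toPoly (R : Type*) [CommRing R] (e : PolyExpr σ) : MvPolynomial σ R := e.val X

lemma aeval_toPoly {R A : Type*} [CommRing R] [CommRing A] [Algebra R A] (ρ : σ → A)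
    (e : PolyExpr σ) : aeval ρ (e.toPoly R) = e.val ρ := by
  change (aeval ρ : MvPolynomial σ R →ₐ[R] A).toRingHom (e.val X) = _
  rw [map_val]
  congr 1
  exact funext fun i => aeval_X ρ i

lemma eval_toPoly {R : Type*} [CommRing R] (ρ : σ → R) (e : PolyExpr σ) :
    eval ρ (e.toPoly R) = e.val ρ := aeval_toPoly ρ e

lemma toPoly_ne_zero {R : Type*} [CommRing R] {e : PolyExpr σ} (ρ : σ → R) (h : e.val ρ ≠ 0) :
    e.toPoly R ≠ 0 := fun h0 => h (by rw [← eval_toPoly, h0, map_zero])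

section Degrees

variable [DecidableEq σ]

/-- An upper bound for the degree in the variable `i`. -/
def degreeBound (i : σ) : PolyExpr σ → ℕ
  | var j => if i = j then 1 else 0
  | const _ => 0
  | add e f => max (e.degreeBound i) (f.degreeBound i)
  | mul e f => e.degreeBound i + f.degreeBound i

/-- The coefficient of the `k`-th power of the variable `i`, all other variables being given their
value at `ρ`. -/
def lineCoeff (i : σ) (ρ : σ → ℤ) : PolyExpr σ → ℕ → ℤ
  | var j, k => if i = j then (if k = 1 then 1 else 0) else if k = 0 then ρ j else 0
  | const n, k => if k = 0 then n else 0
  | add e f, k => e.lineCoeff i ρ k + f.lineCoeff i ρ k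
  | mul e f, k => ∑ l ∈ Finset.range (k + 1), e.lineCoeff i ρ l * f.lineCoeff i ρ (k - l)

variable {R : Type*} [CommRing R]

lemma degreeOf_toPoly_le [Nontrivial R] (i : σ) (e : PolyExpr σ) :
    degreeOf i (e.toPoly R) ≤ e.degreeBound i := by
  induction e with
  | var j => exact (degreeOf_X i j).le
  | const n =>
    rw [toPoly, val, ← map_intCast (C : R →+* MvPolynomial σ R)]
    exact (degreeOf_C _ i).le
  | add e f he hf => exact (degreeOf_add_le _ _ _).trans (max_le_max he hf)
  | mul e f he hf => exact (degreeOf_mul_le _ _ _).trans (add_le_add he hf)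

lemma notMem_vars_toPoly [Nontrivial R] {i : σ} {e : PolyExpr σ} (h : e.degreeBound i = 0) :
    i ∉ (e.toPoly R).vars := by
  rw [mem_vars_iff_degreeOf_ne_zero, not_not]
  exact Nat.le_zero.mp (h ▸ degreeOf_toPoly_le i e)

/-- The line through `ρ` in the direction of the variable `i`. -/
def axisLine (i : σ) (ρ : σ → R) : σ → Polynomial R :=
  Function.update (Polynomial.C ∘ ρ) i Polynomial.X

lemma coeff_val_axisLine (i : σ) (ρ : σ → ℤ) (e : PolyExpr σ) (k : ℕ) :
    (e.val (axisLine i fun j => (ρ j : R))).coeff k = e.lineCoeff i ρ k := by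
  induction e generalizing k with
  | var j =>
    simp only [val, lineCoeff, axisLine, Function.update_apply, eq_comm (a := j),
      Function.comp_apply, Polynomial.coeff_X, Polynomial.coeff_C, eq_comm (a := 1), apply_ite
      (fun q : Polynomial R => q.coeff k)]
    split_ifs <;> simp
  | const n =>
    rw [val, ← map_intCast (Polynomial.C : R →+* Polynomial R), Polynomial.coeff_C, lineCoeff]
    split_ifs <;> simp
  | add e f he hf => simp only [val, lineCoeff, Polynomial.coeff_add, he, hf, Int.cast_add]
  | mul e f he hf =>
    simp only [val, lineCoeff, Polynomial.coeff_mul, he, hf, Int.cast_sum, Int.cast_mul]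
    exact Finset.Nat.sum_antidiagonal_eq_sum_range_succ
      (fun l m => (e.lineCoeff i ρ l : R) * f.lineCoeff i ρ m) k

lemma natDegree_aeval_axisLine_le {A : Type*} [CommRing A] [Algebra R A] (i : σ) (ρ : σ → A)
    (p : MvPolynomial σ R) : (aeval (axisLine i ρ) p).natDegree ≤ degreeOf i p := by
  rw [aeval_def, eval₂_eq]
  refine Polynomial.natDegree_sum_le_of_forall_le _ _ fun m hm => ?_
  refine le_trans ?_ (monomial_le_degreeOf i hm)
  rw [Polynomial.algebraMap_apply]
  refine (Polynomial.natDegree_C_mul_le _ _).trans ((Polynomial.natDegree_prod_le _ _).trans ?_)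
  rw [← Finsupp.sum_single_index (a := i) (b := m i) (h := fun _ k => k) rfl]
  have hle (j : σ) : ((axisLine i ρ j) ^ m j).natDegree ≤ if j = i then m i else 0 := by
    split_ifs with hj
    · subst hj
      simpa [axisLine] using Polynomial.natDegree_X_pow_le (m j)
    · rw [axisLine, Function.update_of_ne hj, Function.comp_apply, ← Polynomial.C_pow,
        Polynomial.natDegree_C]
  refine (Finset.sum_le_sum fun j _ => hle j).trans ?_
  rw [Finset.sum_ite_eq']
  split_ifs <;> simp

lemma le_degreeOf_toPoly [CharZero R] (i : σ) (ρ : σ → ℤ) (e : PolyExpr σ) {k : ℕ}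
    (h : e.lineCoeff i ρ k ≠ 0) : k ≤ degreeOf i (e.toPoly R) := by
  refine le_trans ?_ (natDegree_aeval_axisLine_le i (fun j => (ρ j : R)) _)
  apply Polynomial.le_natDegree_of_ne_zero
  rw [aeval_toPoly, coeff_val_axisLine]
  exact_mod_cast h

end Degrees

end PolyExpr

section VanishingOrder

variable {A B : Type*} [CommRing A] [CommRing B] [Algebra ℂ A] [Algebra ℂ B]

/-- The universal point near a line `l`: the point `S • l 0 + T • l 1 + X • U` with indeterminates
`S`, `T`, `U i` and the infinitesimal parameter `X`. -/
def nearLine (l : Frame A) (n : Fin 4) : Polynomial (MvPolynomial (Fin 2 ⊕ Fin 4) A) :=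
  Polynomial.C (∑ k, X (Sum.inl k) * C (l k n)) + Polynomial.C (X (Sum.inr n)) * Polynomial.X

/-- The coefficients of the expansion of a form along a line. -/
def expansionCoeff (l : Frame A) (j : ℕ) (d : Fin 2 ⊕ Fin 4 →₀ ℕ) : R3 →ₗ[ℂ] A where
  toFun F := ((aeval (nearLine l) F).coeff j).coeff d
  map_add' F G := by simp only [map_add, Polynomial.coeff_add, coeff_add]
  map_smul' c F := by
    simp only [map_smul, Polynomial.coeff_smul, coeff_smul, RingHom.id_apply]

/-- `F` vanishes to order `m` along the line `l`, expressed by linear equations in the coefficients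
of `F` whose coefficients are polynomials in `l`. -/
def VanishesToOrder (m : ℕ) (l : Frame A) (F : R3) : Prop :=
  ∀ j < m, ∀ d, expansionCoeff l j d F = 0

lemma vanishesToOrder_iff_X_pow_dvd {m : ℕ} {l : Frame A} {F : R3} :
    VanishesToOrder m l F ↔ Polynomial.X ^ m ∣ aeval (nearLine l) F := by
  simp only [VanishesToOrder, Polynomial.X_pow_dvd_iff, MvPolynomial.ext_iff, coeff_zero]
  rfl

lemma map_expansionCoeff (φ : A →ₐ[ℂ] B) (l : Frame A) (j : ℕ) (d : Fin 2 ⊕ Fin 4 →₀ ℕ) (F : R3) :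
    φ (expansionCoeff l j d F) = expansionCoeff (fun k => φ ∘ l k) j d F := by
  have h : Polynomial.mapAlgHom (mapAlgHom φ) (aeval (nearLine l) F) =
      aeval (nearLine fun k => φ ∘ l k) F := by
    rw [comp_aeval_apply]
    congr 2
    ext1 n
    simp [nearLine]
  change φ (((aeval (nearLine l) F).coeff j).coeff d) =
    ((aeval (nearLine fun k => φ ∘ l k) F).coeff j).coeff d
  rw [← h, Polynomial.coe_mapAlgHom, Polynomial.coeff_map]
  exact (coeff_map φ.toRingHom _ _).symm

lemma aevalTower_nearLine (l : Frame ℂ) (s : Fin 2 → A) (u : Fin 4 → A) (e : A) (F : R3) :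
    Polynomial.aevalTower (aeval (Sum.elim s u)) e (aeval (nearLine l) F) =
      aeval (fun n => ∑ k, s k * algebraMap ℂ A (l k n) + e * u n) F := by
  rw [comp_aeval_apply]
  congr 2
  ext1 n
  simp only [nearLine, map_add, map_mul, map_sum, Polynomial.aevalTower_C, Polynomial.aevalTower_X,
    aeval_X, aeval_C, Sum.elim_inl, Sum.elim_inr, mul_comm e]

lemma VanishesToOrder.pow_dvd_aeval {m : ℕ} {l : Frame ℂ} {F : R3} (h : VanishesToOrder m l F)
    (s : Fin 2 → A) (e : A) (u : Fin 4 → A) :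
    e ^ m ∣ aeval (fun n => ∑ k, s k * algebraMap ℂ A (l k n) + e * u n) F := by
  have hdvd := map_dvd (Polynomial.aevalTower (aeval (Sum.elim s u)) e)
    (vanishesToOrder_iff_X_pow_dvd.mp h)
  rwa [aevalTower_nearLine, map_pow, Polynomial.aevalTower_X] at hdvd

lemma vanishesToOrder_of_mem_lineIdeal_pow {m : ℕ} {l : Frame ℂ} {F : R3}
    (hF : F ∈ lineIdeal (line l) ^ m) : VanishesToOrder m l F := by
  rw [vanishesToOrder_iff_X_pow_dvd, ← Ideal.mem_span_singleton, ← Ideal.span_singleton_pow]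
  suffices h : lineIdeal (line l) ≤
      (Ideal.span {Polynomial.X}).comap (aeval (nearLine l) : R3 →ₐ[ℂ] _) from
    Ideal.le_comap_pow _ m (Ideal.pow_right_mono h m hF)
  intro G hG
  rw [Ideal.mem_comap, Ideal.mem_span_singleton, Polynomial.X_dvd_iff]
  refine MvPolynomial.funext fun ρ => ?_
  have hmem : ∑ k, ρ (Sum.inl k) • l k ∈ line l := by
    refine sum_mem fun k _ => Submodule.smul_mem _ _ (Submodule.subset_span ?_)
    fin_cases k <;> simp
  have hev := aevalTower_nearLine l (ρ ∘ Sum.inl) (ρ ∘ Sum.inr) 0 G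
  rw [Sum.elim_comp_inl_inr] at hev
  change Polynomial.eval₂ _ 0 (aeval (nearLine l) G) = _ at hev
  rw [Polynomial.eval₂_at_zero] at hev
  rw [map_zero, ← hG _ hmem]
  refine hev.trans ?_
  rw [aeval_eq_eval]
  congr 2
  ext1 n
  simp

end VanishingOrder

/-- Six lines, each spanned by two integral vectors, for which `linSys 20` with multiplicities
`6, 6, 6, 6, 6, 1` will be seen to have dimension one. -/
def specialFrame : Fin 6 → Frame ℤ :=
  ![![![0, 0, 1, 0], ![0, 0, 0, 1]], ![![1, 0, 0, 0], ![0, 1, 0, 0]],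
    ![![1, 0, -1, 0], ![0, 1, 0, -1]], ![![1, 0, -2, 0], ![0, 1, 0, 1]],
    ![![1, 0, -2, 3], ![0, 1, -2, -1]], ![![1, 0, -4, -3], ![0, 1, -4, 1]]]

/-- The complex vectors spanning the `i`-th special line. -/
def specialLine (i : Fin 6) : Frame ℂ := fun k n => specialFrame i k n

section TwistedCubic

variable {R S : Type*} [CommRing R] [CommRing S]

/-- The linear equations defining a twisted cubic with the first five special lines as chords. The
vector `y` stands for the planes `y 0 * X 2 + y 1 * X 3 = 0` and
`y 2 * (X 0 + X 2) + y 3 * (X 1 + X 3) = 0` through the lines `1` and `2`. -/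
def CubicEquations (x z : R) (y : Fin 4 → R) : Prop :=
  y 0 * (2 * x - 2) + 3 * y 1 = y 2 * (z - x) - 3 * z * y 3 ∧
  -2 * y 0 - (x + 1) * y 1 = 2 * z * y 2 + 2 * x * y 3

/-- The plane `planeOfCubic y 0 * X 0 + planeOfCubic y 1 * X 1 = 0` through the line `0` which
corresponds to the two planes `y`. -/
def planeOfCubic (y : Fin 4 → R) : Fin 2 → R := ![2 * y 0 + y 2, -y 1 - 2 * y 3]

/-- The forms in `y` which vanish at the endpoints of the five chords. -/
def chordForm (y : Fin 4 → R) : Fin 5 → R :=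
  ![y 2 * y 1 - y 3 * y 0,
    y 2 * planeOfCubic y 1 - y 3 * planeOfCubic y 0,
    planeOfCubic y 0 * y 1 - planeOfCubic y 1 * y 0,
    y 2 * planeOfCubic y 1 + 2 * y 3 * planeOfCubic y 0,
    (y 2 - 3 * y 3) * planeOfCubic y 1 - 2 * y 2 * planeOfCubic y 0]

/-- The intersection point of the three planes determined by `y`. -/
def cubicPoint (y : Fin 4 → R) : Fin 4 → R :=
  ![chordForm y 0 * planeOfCubic y 1, -(chordForm y 0 * planeOfCubic y 0),
    -(chordForm y 1 * y 1), chordForm y 1 * y 0]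

lemma map_chordForm (φ : R →+* S) (y : Fin 4 → R) (i : Fin 5) :
    φ (chordForm y i) = chordForm (φ ∘ y) i := by
  fin_cases i <;> simp [chordForm, planeOfCubic, map_ofNat]

lemma map_cubicPoint (φ : R →+* S) (y : Fin 4 → R) : φ ∘ cubicPoint y = cubicPoint (φ ∘ y) := by
  ext n
  fin_cases n <;> simp [cubicPoint, planeOfCubic, map_chordForm, map_ofNat]

lemma chordForm_smul (c : R) (y : Fin 4 → R) (i : Fin 5) :
    chordForm (c • y) i = c ^ 2 * chordForm y i := by
  fin_cases i <;> simp [chordForm, planeOfCubic] <;> ring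

lemma cubicPoint_smul (c : R) (y : Fin 4 → R) : cubicPoint (c • y) = c ^ 3 • cubicPoint y := by
  ext n
  fin_cases n <;> simp [cubicPoint, planeOfCubic, chordForm_smul] <;> ring

end TwistedCubic

section ParametrisedCubic

open PolyExpr

/-- The first parameter of the family of twisted cubics. -/
abbrev xExpr : PolyExpr (Fin 3) := var 0

/-- The second parameter of the family of twisted cubics. -/
abbrev zExpr : PolyExpr (Fin 3) := var 1

/-- The parameter `w = y 3 / y 2` on each twisted cubic. -/
abbrev wExpr : PolyExpr (Fin 3) := var 2

/-- The determinant of `CubicEquations`, as a linear system for `y 0` and `y 1`. -/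
def detExpr : PolyExpr (Fin 3) := 8 - 2 * xExpr * xExpr

/-- The coordinates `y 0`, `y 1` of the solution of `CubicEquations` with `y 2 = detExpr` and
`y 3 = wExpr * detExpr`. -/
def solExpr : Fin 2 → PolyExpr (Fin 3) :=
  ![xExpr * xExpr + 3 * xExpr * zExpr * wExpr - xExpr * zExpr - 6 * xExpr * wExpr + xExpr
      + 3 * zExpr * wExpr - 7 * zExpr,
    4 * xExpr * xExpr * wExpr + 4 * xExpr * zExpr - 4 * xExpr * wExpr - 2 * xExpr
      - 6 * zExpr * wExpr - 2 * zExpr]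

/-- `planeOfCubic` at the solution `solExpr`. -/
def planeExpr : Fin 2 → PolyExpr (Fin 3) :=
  ![6 * xExpr * zExpr * wExpr - 2 * xExpr * zExpr - 12 * xExpr * wExpr + 2 * xExpr
      + 6 * zExpr * wExpr - 14 * zExpr + 8,
    4 * xExpr * wExpr - 4 * xExpr * zExpr + 2 * xExpr + 6 * zExpr * wExpr + 2 * zExpr - 16 * wExpr]

/-- `chordForm` at the solution `solExpr`, divided by powers of `detExpr`. -/
def chordExpr : Fin 5 → PolyExpr (Fin 3) :=
  ![solExpr 1 - wExpr * solExpr 0, planeExpr 1 - wExpr * planeExpr 0,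
    planeExpr 0 * solExpr 1 - planeExpr 1 * solExpr 0, planeExpr 1 + 2 * wExpr * planeExpr 0,
    (1 - 3 * wExpr) * planeExpr 1 - 2 * planeExpr 0]

/-- `cubicPoint` at the solution `solExpr`, divided by `detExpr`. -/
def pointExpr : Fin 4 → PolyExpr (Fin 3) :=
  ![chordExpr 0 * planeExpr 1, -(chordExpr 0 * planeExpr 0),
    -(chordExpr 1 * solExpr 1), chordExpr 1 * solExpr 0]

section Values

variable {R : Type*} [CommRing R] (ρ : Fin 3 → R)

lemma val_detExpr : detExpr.val ρ = 8 - 2 * ρ 0 ^ 2 := by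
  simp [detExpr, pow_two, mul_assoc]

lemma val_solExpr_zero : (solExpr 0).val ρ = ρ 0 ^ 2 + 3 * ρ 0 * ρ 1 * ρ 2 - ρ 0 * ρ 1
    - 6 * ρ 0 * ρ 2 + ρ 0 + 3 * ρ 1 * ρ 2 - 7 * ρ 1 := by
  simp [solExpr, pow_two]

lemma val_solExpr_one : (solExpr 1).val ρ = 4 * ρ 0 ^ 2 * ρ 2 + 4 * ρ 0 * ρ 1 - 4 * ρ 0 * ρ 2
    - 2 * ρ 0 - 6 * ρ 1 * ρ 2 - 2 * ρ 1 := by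
  simp [solExpr, pow_two, mul_assoc]

lemma val_planeExpr_zero :
    (planeExpr 0).val ρ = 2 * (solExpr 0).val ρ + detExpr.val ρ := by
  rw [val_solExpr_zero, val_detExpr]
  simp [planeExpr]
  ring

lemma val_planeExpr_one :
    (planeExpr 1).val ρ = -(solExpr 1).val ρ - 2 * (ρ 2 * detExpr.val ρ) := by
  rw [val_solExpr_one, val_detExpr]
  simp [planeExpr]
  ring

lemma val_chordExpr (i : Fin 5) : (chordExpr i).val ρ =
    ![(solExpr 1).val ρ - ρ 2 * (solExpr 0).val ρ, (planeExpr 1).val ρ - ρ 2 * (planeExpr 0).val ρ,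
      (planeExpr 0).val ρ * (solExpr 1).val ρ - (planeExpr 1).val ρ * (solExpr 0).val ρ,
      (planeExpr 1).val ρ + 2 * ρ 2 * (planeExpr 0).val ρ,
      (1 - 3 * ρ 2) * (planeExpr 1).val ρ - 2 * (planeExpr 0).val ρ] i := by
  fin_cases i <;> simp [chordExpr]

/-- The solution of `CubicEquations` with `y 3 = w * y 2`, up to a scalar. -/
def cubicSolution : Fin 4 → R :=
  ![(solExpr 0).val ρ, (solExpr 1).val ρ, detExpr.val ρ, ρ 2 * detExpr.val ρ]

lemma planeOfCubic_cubicSolution (k : Fin 2) :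
    planeOfCubic (cubicSolution ρ) k = (planeExpr k).val ρ := by
  fin_cases k
  · exact (val_planeExpr_zero ρ).symm
  · exact (val_planeExpr_one ρ).symm

lemma chordForm_cubicSolution (i : Fin 5) : chordForm (cubicSolution ρ) i =
    detExpr.val ρ ^ (![1, 1, 0, 1, 1] : Fin 5 → ℕ) i * (chordExpr i).val ρ := by
  rw [val_chordExpr]
  fin_cases i <;> simp [chordForm, planeOfCubic_cubicSolution] <;>
    simp [cubicSolution] <;> ring

lemma cubicPoint_cubicSolution :
    cubicPoint (cubicSolution ρ) = detExpr.val ρ • fun n => (pointExpr n).val ρ := by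
  ext n
  have h₀ : cubicSolution ρ 0 = (solExpr 0).val ρ := rfl
  have h₁ : cubicSolution ρ 1 = (solExpr 1).val ρ := rfl
  fin_cases n <;>
    simp [cubicPoint, pointExpr, planeOfCubic_cubicSolution, chordForm_cubicSolution, h₀, h₁,
      mul_assoc]

lemma CubicEquations.smul_eq {x z w : R} {y : Fin 4 → R} (h : CubicEquations x z y)
    (hw : y 3 = w * y 2) :
    detExpr.val ![x, z, w] • y = y 2 • cubicSolution ![x, z, w] := by
  obtain ⟨h₁, h₂⟩ := h
  rw [hw] at h₁ h₂
  ext n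
  fin_cases n <;>
    simp [cubicSolution, val_detExpr, val_solExpr_zero, val_solExpr_one, hw]
  · linear_combination -(x + 1) * h₁ - 3 * h₂
  · linear_combination 2 * h₁ + (2 * x - 2) * h₂
  · ring
  · ring

end Values

end ParametrisedCubic

section Chords

open PolyExpr

/-- The position, modulo `chordExpr i`, of the point of the cubic on its `i`-th chord. -/
def alongExpr : Fin 5 → Fin 2 → PolyExpr (Fin 3) :=
  ![![pointExpr 2, pointExpr 3], ![pointExpr 0, pointExpr 1], ![pointExpr 0, pointExpr 1],
    ![pointExpr 0, pointExpr 1], ![pointExpr 0, pointExpr 1]]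

/-- The displacement, divided by `chordExpr i`, of the point of the cubic from its `i`-th chord. -/
def normalExpr : Fin 5 → Fin 4 → PolyExpr (Fin 3) :=
  ![![planeExpr 1, -planeExpr 0, 0, 0], ![0, 0, -solExpr 1, solExpr 0], ![0, 0, wExpr, -1],
    ![0, 0, solExpr 1 + wExpr * detExpr, -(solExpr 0 + detExpr)],
    ![0, 0, solExpr 1 + zExpr * wExpr * detExpr, -(solExpr 0 + zExpr * detExpr)]]

lemma val_pointExpr_eq {R : Type*} [CommRing R] (ρ : Fin 3 → R) (i : Fin 5) (n : Fin 4) :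
    (pointExpr n).val ρ = ∑ k, (alongExpr i k).val ρ * specialFrame i.castSucc k n +
      (chordExpr i).val ρ * (normalExpr i n).val ρ := by
  rw [Fin.sum_univ_two]
  fin_cases i <;> fin_cases n <;>
    simp [pointExpr, alongExpr, normalExpr, specialFrame, val_chordExpr, Fin.castSucc,
      Fin.castAdd, Fin.castLE, val_planeExpr_zero, val_planeExpr_one, val_solExpr_zero,
      val_solExpr_one, val_detExpr] <;> ring

/-- The restriction of a form to the family of twisted cubics. -/
def cubicPullback (F : R3) : MvPolynomial (Fin 3) ℂ := aeval (fun n => (pointExpr n).toPoly ℂ) F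

lemma chordExpr_pow_dvd_cubicPullback {F : R3} {m : ℕ} {i : Fin 5}
    (h : VanishesToOrder m (specialLine i.castSucc) F) :
    (chordExpr i).toPoly ℂ ^ m ∣ cubicPullback F := by
  have hpoint : (fun n => (pointExpr n).toPoly ℂ) = fun n =>
      ∑ k, (alongExpr i k).toPoly ℂ * algebraMap ℂ _ (specialLine i.castSucc k n) +
        (chordExpr i).toPoly ℂ * (normalExpr i n).toPoly ℂ := by
    funext n
    simp only [specialLine, map_intCast]
    exact val_pointExpr_eq _ i n
  rw [cubicPullback, hpoint]
  exact h.pow_dvd_aeval _ _ _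

end Chords

section Irreducibility

open PolyExpr

variable {K : Type*} [Field K]

lemma isRelPrime_of_eval {σ : Type*} {p q : MvPolynomial σ K} (hp : Irreducible p) (ρ : σ → K)
    (h₀ : eval ρ p = 0) (h₁ : eval ρ q ≠ 0) : IsRelPrime p q := by
  rw [hp.isRelPrime_iff_not_dvd]
  rintro ⟨r, rfl⟩
  simp [h₀] at h₁

section Linear

variable {σ : Type*} [DecidableEq σ] {p q : PolyExpr σ} {k : σ}

lemma irreducible_mul_var_add (hp : p.degreeBound k = 0) (hq : q.degreeBound k = 0)
    (hp₀ : p.toPoly K ≠ 0) (hpq : IsRelPrime (p.toPoly K) (q.toPoly K)) :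
    Irreducible ((p * var k + q).toPoly K) :=
  irreducible_mul_X_add _ _ k hp₀ (notMem_vars_toPoly hp) (notMem_vars_toPoly hq) hpq

lemma irreducible_mul_var_add_of_bezout (hp : p.degreeBound k = 0) (hq : q.degreeBound k = 0)
    {a b : PolyExpr σ} {n : K} (hn : n ≠ 0)
    (hbezout : (a * p + b * q).toPoly K = C n) (hp₀ : p.val (0 : σ → K) ≠ 0) :
    Irreducible ((p * var k + q).toPoly K) := by
  refine irreducible_mul_var_add hp hq (toPoly_ne_zero 0 hp₀)
    (IsCoprime.isRelPrime ⟨C n⁻¹ * a.toPoly K, C n⁻¹ * b.toPoly K, ?_⟩)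
  calc C n⁻¹ * a.toPoly K * p.toPoly K + C n⁻¹ * b.toPoly K * q.toPoly K
      = C n⁻¹ * (a * p + b * q).toPoly K := by simp only [toPoly, val_add, val_mul]; ring
    _ = 1 := by rw [hbezout, ← C_mul, inv_mul_cancel₀ hn, C_1]

lemma irreducible_mul_var_add_of_left (hp : p.degreeBound k = 0) (hq : q.degreeBound k = 0)
    (hirr : Irreducible (p.toPoly K)) (ρ : σ → K) (h₀ : p.val ρ = 0) (h₁ : q.val ρ ≠ 0) :
    Irreducible ((p * var k + q).toPoly K) :=
  irreducible_mul_var_add hp hq hirr.ne_zero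
    (isRelPrime_of_eval hirr ρ ((eval_toPoly ρ p).trans h₀) (by rwa [eval_toPoly]))

lemma irreducible_mul_var_add_of_right (hp : p.degreeBound k = 0) (hq : q.degreeBound k = 0)
    (hirr : Irreducible (q.toPoly K)) (ρ : σ → K) (h₀ : q.val ρ = 0) (h₁ : p.val ρ ≠ 0) :
    Irreducible ((p * var k + q).toPoly K) :=
  irreducible_mul_var_add hp hq (toPoly_ne_zero ρ h₁)
    (isRelPrime_of_eval hirr ρ ((eval_toPoly ρ q).trans h₀) (by rwa [eval_toPoly])).symm

end Linear

/-- A quadratic polynomial in `w` with integer coefficients. -/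
def wQuadratic (a b c : ℤ) : PolyExpr (Fin 3) := a * wExpr * wExpr + b * wExpr + c

lemma val_wQuadratic {R : Type*} [CommRing R] (ρ : Fin 3 → R) (a b c : ℤ) :
    (wQuadratic a b c).val ρ = a * ρ 2 * ρ 2 + b * ρ 2 + c := by simp [wQuadratic]

lemma irreducible_chordExpr_zero : Irreducible ((chordExpr 0).toPoly ℂ) := by
  have hlead : Irreducible ((wQuadratic (-3) 1 4 * xExpr + wQuadratic (-3) 1 (-2)).toPoly ℂ) :=
    irreducible_mul_var_add_of_bezout (a := wQuadratic 0 0 1) (b := wQuadratic 0 0 (-1)) rfl rfl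
      (n := 6) (by norm_num) (by simp [toPoly, val_wQuadratic, map_ofNat]; ring)
      (by simp [val_wQuadratic])
  have hirr := irreducible_mul_var_add_of_left (k := 1)
    (q := xExpr * (3 * xExpr * wExpr + wQuadratic 6 (-5) (-2))) rfl rfl hlead ![1 / 2, 0, 0]
    (by simp [val_wQuadratic]; norm_num) (by simp [val_wQuadratic])
  convert hirr using 1
  simp [toPoly, val_chordExpr, val_planeExpr_zero, val_planeExpr_one, val_solExpr_zero,
    val_solExpr_one, val_detExpr, val_wQuadratic]
  ring

lemma irreducible_chordExpr_one : Irreducible ((chordExpr 1).toPoly ℂ) := by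
  have hlead : Irreducible ((wQuadratic (-6) 2 (-4) * xExpr + wQuadratic (-6) 20 2).toPoly ℂ) :=
    irreducible_mul_var_add_of_bezout (a := wQuadratic 0 3 (-11)) (b := wQuadratic 0 (-3) 2) rfl rfl
      (n := 48) (by norm_num) (by simp [toPoly, val_wQuadratic, map_ofNat]; ring)
      (by simp [val_wQuadratic])
  have hirr := irreducible_mul_var_add_of_left (k := 1)
    (q := xExpr * wQuadratic 12 2 2 - 24 * wExpr) rfl rfl hlead ![1 / 2, 0, 0]
    (by simp [val_wQuadratic]; norm_num) (by simp [val_wQuadratic])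
  convert hirr using 1
  simp [toPoly, val_chordExpr, val_planeExpr_zero, val_planeExpr_one, val_solExpr_zero,
    val_solExpr_one, val_detExpr, val_wQuadratic]
  ring

lemma irreducible_chordExpr_three : Irreducible ((chordExpr 3).toPoly ℂ) := by
  have hlead : Irreducible ((wQuadratic 12 (-4) (-4) * xExpr + wQuadratic 12 (-22) 2).toPoly ℂ) :=
    irreducible_mul_var_add_of_bezout (a := wQuadratic 0 2 (-3)) (b := wQuadratic 0 (-2) 0) rfl rfl
      (n := 12) (by norm_num) (by simp [toPoly, val_wQuadratic, map_ofNat]; ring)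
      (by simp [val_wQuadratic])
  have hirr := irreducible_mul_var_add_of_left (k := 1) (q := xExpr * wQuadratic (-24) 8 2)
    rfl rfl hlead ![1 / 2, 0, 0] (by simp [val_wQuadratic]; norm_num) (by simp [val_wQuadratic])
  convert hirr using 1
  simp [toPoly, val_chordExpr, val_planeExpr_zero, val_planeExpr_one, val_solExpr_zero,
    val_solExpr_one, val_detExpr, val_wQuadratic]
  ring

lemma irreducible_chordExpr_four : Irreducible ((chordExpr 4).toPoly ℂ) := by
  have hlead : Irreducible
      ((wQuadratic (-18) (-12) 30 * zExpr + wQuadratic 48 (-16) (-16)).toPoly ℂ) :=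
    irreducible_mul_var_add_of_bezout (a := wQuadratic 0 8 8) (b := wQuadratic 0 3 6) rfl rfl
      (n := 144) (by norm_num) (by simp [toPoly, val_wQuadratic, map_ofNat]; ring)
      (by simp [val_wQuadratic])
  have hirr := irreducible_mul_var_add_of_right (k := 0) (p := wQuadratic (-12) 22 (-2))
    rfl rfl hlead ![0, 8 / 15, 0] (by simp [val_wQuadratic]; norm_num) (by simp [val_wQuadratic])
  convert hirr using 1
  simp [toPoly, val_chordExpr, val_planeExpr_zero, val_planeExpr_one, val_solExpr_zero,
    val_solExpr_one, val_detExpr, val_wQuadratic]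
  ring

end Irreducibility

section Divisibility

open PolyExpr

/-- Integral points at which a single one of the `chordExpr i` vanishes. -/
def chordWitness : Fin 5 → Fin 3 → ℤ :=
  ![![-1, -2, -1], ![0, 1, -1], ![0, 0, 0], ![-6, 5, -1], ![-2, 0, 1]]

lemma val_chordExpr_chordWitness : ∀ i ≠ 2, (chordExpr i).val (chordWitness i) = 0 ∧
    ∀ j ≠ i, (chordExpr j).val (chordWitness i) ≠ 0 := by
  decide +kernel

lemma irreducible_chordExpr : ∀ i ≠ 2, Irreducible ((chordExpr i).toPoly ℂ)
  | 0, _ => irreducible_chordExpr_zero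
  | 1, _ => irreducible_chordExpr_one
  | 2, h => absurd rfl h
  | 3, _ => irreducible_chordExpr_three
  | 4, _ => irreducible_chordExpr_four

lemma isRelPrime_chordExpr {i j : Fin 5} (hij : i ≠ j) :
    IsRelPrime ((chordExpr i).toPoly ℂ) ((chordExpr j).toPoly ℂ) := by
  wlog hi : i ≠ 2 generalizing i j
  · exact (this hij.symm fun hj => hij ((not_not.1 hi).trans hj.symm)).symm
  obtain ⟨hzero, hne⟩ := val_chordExpr_chordWitness i hi
  have heval (k : Fin 5) : eval (Int.castRingHom ℂ ∘ chordWitness i) ((chordExpr k).toPoly ℂ) =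
      ((chordExpr k).val (chordWitness i) : ℤ) := by
    rw [eval_toPoly, ← map_val, eq_intCast]
  exact isRelPrime_of_eval (irreducible_chordExpr i hi) _ (by rw [heval, hzero, Int.cast_zero])
    (by rw [heval]; exact_mod_cast hne j hij.symm)

lemma prod_chordExpr_dvd_cubicPullback {F : R3} {m : ℕ}
    (h : ∀ i : Fin 5, VanishesToOrder m (specialLine i.castSucc) F) :
    ∏ i, (chordExpr i).toPoly ℂ ^ m ∣ cubicPullback F :=
  Finset.prod_dvd_of_isRelPrime (fun _ _ _ _ hij => (isRelPrime_chordExpr hij).pow)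
    fun i _ => chordExpr_pow_dvd_cubicPullback (h i)

/-- The partial degrees of the `chordExpr j`. -/
def chordDegree : Fin 3 → Fin 5 → ℕ := ![![2, 1, 3, 1, 1], ![1, 1, 2, 1, 1], ![2, 2, 2, 2, 2]]

lemma lineCoeff_chordExpr_ne_zero (i : Fin 3) (j : Fin 5) :
    (chordExpr j).lineCoeff i 3 (chordDegree i j) ≠ 0 := by
  revert i j
  decide +kernel

lemma chordDegree_le (i : Fin 3) (j : Fin 5) :
    chordDegree i j ≤ degreeOf i ((chordExpr j).toPoly ℂ) :=
  le_degreeOf_toPoly i 3 _ (lineCoeff_chordExpr_ne_zero i j)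

lemma chordExpr_toPoly_ne_zero (j : Fin 5) : (chordExpr j).toPoly ℂ ≠ 0 := by
  intro h
  have hdeg : 0 < chordDegree 2 j := by
    clear h
    decide +revert
  simpa [h] using hdeg.trans_le (chordDegree_le 2 j)

lemma degreeOf_pointExpr_le (i : Fin 3) (n : Fin 4) :
    degreeOf i ((pointExpr n).toPoly ℂ) ≤ (![3, 2, 3] : Fin 3 → ℕ) i := by
  refine (degreeOf_toPoly_le i _).trans ?_
  revert i n
  decide

lemma degreeOf_aeval_le {K σ τ : Type*} [Field K] [Finite τ] {F : MvPolynomial τ K} {n d : ℕ}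
    (hF : F.IsHomogeneous n) (f : τ → MvPolynomial σ K) {i : σ} (hf : ∀ t, degreeOf i (f t) ≤ d) :
    degreeOf i (aeval f F) ≤ n * d := by
  cases nonempty_fintype τ
  rw [aeval_eq_eval₂Hom, coe_eval₂Hom, eval₂_eq']
  refine (degreeOf_sum_le _ _ _).trans (Finset.sup_le fun e he => ?_)
  have hdeg : ∑ t, e t = n := by
    rw [← Finsupp.degree_eq_sum, Finsupp.degree_eq_weight_one]
    exact hF (mem_support_iff.1 he)
  calc degreeOf i (C (coeff e F) * ∏ t, f t ^ e t) ≤ ∑ t, degreeOf i (f t ^ e t) :=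
      (degreeOf_C_mul_le _ _ _).trans (degreeOf_prod_le _ _ _)
    _ ≤ ∑ t, e t * d := Finset.sum_le_sum fun t _ =>
      (degreeOf_pow_le _ _ _).trans (Nat.mul_le_mul_left _ (hf t))
    _ = n * d := by rw [← Finset.sum_mul, hdeg]

lemma exists_cubicPullback_eq {F : R3} (hF : F.IsHomogeneous 20)
    (h : ∀ i : Fin 5, VanishesToOrder 6 (specialLine i.castSucc) F) :
    ∃ G, cubicPullback F = (∏ j, (chordExpr j).toPoly ℂ ^ 6) * G ∧
      degreeOf 0 G ≤ 12 ∧ degreeOf 1 G ≤ 4 ∧ degreeOf 2 G = 0 := by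
  obtain ⟨G, hG⟩ := prod_chordExpr_dvd_cubicPullback h
  refine ⟨G, hG, ?_⟩
  rcases eq_or_ne G 0 with rfl | hG₀
  · simp
  have hpow (j : Fin 5) : (chordExpr j).toPoly ℂ ^ 6 ≠ 0 :=
    pow_ne_zero _ (chordExpr_toPoly_ne_zero j)
  have hdeg (i : Fin 3) : ∑ j, 6 * chordDegree i j + degreeOf i G ≤ 20 * ![3, 2, 3] i := by
    refine le_trans ?_ (degreeOf_aeval_le hF _ (degreeOf_pointExpr_le i))
    rw [← cubicPullback, hG, degreeOf_mul_eq (Finset.prod_ne_zero_iff.2 fun j _ => hpow j) hG₀,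
      degreeOf_prod_eq _ _ fun j _ => hpow j]
    gcongr with j
    rw [degreeOf_pow_eq _ _ _ (chordExpr_toPoly_ne_zero j)]
    exact Nat.mul_le_mul_left _ (chordDegree_le i j)
  have h₀ := hdeg 0
  have h₁ := hdeg 1
  have h₂ := hdeg 2
  simp [chordDegree, Fin.sum_univ_five] at h₀ h₁ h₂
  omega

end Divisibility

section Curve

open PolyExpr

lemma eval_smul_of_isHomogeneous {K σ : Type*} [Finite σ] [CommRing K] {F : MvPolynomial σ K}
    {n : ℕ} (hF : F.IsHomogeneous n) (c : K) (p : σ → K) : eval (c • p) F = c ^ n * eval p F := by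
  cases nonempty_fintype σ
  rw [eval_eq', eval_eq', Finset.mul_sum]
  refine Finset.sum_congr rfl fun d hd => ?_
  have hdeg : ∑ i, d i = n := by
    rw [← Finsupp.degree_eq_sum, Finsupp.degree_eq_weight_one]
    exact hF (mem_support_iff.1 hd)
  simp only [Pi.smul_apply, smul_eq_mul, mul_pow, Finset.prod_mul_distrib,
    Finset.prod_pow_eq_pow_sum, hdeg]
  ring

lemma eval_eq_of_degreeOf_eq_zero {K σ : Type*} [CommRing K] {G : MvPolynomial σ K} {i : σ}
    (hG : degreeOf i G = 0) {ρ τ : σ → K} (h : ∀ j ≠ i, ρ j = τ j) : eval ρ G = eval τ G := by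
  classical
  refine hom_congr_vars (by ext; simp) (fun j hj _ => ?_) rfl
  rw [mem_vars_iff_degreeOf_ne_zero] at hj
  simpa using h j (by rintro rfl; exact hj hG)

lemma eval_aeval_eq_eval {K σ τ : Type*} [CommRing K] (ρ : σ → K) (f : τ → MvPolynomial σ K)
    (F : MvPolynomial τ K) : eval ρ (aeval f F) = eval (eval ρ ∘ f) F := by
  rw [aeval_def, eval_eval₂, eval, eval₂Hom]
  congr 1
  ext
  simp

lemma eval_cubicPullback (F : R3) (ρ : Fin 3 → ℂ) :
    eval ρ (cubicPullback F) = eval (fun n => (pointExpr n).val ρ) F := by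
  simp only [cubicPullback, eval_aeval_eq_eval, Function.comp_def, eval_toPoly]

variable {F : R3} {G : MvPolynomial (Fin 3) ℂ}

/- Both sides are compared after scaling `y` to `cubicSolution`: a form of degree `20` in the cubic
forms `cubicPoint` has degree `60`, and so does the product of the `chordForm y i ^ 6`. -/
lemma eval_cubicPoint_mul (hF : F.IsHomogeneous 20)
    (hG : cubicPullback F = (∏ j, (chordExpr j).toPoly ℂ ^ 6) * G) (hG₂ : degreeOf 2 G = 0)
    {x z : ℂ} {y : Fin 4 → ℂ} (hy : CubicEquations x z y) (hy₂ : y 2 ≠ 0)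
    (hx : 8 - 2 * x ^ 2 ≠ 0) : eval (cubicPoint y) F * (8 - 2 * x ^ 2) ^ 4 =
      (∏ j, chordForm y j ^ 6) * eval ![x, z, 0] G := by
  set D := 8 - 2 * x ^ 2
  set ρ := ![x, z, y 3 / y 2]
  have hsol : D • y = y 2 • cubicSolution ρ := by
    rw [← hy.smul_eq (div_mul_cancel₀ _ hy₂).symm, val_detExpr]
    rfl
  have hpoint : (D ^ 3) ^ 20 * eval (cubicPoint y) F =
      (y 2 ^ 3) ^ 20 * (D ^ 20 * eval (fun n => (pointExpr n).val ρ) F) := by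
    rw [← eval_smul_of_isHomogeneous hF, ← cubicPoint_smul, hsol, cubicPoint_smul,
      eval_smul_of_isHomogeneous hF, cubicPoint_cubicSolution, eval_smul_of_isHomogeneous hF,
      val_detExpr]
    rfl
  have hchord : (D ^ 2) ^ 30 * ∏ j, chordForm y j ^ 6 =
      (y 2 ^ 2) ^ 30 * (D ^ 24 * ∏ j, (chordExpr j).val ρ ^ 6) := by
    have hform (j : Fin 5) : D ^ 2 * chordForm y j =
        y 2 ^ 2 * (D ^ (![1, 1, 0, 1, 1] : Fin 5 → ℕ) j * (chordExpr j).val ρ) := by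
      rw [← chordForm_smul, hsol, chordForm_smul, chordForm_cubicSolution, val_detExpr]
      rfl
    calc (D ^ 2) ^ 30 * ∏ j, chordForm y j ^ 6
        = ∏ j, (D ^ 2 * chordForm y j) ^ 6 := by simp only [Fin.prod_univ_five]; ring
      _ = _ := by simp [hform, Fin.prod_univ_five]; ring
  have hpull : eval (fun n => (pointExpr n).val ρ) F =
      (∏ j, (chordExpr j).val ρ ^ 6) * eval ![x, z, 0] G := by
    rw [← eval_cubicPullback, hG, map_mul, map_prod]
    simp only [map_pow, eval_toPoly]
    congr 1
    refine eval_eq_of_degreeOf_eq_zero hG₂ fun j hj => ?_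
    fin_cases j <;> first | rfl | exact absurd rfl hj
  apply mul_left_cancel₀ (pow_ne_zero 60 hx)
  linear_combination D ^ 4 * hpoint - eval ![x, z, 0] G * hchord + y 2 ^ 60 * D ^ 24 * hpull

/-- The solution of `CubicEquations` for which the plane through the line `1` is `X 2 = 0`. -/
def cubicSolutionAtZero {R : Type*} [CommRing R] (x z : R) : Fin 4 → R :=
  ![-2 * x ^ 2 + 2 * x * z + 6 * z ^ 2, 0, 4 * x ^ 2 - 4 * x - 6 * z, -4 * x * z + 2 * x + 2 * z]

lemma cubicEquations_cubicSolutionAtZero {R : Type*} [CommRing R] (x z : R) :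
    CubicEquations x z (cubicSolutionAtZero x z) := by
  constructor <;> simp [cubicSolutionAtZero] <;> ring

lemma map_cubicSolutionAtZero {R S : Type*} [CommRing R] [CommRing S] (φ : R →+* S) (x z : R) :
    φ ∘ cubicSolutionAtZero x z = cubicSolutionAtZero (φ x) (φ z) := by
  ext n
  fin_cases n <;> simp [cubicSolutionAtZero, map_ofNat]

lemma aeval_cubicSolutionAtZero_mul (hF : F.IsHomogeneous 20)
    (hG : cubicPullback F = (∏ j, (chordExpr j).toPoly ℂ ^ 6) * G) (hG₂ : degreeOf 2 G = 0) :
    aeval (cubicPoint (cubicSolutionAtZero (X 0) (X 1))) F * detExpr.toPoly ℂ ^ 4 =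
      (∏ j, chordForm (cubicSolutionAtZero (X 0) (X 1)) j ^ 6) * G := by
  have hne : detExpr.toPoly ℂ * cubicSolutionAtZero (X 0 : MvPolynomial (Fin 3) ℂ) (X 1) 2 ≠ 0 := by
    intro h
    have heval := congrArg (eval ![1, 1, 0]) h
    simp [eval_toPoly, val_detExpr, cubicSolutionAtZero] at heval
    norm_num at heval
  refine mul_left_cancel₀ hne (MvPolynomial.funext fun ρ => ?_)
  have hsol := map_cubicSolutionAtZero (eval ρ) (X 0) (X 1)
  have hpoint : eval ρ (aeval (cubicPoint (cubicSolutionAtZero (X 0) (X 1))) F) =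
      eval (cubicPoint (cubicSolutionAtZero (ρ 0) (ρ 1))) F := by
    rw [eval_aeval_eq_eval, ← RingHom.coe_coe, map_cubicPoint]
    simp [hsol]
  have hsol₂ : eval ρ (cubicSolutionAtZero (X 0 : MvPolynomial (Fin 3) ℂ) (X 1) 2) =
      cubicSolutionAtZero (ρ 0) (ρ 1) 2 := by
    simpa using congrFun hsol 2
  have hG₀ : eval ρ G = eval ![ρ 0, ρ 1, 0] G := by
    refine eval_eq_of_degreeOf_eq_zero hG₂ fun j hj => ?_
    fin_cases j <;> first | rfl | exact absurd rfl hj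
  simp only [map_mul, map_pow, map_prod, map_chordForm, eval_toPoly, hsol, hsol₂, hpoint, hG₀,
    eval_X, val_detExpr]
  rcases eq_or_ne ((8 - 2 * ρ 0 ^ 2) * cubicSolutionAtZero (ρ 0) (ρ 1) 2) 0 with h | h
  · rw [h, zero_mul, zero_mul]
  · rw [eval_cubicPoint_mul hF hG hG₂ (cubicEquations_cubicSolutionAtZero _ _)
      (right_ne_zero_of_mul h) (left_ne_zero_of_mul h)]

lemma irreducible_X_sub_C {K σ : Type*} [Field K] (i : σ) (a : K) :
    Irreducible (X i - C a : MvPolynomial σ K) := by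
  classical
  have hirr := irreducible_mul_X_add (1 : MvPolynomial σ K) (C (-a)) i one_ne_zero (by simp)
    (by simp) isRelPrime_one_left
  simpa [sub_eq_add_neg] using hirr

lemma detExpr_pow_dvd (hF : F.IsHomogeneous 20)
    (hG : cubicPullback F = (∏ j, (chordExpr j).toPoly ℂ ^ 6) * G) (hG₂ : degreeOf 2 G = 0) :
    detExpr.toPoly ℂ ^ 4 ∣ G := by
  have hdvd := Dvd.intro_left _ (aeval_cubicSolutionAtZero_mul hF hG hG₂)
  refine IsRelPrime.dvd_of_dvd_mul_left (IsRelPrime.pow_left (IsRelPrime.prod_right fun j _ =>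
    IsRelPrime.pow_right ?_)) hdvd
  have hrel (a : ℂ) (ha : a = 2 ∨ a = -2) : IsRelPrime (X 0 - C a)
      (chordForm (cubicSolutionAtZero (X 0 : MvPolynomial (Fin 3) ℂ) (X 1)) j) := by
    refine isRelPrime_of_eval (irreducible_X_sub_C 0 a) ![a, 0, 0] (by simp) ?_
    rw [map_chordForm, map_cubicSolutionAtZero]
    rcases ha with rfl | rfl <;> fin_cases j <;>
      simp [chordForm, planeOfCubic, cubicSolutionAtZero] <;> norm_num
  have hdet : detExpr.toPoly ℂ = C (-2) * ((X 0 - C 2) * (X 0 - C (-2))) := by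
    simp [toPoly, val_detExpr, map_ofNat]
    ring
  rw [hdet, isRelPrime_mul_unit_left_left ((isUnit_iff_ne_zero.2 (by norm_num)).map C)]
  exact (hrel 2 (.inl rfl)).mul_left (hrel (-2) (.inr rfl))

lemma exists_eval_cubicPoint_eq (hF : F.IsHomogeneous 20)
    (h : ∀ i : Fin 5, VanishesToOrder 6 (specialLine i.castSucc) F) :
    ∃ g : MvPolynomial (Fin 3) ℂ, degreeOf 0 g ≤ 4 ∧ degreeOf 1 g ≤ 4 ∧ degreeOf 2 g = 0 ∧
      ∀ x z y, CubicEquations x z y → y 2 ≠ 0 → 8 - 2 * x ^ 2 ≠ 0 →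
        eval (cubicPoint y) F = (∏ j, chordForm y j ^ 6) * eval ![x, z, 0] g := by
  obtain ⟨G, hG, hG₀, hG₁, hG₂⟩ := exists_cubicPullback_eq hF h
  obtain ⟨g, rfl⟩ := detExpr_pow_dvd hF hG hG₂
  have hdet : detExpr.toPoly ℂ ≠ 0 := toPoly_ne_zero 0 (by simp [val_detExpr])
  have hdeg : 2 ≤ degreeOf 0 (detExpr.toPoly ℂ) :=
    le_degreeOf_toPoly 0 0 detExpr (by decide +kernel)
  have hbound : degreeOf 0 g ≤ 4 ∧ degreeOf 1 g ≤ 4 ∧ degreeOf 2 g = 0 := by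
    rcases eq_or_ne g 0 with rfl | hg
    · simp
    rw [degreeOf_mul_eq (pow_ne_zero 4 hdet) hg, degreeOf_pow_eq _ _ _ hdet] at hG₀ hG₁
    rw [degreeOf_mul_eq (pow_ne_zero 4 hdet) hg] at hG₂
    omega
  refine ⟨g, hbound.1, hbound.2.1, hbound.2.2, fun x z y hy hy₂ hx => ?_⟩
  have heval := eval_cubicPoint_mul hF hG hG₂ hy hy₂ hx
  rw [map_mul, map_pow, eval_toPoly, val_detExpr] at heval
  refine mul_right_cancel₀ (pow_ne_zero 4 hx) (heval.trans ?_)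
  simp only [Matrix.cons_val_zero]
  ring

end Curve

section CubicThrough

variable {R S : Type*} [CommRing R] [CommRing S]

/-- The coefficients `c` of the linear relation `c 0 • u = c 1 • v + c 2 • s` between three vectors
of the plane. -/
def planeRelation (u v s : Fin 2 → R) : Fin 3 → R := ![cross v s, cross u s, cross v u]

lemma planeRelation_spec (u v s : Fin 2 → R) (k : Fin 2) : planeRelation u v s 0 * u k =
    planeRelation u v s 1 * v k + planeRelation u v s 2 * s k := by
  fin_cases k <;> simp [planeRelation, cross] <;> ring

/-- The relation expressing `planeOfCubic` of the cubic through `p` in terms of the two other planes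
through `p`. -/
def planeCoeff (p : Fin 4 → R) : Fin 3 → R :=
  planeRelation ![p 1, -p 0] ![2 * p 3, p 2] ![p 1 + p 3, 2 * (p 0 + p 2)]

/-- The relation to which `CubicEquations` reduces for the cubic through `p`. -/
def paramCoeff (p : Fin 4 → R) : Fin 3 → R :=
  planeRelation ![p 1, -p 0] ![2 * p 3 + 3 * p 2, 2 * p 3 - p 2]
    ![p 1 + p 3 + 3 * (p 0 + p 2), 2 * (p 1 + p 3)]

/-- The planes cutting out the point `p` on the cubic of the family that passes through `p`. -/
def cubicThrough (p : Fin 4 → R) : Fin 4 → R :=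
  ![planeCoeff p 1 * p 3, -(planeCoeff p 1 * p 2), planeCoeff p 2 * (p 1 + p 3),
    -(planeCoeff p 2 * (p 0 + p 2))]

/-- The numerator and the denominator of the parameter `x` of the cubic through `p`. -/
def cubicX (p : Fin 4 → R) : R × R :=
  (paramCoeff p 0 * planeCoeff p 1, planeCoeff p 0 * paramCoeff p 1)

/-- The numerator and the denominator of the parameter `z` of the cubic through `p`. -/
def cubicZ (p : Fin 4 → R) : R × R :=
  (paramCoeff p 2 * planeCoeff p 1, planeCoeff p 2 * paramCoeff p 1)

/-- A form which vanishes at the points `p` for which the cubic through `p` is degenerate. -/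
def degeneracy (p : Fin 4 → R) : R :=
  planeCoeff p 1 * (p 0 * p 3 - p 1 * p 2) * (p 1 + p 3) *
    ((cubicX p).2 * (cubicZ p).2 * ((cubicX p).1 ^ 2 - 4 * (cubicX p).2 ^ 2))

lemma map_planeCoeff (φ : R →+* S) (p : Fin 4 → R) (i : Fin 3) :
    φ (planeCoeff p i) = planeCoeff (φ ∘ p) i := by
  fin_cases i <;> simp [planeCoeff, planeRelation, cross, map_ofNat]

lemma map_paramCoeff (φ : R →+* S) (p : Fin 4 → R) (i : Fin 3) :
    φ (paramCoeff p i) = paramCoeff (φ ∘ p) i := by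
  fin_cases i <;> simp [paramCoeff, planeRelation, cross, map_ofNat]

lemma map_cubicX (φ : R →+* S) (p : Fin 4 → R) :
    cubicX (φ ∘ p) = (φ (cubicX p).1, φ (cubicX p).2) := by
  simp only [cubicX, map_mul, map_planeCoeff, map_paramCoeff]

lemma map_cubicZ (φ : R →+* S) (p : Fin 4 → R) :
    cubicZ (φ ∘ p) = (φ (cubicZ p).1, φ (cubicZ p).2) := by
  simp only [cubicZ, map_mul, map_planeCoeff, map_paramCoeff]

lemma map_degeneracy (φ : R →+* S) (p : Fin 4 → R) :
    φ (degeneracy p) = degeneracy (φ ∘ p) := by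
  simp only [degeneracy, map_cubicX, map_cubicZ, map_mul, map_sub, map_add, map_pow, map_ofNat,
    map_planeCoeff, Function.comp_apply]

lemma planeOfCubic_cubicThrough (p : Fin 4 → R) (k : Fin 2) :
    planeOfCubic (cubicThrough p) k = planeCoeff p 0 * (![p 1, -p 0] : Fin 2 → R) k := by
  rw [planeCoeff, planeRelation_spec]
  fin_cases k <;> simp [planeOfCubic, cubicThrough, planeCoeff] <;> ring

lemma chordForm_cubicThrough (p : Fin 4 → R) (j : Fin 5) :
    chordForm (cubicThrough p) j =
      ![planeCoeff p 2 * planeCoeff p 1 * (p 0 * p 3 - p 1 * p 2),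
        -(planeCoeff p 2 * planeCoeff p 0 * (p 0 * p 3 - p 1 * p 2)),
        planeCoeff p 0 * planeCoeff p 1 * (p 0 * p 3 - p 1 * p 2),
        -(planeCoeff p 2 * planeCoeff p 0 * planeCoeff p 1),
        -(planeCoeff p 2 * planeCoeff p 0 * paramCoeff p 1)] j := by
  have hplane : planeCoeff p 1 = p 1 * (2 * (p 0 + p 2)) - (p 1 + p 3) * -p 0 := by
    simp [planeCoeff, planeRelation, cross, mul_comm]
  have hparam : paramCoeff p 1 =
      p 1 * (2 * (p 1 + p 3)) - (p 1 + p 3 + 3 * (p 0 + p 2)) * -p 0 := by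
    simp [paramCoeff, planeRelation, cross, mul_comm]
  have hsol (n : Fin 4) : cubicThrough p n =
      (![planeCoeff p 1 * p 3, -(planeCoeff p 1 * p 2), planeCoeff p 2 * (p 1 + p 3),
        -(planeCoeff p 2 * (p 0 + p 2))] : Fin 4 → R) n := rfl
  fin_cases j <;>
    simp only [chordForm, planeOfCubic_cubicThrough, hsol, Fin.reduceFinMk, Matrix.cons_val]
  · ring
  · ring
  · ring
  · linear_combination planeCoeff p 0 * planeCoeff p 2 * hplane
  · linear_combination planeCoeff p 0 * planeCoeff p 2 * hparam

lemma cubicPoint_cubicThrough (p : Fin 4 → R) : cubicPoint (cubicThrough p) =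
    -(planeCoeff p 0 * planeCoeff p 1 * planeCoeff p 2 * (p 0 * p 3 - p 1 * p 2)) • p := by
  have h₀ : cubicThrough p 0 = planeCoeff p 1 * p 3 := rfl
  have h₁ : cubicThrough p 1 = -(planeCoeff p 1 * p 2) := rfl
  ext n
  fin_cases n <;>
    simp [cubicPoint, planeOfCubic_cubicThrough, chordForm_cubicThrough, h₀, h₁] <;> ring

end CubicThrough

section ParameterCurve

variable {K : Type*} [Field K] {p : Fin 4 → K}

/-- The parameter `x` of the cubic through `p`. -/
def paramX (p : Fin 4 → K) : K := (cubicX p).1 / (cubicX p).2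

/-- The parameter `z` of the cubic through `p`. -/
def paramZ (p : Fin 4 → K) : K := (cubicZ p).1 / (cubicZ p).2

lemma cubicEquations_cubicThrough (hx : (cubicX p).2 ≠ 0) (hz : (cubicZ p).2 ≠ 0) :
    CubicEquations (paramX p) (paramZ p) (cubicThrough p) := by
  have hplane := planeOfCubic_cubicThrough p
  have hparam : ∀ k, paramCoeff p 0 * _ = paramCoeff p 1 * _ + paramCoeff p 2 * _ :=
    planeRelation_spec ![p 1, -p 0] ![2 * p 3 + 3 * p 2, 2 * p 3 - p 2]
      ![p 1 + p 3 + 3 * (p 0 + p 2), 2 * (p 1 + p 3)]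
  have hX : paramCoeff p 1 * (paramX p * planeCoeff p 0) = paramCoeff p 0 * planeCoeff p 1 := by
    calc _ = paramX p * (cubicX p).2 := by rw [cubicX]; ring
      _ = _ := div_mul_cancel₀ (cubicX p).1 hx
  have hZ : paramCoeff p 1 * (paramZ p * planeCoeff p 2) = paramCoeff p 2 * planeCoeff p 1 := by
    calc _ = paramZ p * (cubicZ p).2 := by rw [cubicZ]; ring
      _ = _ := div_mul_cancel₀ (cubicZ p).1 hz
  simp only [planeOfCubic, cubicThrough, Fin.forall_fin_two, Matrix.cons_val] at hplane hparam
  simp only [CubicEquations, cubicThrough, Matrix.cons_val]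
  constructor <;> refine mul_left_cancel₀ (right_ne_zero_of_mul hx : paramCoeff p 1 ≠ 0) ?_
  · linear_combination paramCoeff p 1 * paramX p * hplane.1 + p 1 * hX -
      (p 1 + p 3 + 3 * (p 0 + p 2)) * hZ + planeCoeff p 1 * hparam.1
  · linear_combination paramCoeff p 1 * paramX p * hplane.2 - p 0 * hX -
      2 * (p 1 + p 3) * hZ + planeCoeff p 1 * hparam.2

lemma eval_eq_zero_iff_of_degeneracy_ne_zero {F : MvPolynomial (Fin 4) ℂ}
    {g : MvPolynomial (Fin 3) ℂ} {n : ℕ} (hF : F.IsHomogeneous n)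
    (hg : ∀ x z y, CubicEquations x z y → y 2 ≠ 0 → 8 - 2 * x ^ 2 ≠ 0 →
      eval (cubicPoint y) F = (∏ j, chordForm y j ^ 6) * eval ![x, z, 0] g)
    {p : Fin 4 → ℂ} (hp : degeneracy p ≠ 0) :
    eval p F = 0 ↔ eval ![paramX p, paramZ p, 0] g = 0 := by
  simp only [degeneracy, cubicZ, mul_ne_zero_iff] at hp
  obtain ⟨⟨⟨h₁, hq⟩, hs⟩, ⟨hx, h₂, hd⟩, hdet⟩ := hp
  have h₀ : planeCoeff p 0 ≠ 0 := left_ne_zero_of_mul hx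
  have hX : 8 - 2 * paramX p ^ 2 ≠ 0 := by
    rw [paramX]
    contrapose! hdet
    field_simp at hdet
    linear_combination -hdet / 2
  have heval := hg _ _ _ (cubicEquations_cubicThrough hx (mul_ne_zero h₂ hd))
    (mul_ne_zero h₂ hs) hX
  rw [cubicPoint_cubicThrough, eval_smul_of_isHomogeneous hF] at heval
  have hprod : ∏ j, chordForm (cubicThrough p) j ^ 6 ≠ 0 := by
    refine Finset.prod_ne_zero_iff.2 fun j _ => pow_ne_zero 6 ?_
    rw [chordForm_cubicThrough]
    fin_cases j <;> simp [h₀, h₁, h₂, hd, hq]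
  have hc : (-(planeCoeff p 0 * planeCoeff p 1 * planeCoeff p 2 * (p 0 * p 3 - p 1 * p 2))) ^ n
      ≠ 0 := pow_ne_zero n (neg_ne_zero.2 (by simp only [mul_ne_zero_iff]; tauto))
  rw [← mul_eq_zero_iff_left hc, heval, mul_eq_zero_iff_left hprod]

end ParameterCurve

section PlaneCurve

open Filter Topology
open scoped Polynomial Polynomial.Bivariate

variable {K : Type*} [NontriviallyNormedField K]

lemma eventually_eval_ne_zero {q : K[X]} (hq : q ≠ 0) (s : K) : ∀ᶠ t in 𝓝[≠] s, q.eval t ≠ 0 := by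
  have hfin : ({t | q.IsRoot t} \ {s}).Finite :=
    (Polynomial.finite_setOfPred_isRoot hq).subset Set.sdiff_subset
  filter_upwards [nhdsWithin_le_nhds (hfin.isClosed.isOpen_compl.mem_nhds fun h => h.2 rfl),
    self_mem_nhdsWithin] with t ht hts hroot
  exact ht ⟨hroot, hts⟩

lemma continuousAt_evalEval {T : Type*} [TopologicalSpace T] {x z : T → K} {s : T}
    (hx : ContinuousAt x s) (hz : ContinuousAt z s) (h : K[X][Y]) :
    ContinuousAt (fun t => h.evalEval (x t) (z t)) s := by
  induction h using Polynomial.induction_on' with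
  | add p q hp hq =>
    simp only [Polynomial.evalEval_add]
    exact hp.add hq
  | monomial n a =>
    simp only [← Polynomial.C_mul_X_pow_eq_monomial, Polynomial.evalEval_mul,
      Polynomial.evalEval_pow, Polynomial.evalEval_C, Polynomial.evalEval_X]
    exact (a.continuous.continuousAt.comp hx).mul (hz.pow n)

lemma evalEval_eq_zero_of_eventually {x z : K → K} {s : K} {h : K[X][Y]} (hx : ContinuousAt x s)
    (hz : ContinuousAt z s) (hzero : ∀ᶠ t in 𝓝[≠] s, h.evalEval (x t) (z t) = 0) :
    h.evalEval (x s) (z s) = 0 :=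
  tendsto_nhds_unique_of_eventuallyEq
    ((continuousAt_evalEval hx hz h).tendsto.mono_left nhdsWithin_le_nhds)
    tendsto_const_nhds hzero

lemma C_X_sub_C_dvd_iff {h : K[X][Y]} {a : K} :
    Polynomial.C (Polynomial.X - Polynomial.C a) ∣ h ↔ h.map (Polynomial.evalRingHom a) = 0 := by
  simp only [Polynomial.C_dvd_iff_dvd_coeff, Polynomial.dvd_iff_isRoot, Polynomial.ext_iff,
    Polynomial.coeff_map, Polynomial.coeff_zero, Polynomial.coe_evalRingHom, Polynomial.IsRoot.def]

lemma eq_zero_of_eventually_of_natDegree_lt_card {ι : Type*} [Fintype ι] {x z : K → K} {a : K}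
    {s : ι → K} {h : K[X][Y]} (hcard : h.natDegree < Fintype.card ι)
    (hinj : Function.Injective (z ∘ s)) (hxs : ∀ i, x (s i) = a)
    (hx : ∀ i, ContinuousAt x (s i)) (hz : ∀ i, ContinuousAt z (s i))
    (hzero : ∀ i, ∀ᶠ t in 𝓝[≠] s i, x t ≠ a ∧ h.evalEval (x t) (z t) = 0) : h = 0 := by
  by_contra hne
  have hprime : Prime (Polynomial.C (Polynomial.X - Polynomial.C a) : K[X][Y]) :=
    Polynomial.prime_C_iff.2 (Polynomial.prime_X_sub_C a)
  obtain ⟨n, k, hk, rfl⟩ := WfDvdMonoid.max_power_factor hne hprime.irreducible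
  refine hk (C_X_sub_C_dvd_iff.2 ?_)
  refine Polynomial.eq_zero_of_natDegree_lt_card_of_eval_eq_zero _ hinj (fun i => ?_) ?_
  · rw [Function.comp_apply, Polynomial.map_evalRingHom_eval, ← hxs i]
    refine evalEval_eq_zero_of_eventually (hx i) (hz i) ?_
    filter_upwards [hzero i] with t ⟨hta, ht⟩
    rw [Polynomial.evalEval_mul, Polynomial.evalEval_pow, Polynomial.evalEval_C,
      Polynomial.eval_sub, Polynomial.eval_X, Polynomial.eval_C] at ht
    exact (mul_eq_zero_iff_left (pow_ne_zero n (sub_ne_zero.2 hta))).1 ht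
  · refine Polynomial.natDegree_map_le.trans_lt (lt_of_le_of_lt ?_ hcard)
    rw [Polynomial.natDegree_mul (pow_ne_zero n hprime.ne_zero) (right_ne_zero_of_mul hne)]
    exact Nat.le_add_left _ _

end PlaneCurve

section SixthLine

/-- A parametrisation of the sixth special line. -/
def sixthPoint {R : Type*} [CommRing R] (t : R) : Fin 4 → R := ![1, t, -4 - 4 * t, t - 3]

section Ring

variable {R S : Type*} [CommRing R] [CommRing S]

lemma map_sixthPoint (φ : R →+* S) (t : R) : φ ∘ sixthPoint t = sixthPoint (φ t) := by
  ext n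
  fin_cases n <;> simp [sixthPoint, map_ofNat]

lemma cubicX_sixthPoint (t : R) : cubicX (sixthPoint t) =
    (-4 * (5 * t ^ 2 + 10 * t + 21) * (8 * t ^ 2 + 4 * t + 3), -32 * (t ^ 2 - 4 * t - 3) ^ 2) := by
  ext <;> simp [cubicX, planeCoeff, paramCoeff, planeRelation, cross, sixthPoint] <;> ring

lemma cubicZ_sixthPoint (t : R) : cubicZ (sixthPoint t) =
    (6 * (t - 3) * (t + 1) * (8 * t ^ 2 + 4 * t + 3),
      8 * (2 * t ^ 2 + t + 3) * (t ^ 2 - 4 * t - 3)) := by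
  ext <;> simp [cubicZ, planeCoeff, paramCoeff, planeRelation, cross, sixthPoint] <;> ring

end Ring

open Filter Topology
open scoped Polynomial Polynomial.Bivariate

lemma continuousAt_paramX_sixthPoint {K : Type*} [NontriviallyNormedField K] {t : K}
    (ht : (cubicX (sixthPoint t)).2 ≠ 0) : ContinuousAt (fun t => paramX (sixthPoint t)) t := by
  simp only [cubicX_sixthPoint, paramX] at ht ⊢
  fun_prop (disch := exact ht)

lemma continuousAt_paramZ_sixthPoint {K : Type*} [NontriviallyNormedField K] {t : K}
    (ht : (cubicZ (sixthPoint t)).2 ≠ 0) : ContinuousAt (fun t => paramZ (sixthPoint t)) t := by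
  simp only [cubicZ_sixthPoint, paramZ] at ht ⊢
  fun_prop (disch := exact ht)

lemma eventually_sixthPoint (s : ℂ) : ∀ᶠ t in 𝓝[≠] s, degeneracy (sixthPoint t) ≠ 0 ∧
    paramX (sixthPoint t) ≠ 7 / 8 ∧ paramZ (sixthPoint t) ≠ 5 / 4 := by
  let q : Polynomial ℂ := degeneracy (sixthPoint Polynomial.X) *
    (8 * (cubicX (sixthPoint Polynomial.X)).1 - 7 * (cubicX (sixthPoint Polynomial.X)).2) *
    (4 * (cubicZ (sixthPoint Polynomial.X)).1 - 5 * (cubicZ (sixthPoint Polynomial.X)).2)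
  have heval (t : ℂ) : q.eval t = degeneracy (sixthPoint t) *
      (8 * (cubicX (sixthPoint t)).1 - 7 * (cubicX (sixthPoint t)).2) *
      (4 * (cubicZ (sixthPoint t)).1 - 5 * (cubicZ (sixthPoint t)).2) := by
    have ht : sixthPoint t = Polynomial.evalRingHom t ∘ sixthPoint Polynomial.X := by
      rw [map_sixthPoint, Polynomial.coe_evalRingHom, Polynomial.eval_X]
    rw [ht, map_cubicX, map_cubicZ, ← map_degeneracy, ← Polynomial.coe_evalRingHom]
    simp only [q, map_mul, map_sub, map_ofNat]
  have hq : q ≠ 0 := by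
    intro hq
    have h := heval (-1)
    rw [hq, cubicX_sixthPoint, cubicZ_sixthPoint, degeneracy, cubicX_sixthPoint,
      cubicZ_sixthPoint] at h
    simp [planeCoeff, planeRelation, cross, sixthPoint] at h
    norm_num at h
  filter_upwards [eventually_eval_ne_zero hq s] with t ht
  rw [heval] at ht
  simp only [mul_ne_zero_iff, sub_ne_zero] at ht
  obtain ⟨⟨hd, hx⟩, hz⟩ := ht
  have hd' := hd
  simp only [degeneracy, mul_ne_zero_iff] at hd'
  refine ⟨hd, fun h => hx ?_, fun h => hz ?_⟩
  · rw [paramX, div_eq_iff hd'.2.1.1] at h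
    linear_combination 8 * h
  · rw [paramZ, div_eq_iff hd'.2.1.2] at h
    linear_combination 4 * h

lemma evalEval_sixthPoint_eq_zero {h : ℂ[X][Y]}
    (hcurve : ∀ t : ℂ, degeneracy (sixthPoint t) ≠ 0 →
      h.evalEval (paramX (sixthPoint t)) (paramZ (sixthPoint t)) = 0) {t : ℂ}
    (hx : (cubicX (sixthPoint t)).2 ≠ 0) (hz : (cubicZ (sixthPoint t)).2 ≠ 0) :
    h.evalEval (paramX (sixthPoint t)) (paramZ (sixthPoint t)) = 0 := by
  refine evalEval_eq_zero_of_eventually (continuousAt_paramX_sixthPoint hx)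
    (continuousAt_paramZ_sixthPoint hz) ?_
  filter_upwards [eventually_sixthPoint t] with t ht using hcurve t ht.1

lemma eval_C_eq_zero_of_sixthPoint {h : ℂ[X][Y]}
    (hdeg : (h.eval (Polynomial.C (5 / 4))).natDegree ≤ 4)
    (hcurve : ∀ t : ℂ, degeneracy (sixthPoint t) ≠ 0 →
      h.evalEval (paramX (sixthPoint t)) (paramZ (sixthPoint t)) = 0)
    (hpoint : h.evalEval (3 / 16) (5 / 4) = 0) : h.eval (Polynomial.C (5 / 4)) = 0 := by
  have hfibre (i : Fin 4) :
      h.evalEval ((![5, 7 / 8, 15 / 8, 7 / 2] : Fin 4 → ℂ) i) (5 / 4) = 0 := by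
    let t : ℂ := ![-3 / 7, -2, 1, 3 / 2] i
    have hX : paramX (sixthPoint t) = ![5, 7 / 8, 15 / 8, 7 / 2] i := by
      fin_cases i <;> simp [t, paramX, cubicX_sixthPoint] <;> norm_num
    have hZ : paramZ (sixthPoint t) = 5 / 4 := by
      fin_cases i <;> simp [t, paramZ, cubicZ_sixthPoint] <;> norm_num
    rw [← hX, ← hZ]
    apply evalEval_sixthPoint_eq_zero hcurve
    · fin_cases i <;> simp [t, cubicX_sixthPoint] <;> norm_num
    · fin_cases i <;> simp [t, cubicZ_sixthPoint] <;> norm_num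
  refine Polynomial.eq_zero_of_natDegree_lt_card_of_eval_eq_zero _
    (f := ![3 / 16, 5, 7 / 8, 15 / 8, 7 / 2]) ?_ (Fin.cases hpoint hfibre) (Nat.lt_succ_of_le hdeg)
  norm_num [Function.Injective, Fin.forall_fin_succ]

lemma eq_zero_of_sixthPoint {h : ℂ[X][Y]} (hX : (h.eval (Polynomial.C (5 / 4))).natDegree ≤ 4)
    (hY : h.natDegree ≤ 4)
    (hcurve : ∀ t : ℂ, degeneracy (sixthPoint t) ≠ 0 →
      h.evalEval (paramX (sixthPoint t)) (paramZ (sixthPoint t)) = 0)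
    (hpoint : h.evalEval (3 / 16) (5 / 4) = 0) : h = 0 := by
  obtain ⟨k, rfl⟩ := Polynomial.dvd_iff_isRoot.2 (eval_C_eq_zero_of_sixthPoint hX hcurve hpoint)
  rcases eq_or_ne k 0 with rfl | hk
  · exact mul_zero _
  have hYk : k.natDegree < Fintype.card (Fin 4) := by
    rw [Polynomial.natDegree_mul (Polynomial.X_sub_C_ne_zero _) hk,
      Polynomial.natDegree_X_sub_C] at hY
    simp only [Fintype.card_fin]
    omega
  refine absurd (eq_zero_of_eventually_of_natDegree_lt_card (a := 7 / 8)
    (x := fun t => paramX (sixthPoint t)) (z := fun t => paramZ (sixthPoint t))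
    (s := ![0, -2, -3, 3 / 11]) hYk ?_ ?_ (fun i => continuousAt_paramX_sixthPoint ?_)
    (fun i => continuousAt_paramZ_sixthPoint ?_) fun i => ?_) hk
  · have hval : (fun t => paramZ (sixthPoint t)) ∘ ![0, -2, -3, 3 / 11] =
        (![3 / 4, 5 / 4, 7 / 4, 245 / 276] : Fin 4 → ℂ) := by
      ext i
      fin_cases i <;> simp [paramZ, cubicZ_sixthPoint] <;> norm_num
    rw [hval]
    norm_num [Function.Injective, Fin.forall_fin_succ]
  · intro i
    fin_cases i <;> simp [paramX, cubicX_sixthPoint] <;> norm_num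
  · fin_cases i <;> simp [cubicX_sixthPoint] <;> norm_num
  · fin_cases i <;> simp [cubicZ_sixthPoint] <;> norm_num
  · filter_upwards [eventually_sixthPoint (![0, -2, -3, 3 / 11] i)] with t ⟨ht, hx, hz⟩
    have hmul := hcurve t ht
    rw [Polynomial.evalEval_mul] at hmul
    refine ⟨hx, (mul_eq_zero_iff_left ?_).1 hmul⟩
    simpa [sub_eq_zero] using hz

end SixthLine

section SpecialLines

open scoped Polynomial Polynomial.Bivariate

/-- A point outside the surface of degree `20` through the special lines. -/
def specialPoint : Fin 4 → ℤ := ![0, 2, -1, 2]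

lemma eval_aeval_polynomial {σ R A : Type*} [CommRing R] [CommRing A] [Algebra R A] (a : A)
    (f : σ → A[X]) (g : MvPolynomial σ R) :
    (aeval f g).eval a = aeval (fun i => (f i).eval a) g := by
  simpa [Polynomial.coe_aeval_eq_eval] using
    comp_aeval_apply ((Polynomial.aeval a).restrictScalars R) (f := f) (p := g)

lemma eval_eq_zero_of_vanishing_sixthPoint {g : MvPolynomial (Fin 3) ℂ} (hg₀ : degreeOf 0 g ≤ 4)
    (hg₁ : degreeOf 1 g ≤ 4)
    (hcurve : ∀ t : ℂ, degeneracy (sixthPoint t) ≠ 0 →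
      eval ![paramX (sixthPoint t), paramZ (sixthPoint t), 0] g = 0)
    (hpoint : eval ![3 / 16, 5 / 4, 0] g = 0) (x z : ℂ) : eval ![x, z, 0] g = 0 := by
  let h : ℂ[X][Y] := aeval (PolyExpr.axisLine 1 ![Polynomial.X, 0, 0]) g
  have hz (z : ℂ) : h.eval (Polynomial.C z) = aeval (PolyExpr.axisLine 0 ![0, z, 0]) g := by
    rw [eval_aeval_polynomial]
    congr 2 with i : 1
    fin_cases i <;> simp [PolyExpr.axisLine]
  have hxz (x z : ℂ) : h.evalEval x z = eval ![x, z, 0] g := by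
    rw [Polynomial.evalEval, hz, eval_aeval_polynomial, ← coe_aeval_eq_eval, RingHom.coe_coe]
    congr 2 with i : 1
    fin_cases i <;> simp [PolyExpr.axisLine]
  have hzero : h = 0 := by
    apply eq_zero_of_sixthPoint
    · rw [hz]
      exact (PolyExpr.natDegree_aeval_axisLine_le _ _ _).trans hg₀
    · exact (PolyExpr.natDegree_aeval_axisLine_le _ _ _).trans hg₁
    · simpa only [hxz] using hcurve
    · rwa [hxz]
  rw [← hxz, hzero, Polynomial.evalEval_zero]

lemma degeneracy_specialPoint_ne_zero : degeneracy (fun n => (specialPoint n : ℂ)) ≠ 0 := by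
  have h : degeneracy specialPoint ≠ 0 := by decide +kernel
  refine ne_of_eq_of_ne (map_degeneracy (Int.castRingHom ℂ) specialPoint).symm ?_
  rw [eq_intCast]
  exact_mod_cast h

lemma paramX_specialPoint : paramX (fun n => (specialPoint n : ℂ)) = 3 / 16 := by
  simp [paramX, cubicX, planeCoeff, paramCoeff, planeRelation, cross, specialPoint]
  norm_num

lemma paramZ_specialPoint : paramZ (fun n => (specialPoint n : ℂ)) = 5 / 4 := by
  simp [paramZ, cubicZ, planeCoeff, paramCoeff, planeRelation, cross, specialPoint]
  norm_num

lemma eval_sixthPoint_eq_zero {F : MvPolynomial (Fin 4) ℂ} (h : VanishesToOrder 1 (specialLine 5) F)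
    (t : ℂ) : eval (sixthPoint t) F = 0 := by
  have hdvd := h.pow_dvd_aeval ![1, t] 0 0
  rw [pow_one, zero_dvd_iff] at hdvd
  rw [← coe_aeval_eq_eval, ← hdvd, RingHom.coe_coe]
  congr 2 with n : 1
  fin_cases n <;> simp [sixthPoint, specialLine, specialFrame] <;> ring

theorem eq_zero_of_vanishesToOrder_specialLine {F : MvPolynomial (Fin 4) ℂ}
    (hF : F.IsHomogeneous 20)
    (h : ∀ i, VanishesToOrder ((![6, 6, 6, 6, 6, 1] : Fin 6 → ℕ) i) (specialLine i) F)
    (hpoint : eval (fun n => (specialPoint n : ℂ)) F = 0) : F = 0 := by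
  obtain ⟨g, hg₀, hg₁, -, hg⟩ := exists_eval_cubicPoint_eq hF fun i => by
    have hi := h i.castSucc
    fin_cases i <;> exact hi
  have hiff {p : Fin 4 → ℂ} (hp : degeneracy p ≠ 0) :=
    eval_eq_zero_iff_of_degeneracy_ne_zero hF hg hp
  have hzero := eval_eq_zero_of_vanishing_sixthPoint hg₀ hg₁
    (fun t ht => (hiff ht).1 (eval_sixthPoint_eq_zero (h 5) t)) <| by
      rw [← paramX_specialPoint, ← paramZ_specialPoint]
      exact (hiff degeneracy_specialPoint_ne_zero).1 hpoint
  have heval (p : Fin 4 → ℂ) : eval p (degeneracy X) = degeneracy p := by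
    rw [map_degeneracy]
    congr 1 with n
    exact eval_X n
  have hmul : F * degeneracy X = 0 := by
    refine MvPolynomial.funext fun p => ?_
    rw [map_mul, heval, map_zero]
    by_cases hp : degeneracy p = 0
    · rw [hp, mul_zero]
    · rw [(hiff hp).2 (hzero _ _), zero_mul]
  refine (mul_eq_zero.1 hmul).resolve_right fun h₀ => degeneracy_specialPoint_ne_zero ?_
  rw [← heval, h₀, map_zero]

end SpecialLines

section Semicontinuity

variable {K V κ σ : Type*} [Field K] [AddCommGroup V] [Module K V]

lemma eq_zero_of_det_apply_basis_ne_zero {n : Type*} [Fintype n] [DecidableEq n]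
    (b : Module.Basis n K V) {f : n → Module.Dual K V}
    (hdet : (Matrix.of fun i j => f i (b j)).det ≠ 0) {v : V} (hv : ∀ i, f i v = 0) : v = 0 := by
  have hrepr : ⇑(b.repr v) = 0 := by
    refine Matrix.eq_zero_of_mulVec_eq_zero hdet (funext fun i => ?_)
    have expand := congrArg (f i) (b.sum_repr v)
    rw [hv, map_sum] at expand
    simpa [Matrix.mulVec, dotProduct, mul_comm] using expand
  simpa using hrepr

lemma exists_det_apply_basis_ne_zero [FiniteDimensional K V] {f : κ → Module.Dual K V}
    (hf : ∀ v, (∀ k, f k v = 0) → v = 0) :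
    ∃ (a : Fin (Module.finrank K V) → κ) (b : Module.Basis (Fin (Module.finrank K V)) K V),
      (Matrix.of fun i j => f (a i) (b j)).det ≠ 0 := by
  have hspan : Submodule.span K (Set.range f) = ⊤ := by
    rw [← Subspace.dualCoannihilator_dualAnnihilator_eq (W := Submodule.span K (Set.range f))]
    suffices h : (Submodule.span K (Set.range f)).dualCoannihilator = ⊥ by
      rw [h, Submodule.dualAnnihilator_bot]
    refine (Submodule.eq_bot_iff _).mpr fun v hv => hf v fun k => ?_
    exact (Submodule.mem_dualCoannihilator v).mp hv _ (Submodule.subset_span ⟨k, rfl⟩)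
  obtain ⟨ι, a, -, hrange, hli⟩ := exists_linearIndependent' K f
  let dualBasis := Module.Basis.mk hli (hrange.trans hspan).ge
  let e := dualBasis.indexEquiv ((Module.finBasis K (Module.Dual K V)).reindex
    (finCongr Subspace.dual_finrank_eq))
  let b := Module.finBasis K V
  refine ⟨a ∘ e.symm, b, ?_⟩
  have hrows := (hli.comp e.symm e.symm.injective).map' (b.constr K).symm.toLinearMap
    (LinearEquiv.ker _)
  exact ((Matrix.isUnit_iff_isUnit_det _).mp
    (Matrix.linearIndependent_rows_iff_isUnit.mp hrows)).ne_zero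

lemma exists_eval_ne_zero_and_forall_eq_zero [FiniteDimensional K V]
    (ψ : κ → V →ₗ[K] MvPolynomial σ K) {x₀ : σ → K}
    (h₀ : ∀ v, (∀ k, eval x₀ (ψ k v) = 0) → v = 0) :
    ∃ P : MvPolynomial σ K, eval x₀ P ≠ 0 ∧
      ∀ x, eval x P ≠ 0 → ∀ v, (∀ k, eval x (ψ k v) = 0) → v = 0 := by
  let value (x : σ → K) (k : κ) : Module.Dual K V := (aeval x).toLinearMap ∘ₗ ψ k
  have value_apply (x k v) : value x k v = eval x (ψ k v) := by simp [value, aeval_eq_eval]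
  obtain ⟨a, b, hdet⟩ := exists_det_apply_basis_ne_zero (f := value x₀) (by simpa [value_apply])
  have eval_det (x) : eval x (Matrix.of fun i j => ψ (a i) (b j)).det =
      (Matrix.of fun i j => value x (a i) (b j)).det := RingHom.map_det ..
  refine ⟨(Matrix.of fun i j => ψ (a i) (b j)).det, by rwa [eval_det], fun x hx v hv => ?_⟩
  rw [eval_det] at hx
  exact eq_zero_of_det_apply_basis_ne_zero b hx fun i => by rw [value_apply, hv]

end Semicontinuity

section GenericLines

instance finiteDimensional_homogeneousSubmodule {τ K : Type*} [Finite τ] [Field K] (d : ℕ) :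
    FiniteDimensional K (homogeneousSubmodule τ K d) :=
  Submodule.finiteDimensional_of_le (S₂ := restrictTotalDegree τ K d) fun F hF => by
    rw [mem_restrictTotalDegree]
    exact IsHomogeneous.totalDegree_le hF

variable {s : ℕ}

/-- The frame of the `i`-th of `s` generic lines. -/
def genericLine (i : Fin s) : Frame (MvPolynomial (Fin s × Fin 2 × Fin 4) ℂ) :=
  fun k n => X (i, k, n)

/-- The specialization of the generic lines to the frames `v`. -/
abbrev evalFrames (v : Fin s → Frame ℂ) : MvPolynomial (Fin s × Fin 2 × Fin 4) ℂ →+* ℂ :=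
  eval fun p => v p.1 p.2.1 p.2.2

lemma evalFrames_comp_genericLine (v : Fin s → Frame ℂ) :
    (fun i k => evalFrames v ∘ genericLine i k) = v := by
  ext i k n
  simp [genericLine]

lemma evalFrames_expansionCoeff (v : Fin s → Frame ℂ) (i : Fin s) (j : ℕ)
    (d : Fin 2 ⊕ Fin 4 →₀ ℕ) (F : R3) :
    evalFrames v (expansionCoeff (genericLine i) j d F) = expansionCoeff (v i) j d F := by
  have h := map_expansionCoeff (aeval fun p => v p.1 p.2.1 p.2.2) (genericLine i) j d F
  simp only [aeval_eq_eval] at h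
  exact h.trans (by rw [congrFun (evalFrames_comp_genericLine v) i])

lemma exists_evalFrames_ne_zero_and_forall_eq_zero {d : ℕ} {m : Fin s → ℕ} {p : C4}
    {l : Fin s → Frame ℂ} (hl : ∀ F : R3, F.IsHomogeneous d →
      (∀ i, VanishesToOrder (m i) (l i) F) → eval p F = 0 → F = 0) :
    ∃ P, evalFrames l P ≠ 0 ∧ ∀ v, evalFrames v P ≠ 0 →
      ∀ F ∈ linSys d (fun i => line (v i)) m, eval p F = 0 → F = 0 := by
  let V := homogeneousSubmodule (Fin 4) ℂ d
  let evalPoint : V →ₗ[ℂ] MvPolynomial (Fin s × Fin 2 × Fin 4) ℂ :=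
    (Algebra.linearMap ℂ _ ∘ₗ (aeval p).toLinearMap).domRestrict V
  let ψ (k : Option {k : Fin s × ℕ × (Fin 2 ⊕ Fin 4 →₀ ℕ) // k.2.1 < m k.1}) :=
    k.elim evalPoint fun k => (expansionCoeff (genericLine k.1.1) k.1.2.1 k.1.2.2).domRestrict V
  have eval_none (v F) : evalFrames v (ψ none F) = eval p F := by
    simp [ψ, evalPoint, aeval_eq_eval]
  have eval_some (v k F) : evalFrames v (ψ (some k) F) =
      expansionCoeff (v k.1.1) k.1.2.1 k.1.2.2 F := evalFrames_expansionCoeff ..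
  obtain ⟨P, hP, hker⟩ := exists_eval_ne_zero_and_forall_eq_zero ψ
    (x₀ := fun p => l p.1 p.2.1 p.2.2) fun F hF => Subtype.ext <| hl F F.2
      (fun i j hj e => (eval_some l ⟨(i, j, e), hj⟩ F).symm.trans (hF _))
      ((eval_none l F).symm.trans (hF none))
  refine ⟨P, hP, fun v hv F hF hp => congrArg Subtype.val (hker _ hv ⟨F, hF.1⟩ ?_)⟩
  rintro (_ | ⟨⟨i, j, e⟩, hj⟩)
  · exact (eval_none v _).trans hp
  · exact (eval_some v ⟨(i, j, e), hj⟩ _).trans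
      (vanishesToOrder_of_mem_lineIdeal_pow ((Submodule.mem_iInf _).mp hF.2 i) j hj e)

end GenericLines

section GeneralPosition

variable {K V : Type*} [Field K] [AddCommGroup V] [Module K V]

lemma linearIndependent_of_bracket_ne_zero {a b c d : Fin 4 → K}
    (h : bracket a b c d ≠ 0) : LinearIndependent K ![a, b, c, d] :=
  Matrix.linearIndependent_rows_of_det_ne_zero (A := Matrix.of ![a, b, c, d])
    (by rwa [det_eq_bracket])

lemma linearIndependent_pair_of_four {a b c d : V} (h : LinearIndependent K ![a, b, c, d]) :
    LinearIndependent K ![a, b] := by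
  convert h.comp ![0, 1] (by decide) using 1
  ext i : 1
  fin_cases i <;> rfl

lemma span_pair_inf_span_pair_eq_bot {a b c d : V} (h : LinearIndependent K ![a, b, c, d]) :
    Submodule.span K {a, b} ⊓ Submodule.span K {c, d} = ⊥ := by
  have hdisj : Disjoint ({0, 1} : Set (Fin 4)) {2, 3} := by simp
  simpa [Set.image_pair] using (h.disjoint_span_image hdisj).eq_bot

lemma finrank_eq_one_of_functional (f : Module.Dual K V) {v₀ : V} (hv₀ : f v₀ ≠ 0)
    (hf : ∀ v, f v = 0 → v = 0) : Module.finrank K V = 1 := by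
  have hne : f ≠ 0 := fun h => hv₀ (by rw [h, LinearMap.zero_apply])
  rw [(LinearEquiv.ofBijective f ⟨(injective_iff_map_eq_zero f).mpr hf,
    LinearMap.surjective hne⟩).finrank_eq, Module.finrank_self]

variable {R S : Type*} [CommRing R] [CommRing S]

/-- If this product is nonzero, then the six lines `l` are pairwise skew, `unexpectedForm l`
vanishes on the last one, and `unexpectedForm l` does not vanish at `p`. -/
def genericity (l : Fin 6 → Frame R) (p : Fin 4 → R) : R :=
  (∏ q ∈ Finset.univ.offDiag, bracket (l q.1 0) (l q.1 1) (l q.2 0) (l q.2 1)) *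
    (∏ i, quadric (l ∘ baseTriple i) (l 5 0)) * (sixLineMatrix l p).det

lemma genericity_map (f : R →+* S) (l : Fin 6 → Frame R) (p : Fin 4 → R) :
    genericity (fun i k => f ∘ l i k) (f ∘ p) = f (genericity l p) := by
  simp only [genericity, map_mul, map_prod, ← bracket_map, ← quadric_map, det_sixLineMatrix_map]
  rfl

lemma genericity_specialFrame_ne_zero : genericity specialFrame specialPoint ≠ 0 := by
  refine mul_ne_zero (mul_ne_zero ?_ ?_) ?_
  · refine Finset.prod_ne_zero_iff.mpr ?_
    decide +kernel
  · refine Finset.prod_ne_zero_iff.mpr ?_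
    decide +kernel
  · rw [← Matrix.det_submatrix_equiv_self finSumFinEquiv.symm, det_eq_bracket]
    decide +kernel

lemma genericity_specialLine_ne_zero :
    genericity specialLine (fun n => (specialPoint n : ℂ)) ≠ 0 := by
  have h := genericity_map (Int.castRingHom ℂ) specialFrame specialPoint
  exact h ▸ Int.cast_ne_zero.mpr genericity_specialFrame_ne_zero

lemma evalFrames_genericity (v : Fin 6 → Frame ℂ) (p : C4) :
    evalFrames v (genericity genericLine (C ∘ p)) = genericity v p := by
  rw [← genericity_map, evalFrames_comp_genericLine]
  congr 1
  ext n
  simp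

variable {l : Fin 6 → Frame ℂ} {p : C4}

lemma linearIndependent_of_genericity_ne_zero (h : genericity l p ≠ 0) {i j : Fin 6}
    (hij : i ≠ j) : LinearIndependent ℂ ![l i 0, l i 1, l j 0, l j 1] := by
  have hprod := left_ne_zero_of_mul (left_ne_zero_of_mul h)
  exact linearIndependent_of_bracket_ne_zero
    (Finset.prod_ne_zero_iff.mp hprod (i, j) (by simp [hij]))

lemma unexpectedForm_mem_linSys_of_genericity_ne_zero (h : genericity l p ≠ 0) :
    unexpectedForm l ∈ linSys 20 (fun i => line (l i)) ![6, 6, 6, 6, 6, 1] :=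
  unexpectedForm_mem_linSys fun i => Finset.prod_ne_zero_iff.mp
    (right_ne_zero_of_mul (left_ne_zero_of_mul h)) i (Finset.mem_univ i)

lemma eval_unexpectedForm_ne_zero (h : genericity l p ≠ 0) : eval p (unexpectedForm l) ≠ 0 := by
  rw [eval_unexpectedForm]
  exact right_ne_zero_of_mul h

lemma finrank_linSys_eq_one (h : genericity l p ≠ 0)
    (hp : ∀ F ∈ linSys 20 (fun i => line (l i)) ![6, 6, 6, 6, 6, 1], eval p F = 0 → F = 0) :
    Module.finrank ℂ (linSys 20 (fun i => line (l i)) ![6, 6, 6, 6, 6, 1]) = 1 := by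
  refine finrank_eq_one_of_functional ((aeval p).toLinearMap.domRestrict _)
    (v₀ := ⟨_, unexpectedForm_mem_linSys_of_genericity_ne_zero h⟩) ?_ fun F hF => ?_
  · simpa [aeval_eq_eval] using eval_unexpectedForm_ne_zero h
  · exact Subtype.ext (hp F F.2 (by simpa [aeval_eq_eval] using hF))

end GeneralPosition

end SixLines

open SixLines

/-- The system `𝓛_{20}(6,6,6,6,6,1)` for six general lines has dimension
exactly 1, yet `binom(23,3) = 1771 < 1876 = 5·371 + 21`, so it has negative
virtual dimension and is special (unexpected). -/
theorem stmt_9 :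
    GeneralLines 6 (fun L =>
      Module.finrank ℂ ↥(linSys 20 L ![6, 6, 6, 6, 6, 1]) = 1) ∧
    Nat.choose 23 3 < 5 * 371 + 21 := by
  obtain ⟨P, hP, hunique⟩ := exists_evalFrames_ne_zero_and_forall_eq_zero
    fun _ => eq_zero_of_vanishesToOrder_specialLine
  let p : C4 := fun n => specialPoint n
  have heval (v : Fin 6 → Frame ℂ) :
      evalFrames v (genericity genericLine (C ∘ p) * P) = genericity v p * evalFrames v P := by
    rw [map_mul, evalFrames_genericity]
  refine ⟨⟨genericity genericLine (C ∘ p) * P, ?_, fun v hv => ?_⟩, by decide⟩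
  · refine ne_zero_of_map (f := evalFrames specialLine) ?_
    rw [heval]
    exact mul_ne_zero genericity_specialLine_ne_zero hP
  · obtain ⟨hgen, hPv⟩ := mul_ne_zero_iff.mp ((heval v).symm.trans_ne hv)
    refine ⟨fun i => ?_, fun i j hij => ?_, finrank_linSys_eq_one hgen (hunique v hPv)⟩
    · obtain ⟨j, hj⟩ := exists_ne i
      exact linearIndependent_pair_of_four (linearIndependent_of_genericity_ne_zero hgen hj.symm)
    · exact span_pair_inf_span_pair_eq_bot (linearIndependent_of_genericity_ne_zero hgen hij)
end
end

section
/- Let L_1,…,L_6 ⊆ ℂ^4 be 2-dimensional linear subspaces (lines in P^3) which are pairwise disjoint. Then there exists a nonzero homogeneous polynomial F of degree 12 in ℂ[x_0,x_1,x_2,x_3] with F ∈ I(L_1)^4 and F ∈ I(L_i)^3 for i = 2,…,6; that is, for every configuration of six pairwise skew lines there is a surface of degree 12 vanishing to order 4 along the first line and to order 3 along the remaining five. -/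
open MvPolynomial

noncomputable section

/-!
Choose coordinates `(u, v)` on `K ^ 2 × K ^ 2` in which the first line is `u = 0`, the second is
`v = 0` and the other four are graphs `v = A i u`. A quadric through the first line and two graphs
times a quadric through the second line and the other two graphs is a quartic through all six lines;
five of these are used. Modulo the square of the ideal of the first line, each of them is `u 0` and
`u 1` times binary cubics in `v`, so multiplying by the three quadratic monomials in `v` gives
`15` elements of a space of dimension `12`, and hence three relations whose coefficients are binary
quadratic forms in `v`. Sorting the relations by these monomials gives a `3 × 3` matrix of quartics
in the span of the five. Its determinant has degree `12` and vanishes to order three on every line;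
by Cramer's rule, the relations provide one more order on the first line.

For special lines the determinant may vanish identically. It does not for one explicit integral
configuration, so it is nonzero generically on the line joining that configuration to the given one.
Dividing by the largest possible power of the parameter and specializing preserves all
multiplicities, since the powers of the ideal of a line are primary.
-/

namespace SkewLines

open scoped Matrix

section Comap

variable {S S' F : Type*} [CommSemiring S] [CommSemiring S'] [FunLike F S S'] [RingHomClass F S S']

lemma map_mem_pow_of_le_comap {f : F} {I : Ideal S} {J : Ideal S'} (hIJ : I ≤ J.comap f) {x : S}
    {k : ℕ} (hx : x ∈ I ^ k) : f x ∈ J ^ k :=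
  Ideal.le_comap_pow f k (Ideal.pow_right_mono hIJ k hx)

end Comap

section Retraction

variable {σ R : Type*} [CommRing R]

/-- The deformation `X i ↦ π (X i) + t (X i - π (X i))` from `π` at `t = 0` to the identity at
`t = 1`. When `π` is a retraction with kernel `J`, its coefficient at `t ^ k` lies in `J ^ k`. -/
def retractionHomotopy (π : MvPolynomial σ R →ₐ[R] MvPolynomial σ R) :
    MvPolynomial σ R →ₐ[R] Polynomial (MvPolynomial σ R) :=
  aeval fun i => .C (π (X i)) + .X * .C (X i - π (X i))

variable {π : MvPolynomial σ R →ₐ[R] MvPolynomial σ R} {J : Ideal (MvPolynomial σ R)}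

lemma eval_one_retractionHomotopy (p : MvPolynomial σ R) :
    (retractionHomotopy π p).eval 1 = p := by
  have : ((Polynomial.aeval (1 : MvPolynomial σ R)).restrictScalars R).comp
      (retractionHomotopy π) = AlgHom.id R _ := by
    ext i; simp [retractionHomotopy]
  simpa [Polynomial.coe_aeval_eq_eval] using DFunLike.congr_fun this p

lemma coeff_zero_retractionHomotopy (p : MvPolynomial σ R) :
    (retractionHomotopy π p).coeff 0 = π p := by
  have : ((Polynomial.aeval (0 : MvPolynomial σ R)).restrictScalars R).comp
      (retractionHomotopy π) = π := by
    ext i; simp [retractionHomotopy]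
  simpa [Polynomial.coe_aeval_eq_eval, Polynomial.coeff_zero_eq_eval_zero] using
    DFunLike.congr_fun this p

lemma retractionHomotopy_mem_reesAlgebra (hX : ∀ i, X i - π (X i) ∈ J) (p : MvPolynomial σ R) :
    retractionHomotopy π p ∈ reesAlgebra J := by
  induction p using MvPolynomial.induction_on with
  | C r =>
    rw [← algebraMap_eq, AlgHom.commutes]
    exact (reesAlgebra J).algebraMap_mem (algebraMap R _ r)
  | add p q hp hq => simpa only [map_add] using add_mem hp hq
  | mul_X p i hp =>
    have hlin : Polynomial.X * Polynomial.C (X i - π (X i)) ∈ reesAlgebra J := by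
      simpa only [Polynomial.X_mul_C, Polynomial.C_mul_X_eq_monomial] using
        reesAlgebra.monomial_mem.2 (by simpa only [pow_one] using hX i)
    rw [map_mul, retractionHomotopy, aeval_X]
    exact mul_mem hp (add_mem ((reesAlgebra J).algebraMap_mem _) hlin)

lemma X_pow_dvd_retractionHomotopy (hJ : J ≤ RingHom.ker π) {m : ℕ} {p : MvPolynomial σ R}
    (hp : p ∈ J ^ m) : Polynomial.X ^ m ∣ retractionHomotopy π p := by
  have hle : J ≤ (Ideal.span {Polynomial.X}).comap (retractionHomotopy π) := fun g hg => by
    rw [Ideal.mem_comap, Ideal.mem_span_singleton, Polynomial.X_dvd_iff,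
      coeff_zero_retractionHomotopy]
    exact hJ hg
  simpa only [Ideal.span_singleton_pow, Ideal.mem_span_singleton] using
    map_mem_pow_of_le_comap hle hp

/-- The kernel of a retraction has primary powers: the order of vanishing of the homotopy at
`t = 0` detects the powers of `J`, and this order is additive. -/
theorem mem_pow_of_mul_mem_pow [IsDomain R] (hX : ∀ i, X i - π (X i) ∈ J)
    (hJ : J ≤ RingHom.ker π) {c p : MvPolynomial σ R} (hc : π c ≠ 0) {m : ℕ}
    (hcp : c * p ∈ J ^ m) : p ∈ J ^ m := by
  have hc' : ¬ Polynomial.X ∣ retractionHomotopy π c := by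
    rwa [Polynomial.X_dvd_iff, coeff_zero_retractionHomotopy]
  have hdvd : Polynomial.X ^ m ∣ retractionHomotopy π p := by
    refine Polynomial.prime_X.pow_dvd_of_dvd_mul_left m hc' ?_
    rw [← map_mul]
    exact X_pow_dvd_retractionHomotopy hJ hcp
  rw [← eval_one_retractionHomotopy (π := π) p, Polynomial.eval_eq_sum_range]
  refine Ideal.sum_mem _ fun k _ => Ideal.mul_mem_right _ _ ?_
  obtain hk | hk := lt_or_ge k m
  · rw [Polynomial.X_pow_dvd_iff.1 hdvd k hk]
    exact zero_mem _
  · exact Ideal.pow_le_pow_right hk (retractionHomotopy_mem_reesAlgebra hX p k)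

end Retraction

section Graph

variable {m n R S : Type*} [CommRing R] [CommRing S]

variable (m n R) in
/-- The ideal of the subspace `u = 0` of the space with coordinates `u : m → R`, `v : n → R`. -/
def axisIdeal : Ideal (MvPolynomial (m ⊕ n) R) :=
  Ideal.span (Set.range fun i => X (.inl i))

lemma map_axisIdeal (f : R →+* S) : (axisIdeal m n R).map (map f) = axisIdeal m n S := by
  rw [axisIdeal, Ideal.map_span, ← Set.range_comp]
  simp only [axisIdeal, Function.comp_def, map_X]

lemma mem_axisIdeal_pow_of_mul_mem [IsDomain R] {c p : MvPolynomial (m ⊕ n) R}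
    (hc : aeval (Sum.elim 0 fun j => X (.inr j)) c ≠ (0 : MvPolynomial (m ⊕ n) R)) {k : ℕ}
    (hcp : c * p ∈ axisIdeal m n R ^ k) : p ∈ axisIdeal m n R ^ k := by
  refine mem_pow_of_mul_mem_pow ?_ (Ideal.span_le.2 ?_) hc hcp
  · rintro (i | j)
    · simpa using Ideal.subset_span (Set.mem_range_self i)
    · simp
  · rintro _ ⟨i, rfl⟩
    simp

variable [Fintype m]

/-- The ideal of the graph `v = A u` in the space with coordinates `u : m → R`, `v : n → R`. -/
def graphIdeal (A : Matrix n m R) : Ideal (MvPolynomial (m ⊕ n) R) :=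
  Ideal.span (Set.range fun j => X (.inr j) - (A.map C *ᵥ fun i => X (.inl i)) j)

lemma map_graphIdeal (f : R →+* S) (A : Matrix n m R) :
    (graphIdeal A).map (map f) = graphIdeal (A.map f) := by
  rw [graphIdeal, Ideal.map_span, ← Set.range_comp, graphIdeal]
  simp [Function.comp_def, Matrix.mulVec, dotProduct]

lemma mem_graphIdeal_pow_of_C_mul_mem [IsDomain R] {A : Matrix n m R} {r : R} (hr : r ≠ 0)
    {p : MvPolynomial (m ⊕ n) R} {k : ℕ} (hp : C r * p ∈ graphIdeal A ^ k) :
    p ∈ graphIdeal A ^ k := by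
  let π : MvPolynomial (m ⊕ n) R →ₐ[R] MvPolynomial (m ⊕ n) R :=
    aeval (Sum.elim (fun i => X (.inl i)) (A.map C *ᵥ fun i => X (.inl i)))
  refine mem_pow_of_mul_mem_pow (π := π) ?_ (Ideal.span_le.2 ?_) ?_ hp
  · rintro (i | j)
    · simp [π]
    · simpa [π] using Ideal.subset_span (Set.mem_range_self j)
  · rintro _ ⟨j, rfl⟩
    simp [π, Matrix.mulVec, dotProduct]
  · simpa [π] using hr

end Graph

section Specialization

variable {σ K : Type*} [Field K]

lemma exists_eq_C_pow_mul_and_map_ne_zero {F : MvPolynomial σ (Polynomial K)} (hF : F ≠ 0)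
    (a : K) : ∃ (k : ℕ) (G : MvPolynomial σ (Polynomial K)),
      F = C ((.X - .C a) ^ k) * G ∧ map (Polynomial.evalRingHom a) G ≠ 0 := by
  have hunit : ¬ IsUnit (C (.X - .C a) : MvPolynomial σ (Polynomial K)) := fun h =>
    Polynomial.not_isUnit_X_sub_C a (by simpa using (isUnit_iff.1 h).1)
  obtain ⟨k, G, hG, hFG⟩ := WfDvdMonoid.max_power_factor' hF hunit
  refine ⟨k, G, by rwa [C_pow], fun h => hG ?_⟩
  refine (C_dvd_iff_map_hom_eq_zero (Polynomial.evalRingHom a) _ (fun p => ?_) G).2 h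
  exact Polynomial.dvd_iff_isRoot.symm

/-- The flat limit at `s = a` of the family of forms `F`. -/
theorem exists_specialization {m n : Type*} [Fintype m]
    {F : MvPolynomial (m ⊕ n) (Polynomial K)} (hF : F ≠ 0) (a : K) :
    ∃ G : MvPolynomial (m ⊕ n) K, G ≠ 0 ∧ (∀ d, F.IsHomogeneous d → G.IsHomogeneous d) ∧
      (∀ k, F ∈ axisIdeal m n (Polynomial K) ^ k → G ∈ axisIdeal m n K ^ k) ∧
      ∀ k A, F ∈ graphIdeal A ^ k → G ∈ graphIdeal (A.map (Polynomial.eval a)) ^ k := by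
  obtain ⟨N, G, rfl, hG⟩ := exists_eq_C_pow_mul_and_map_ne_zero hF a
  have hs : (Polynomial.X - Polynomial.C a) ^ N ≠ 0 :=
    pow_ne_zero _ (Polynomial.X_sub_C_ne_zero a)
  refine ⟨map (Polynomial.evalRingHom a) G, hG, fun d hd => ?_, fun k hk => ?_, fun k A hk => ?_⟩
  · refine IsHomogeneous.map (fun e he => hd ?_) _
    rw [coeff_C_mul]
    exact mul_ne_zero hs he
  · rw [← map_axisIdeal (Polynomial.evalRingHom a), ← Ideal.map_pow]
    exact Ideal.mem_map_of_mem _ (mem_axisIdeal_pow_of_mul_mem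
      (by rwa [algHom_C, algebraMap_eq, Ne, C_eq_zero]) hk)
  · have := Ideal.mem_map_of_mem (map (Polynomial.evalRingHom a))
      (mem_graphIdeal_pow_of_C_mul_mem hs hk)
    rwa [Ideal.map_pow, map_graphIdeal] at this

end Specialization

section Determinants

variable {n S : Type*} [Fintype n] [DecidableEq n] [CommRing S]

lemma det_mem_pow {J : Ideal S} {N : Matrix n n S} (hN : ∀ i j, N i j ∈ J) :
    N.det ∈ J ^ Fintype.card n := by
  rw [Matrix.det_apply]
  refine Ideal.sum_mem _ fun g _ => zsmul_mem ?_ _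
  simpa only [Finset.prod_const, Finset.card_univ] using
    Ideal.prod_mem_prod (s := Finset.univ) (I := fun _ => J) fun i _ => hN (g i) i

lemma mul_det_mem_pow {m : ℕ} {J : Ideal S} {N : Matrix (Fin (m + 1)) (Fin (m + 1)) S}
    (hN : ∀ i j, N i j ∈ J) {w : Fin (m + 1) → S} (hw : ∀ i, (N *ᵥ w) i ∈ J ^ 2)
    (i : Fin (m + 1)) : w i * N.det ∈ J ^ (m + 2) := by
  have hadj : ∀ j, N.adjugate i j ∈ J ^ m := fun j => by
    rw [Matrix.adjugate_fin_succ_eq_det_submatrix]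
    have hminor := det_mem_pow (N := N.submatrix j.succAbove i.succAbove) fun k l => hN _ _
    rw [Fintype.card_fin] at hminor
    exact Ideal.mul_mem_left _ _ hminor
  have hcramer : w i * N.det = ∑ j, N.adjugate i j * (N *ᵥ w) j := by
    change _ = (N.adjugate *ᵥ N *ᵥ w) i
    rw [Matrix.mulVec_mulVec, Matrix.adjugate_mul, Matrix.smul_mulVec, Matrix.one_mulVec,
      Pi.smul_apply, smul_eq_mul, mul_comm]
  rw [hcramer, pow_add]
  exact Ideal.sum_mem _ fun j _ => Ideal.mul_mem_mul (hadj j) (hw j)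

lemma isHomogeneous_det {σ : Type*} {d : ℕ} {N : Matrix n n (MvPolynomial σ S)}
    (hN : ∀ i j, (N i j).IsHomogeneous d) : N.det.IsHomogeneous (Fintype.card n * d) := by
  rw [Matrix.det_apply]
  refine IsHomogeneous.sum _ _ _ fun g _ => ?_
  have hprod : (∏ i, N (g i) i).IsHomogeneous (Fintype.card n * d) := by
    simpa using IsHomogeneous.prod Finset.univ _ _ fun i _ => hN (g i) i
  exact zsmul_mem (K := homogeneousSubmodule σ S _) hprod _

end Determinants

section CramerKernel

variable {m n S S' : Type*} [Fintype m] [DecidableEq m] [Fintype n] [CommRing S] [CommRing S']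

/-- The correction of `det (M T) w` by an element of the image of `T` which, by Cramer's rule,
lies in the kernel of `M`. Unlike a basis of the kernel, it is natural in the ring `S`. -/
def cramerKernel (M : Matrix m n S) (T : Matrix n m S) (w : n → S) : n → S :=
  (M * T).det • w - T *ᵥ (M * T).adjugate *ᵥ M *ᵥ w

lemma mulVec_cramerKernel (M : Matrix m n S) (T : Matrix n m S) (w : n → S) :
    M *ᵥ cramerKernel M T w = 0 := by
  rw [cramerKernel, Matrix.mulVec_sub, Matrix.mulVec_smul, Matrix.mulVec_mulVec,
    Matrix.mulVec_mulVec, Matrix.mul_adjugate, Matrix.smul_mulVec, Matrix.one_mulVec, sub_self]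

lemma map_cramerKernel (f : S →+* S') (M : Matrix m n S) (T : Matrix n m S) (w : n → S) :
    f ∘ cramerKernel M T w = cramerKernel (M.map f) (T.map f) (f ∘ w) := by
  have hdet : f (M * T).det = (M.map f * T.map f).det := by
    rw [← Matrix.map_mul]
    exact RingHom.map_det f (M * T)
  have hadj : (M * T).adjugate.map f = (M.map f * T.map f).adjugate := by
    rw [← Matrix.map_mul]
    exact RingHom.map_adjugate f (M * T)
  have hM : f ∘ (M *ᵥ w) = M.map f *ᵥ (f ∘ w) := funext (RingHom.map_mulVec f M w)
  have hadjM : f ∘ ((M * T).adjugate *ᵥ M *ᵥ w) =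
      (M.map f * T.map f).adjugate *ᵥ M.map f *ᵥ (f ∘ w) := by
    rw [← hadj, ← hM]
    exact funext (RingHom.map_mulVec f _ _)
  funext i
  rw [cramerKernel, cramerKernel, ← hdet, ← hadjM, Function.comp_apply, Pi.sub_apply, map_sub,
    RingHom.map_mulVec]
  simp only [Pi.sub_apply, Pi.smul_apply, smul_eq_mul, map_mul, Function.comp_apply]

lemma cramerKernel_of_mul_eq_smul_one [Nonempty m] {M : Matrix m n S} {T : Matrix n m S} {c : S}
    (hMT : M * T = c • 1) (w : n → S) :
    cramerKernel M T w = c ^ (Fintype.card m - 1) • (c • w - T *ᵥ M *ᵥ w) := by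
  rw [cramerKernel, hMT, Matrix.det_smul, Matrix.det_one, Matrix.adjugate_smul,
    Matrix.adjugate_one, Matrix.smul_mulVec, Matrix.one_mulVec, Matrix.mulVec_smul, smul_sub,
    smul_smul, ← pow_succ, Nat.sub_add_cancel Fintype.card_pos, mul_one]

end CramerKernel

section Wedge

variable {S S' : Type*} [CommRing S] [CommRing S']

/-- The area form `p ∧ q` on the plane. -/
def wedge (p q : Fin 2 → S) : S := p 0 * q 1 - p 1 * q 0

lemma map_wedge (f : S →+* S') (p q : Fin 2 → S) : f (wedge p q) = wedge (f ∘ p) (f ∘ q) := by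
  simp [wedge]

lemma wedge_mem_left {I : Ideal S} {p : Fin 2 → S} (hp : ∀ j, p j ∈ I) (q : Fin 2 → S) :
    wedge p q ∈ I :=
  sub_mem (I.mul_mem_right _ (hp 0)) (I.mul_mem_right _ (hp 1))

lemma wedge_mem_right {I : Ideal S} (p : Fin 2 → S) {q : Fin 2 → S} (hq : ∀ j, q j ∈ I) :
    wedge p q ∈ I :=
  sub_mem (I.mul_mem_left _ (hq 1)) (I.mul_mem_left _ (hq 0))

lemma wedge_mem_sq {J : Ideal S} {p q : Fin 2 → S} (hp : ∀ j, p j ∈ J) (hq : ∀ j, q j ∈ J) :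
    wedge p q ∈ J ^ 2 := by
  rw [sq]
  exact sub_mem (Ideal.mul_mem_mul (hp 0) (hq 1)) (Ideal.mul_mem_mul (hp 1) (hq 0))

lemma isHomogeneous_wedge {σ : Type*} {p q : Fin 2 → MvPolynomial σ S} {d e : ℕ}
    (hp : ∀ j, (p j).IsHomogeneous d) (hq : ∀ j, (q j).IsHomogeneous e) :
    (wedge p q).IsHomogeneous (d + e) :=
  ((hp 0).mul (hq 1)).sub ((hp 1).mul (hq 0))

lemma mulVec_mem {m n : Type*} [Fintype n] {I : Ideal S} (M : Matrix m n S) {x : n → S}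
    (hx : ∀ j, x j ∈ I) (i : m) : (M *ᵥ x) i ∈ I :=
  Ideal.sum_mem _ fun j _ => I.mul_mem_left _ (hx j)

end Wedge

section Quartics

variable {S S' : Type*} [CommRing S] [CommRing S']

/-- The quadric through the lines `u = 0`, `v = A u` and `v = B u`. -/
def verticalQuadric (A B : Matrix (Fin 2) (Fin 2) S) (u v : Fin 2 → S) : S :=
  wedge (v - A *ᵥ u) (v - B *ᵥ u)

/-- The quadric through the lines `v = 0`, `v = A u` and `v = B u`. -/
def horizontalQuadric (A B : Matrix (Fin 2) (Fin 2) S) (u v : Fin 2 → S) : S :=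
  wedge (A.adjugate *ᵥ (v - A *ᵥ u)) (B.adjugate *ᵥ (v - B *ᵥ u))

lemma horizontalQuadric_eq (A B : Matrix (Fin 2) (Fin 2) S) (u v : Fin 2 → S) :
    horizontalQuadric A B u v = wedge (A.adjugate *ᵥ v) (B.adjugate *ᵥ v) -
      A.det * wedge u (B.adjugate *ᵥ v) - B.det * wedge (A.adjugate *ᵥ v) u := by
  simp only [horizontalQuadric, Matrix.mulVec_sub, Matrix.mulVec_mulVec, Matrix.adjugate_mul,
    Matrix.smul_mulVec, Matrix.one_mulVec]
  simp only [wedge, Pi.sub_apply, Pi.smul_apply, smul_eq_mul]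
  ring

lemma verticalQuadric_eq (A B : Matrix (Fin 2) (Fin 2) S) (u v : Fin 2 → S) :
    verticalQuadric A B u v = wedge v ((A - B) *ᵥ u) + wedge (A *ᵥ u) (B *ᵥ u) := by
  simp only [verticalQuadric, Matrix.sub_mulVec, wedge, Pi.sub_apply]
  ring

/-- Five of the six ways of dividing four lines into the pair on the vertical quadric and the
pair on the horizontal quadric. -/
def splitting : Fin 5 → Fin 4 → Fin 4 :=
  ![![0, 1, 2, 3], ![0, 2, 1, 3], ![0, 3, 1, 2], ![1, 2, 0, 3], ![1, 3, 0, 2]]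

variable (A : Fin 4 → Matrix (Fin 2) (Fin 2) S)

/-- Five quartics through the lines `u = 0`, `v = 0` and `v = A i u`. -/
def quartic (k : Fin 5) (u v : Fin 2 → S) : S :=
  verticalQuadric (A (splitting k 0)) (A (splitting k 1)) u v *
    horizontalQuadric (A (splitting k 2)) (A (splitting k 3)) u v

variable {A} {u v : Fin 2 → S}

lemma map_quartic (f : S →+* S') (k : Fin 5) :
    f (quartic A k u v) = quartic (fun i => (A i).map f) k (f ∘ u) (f ∘ v) := by
  simp [quartic, verticalQuadric, horizontalQuadric, wedge, Matrix.mulVec, dotProduct,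
    Matrix.adjugate_fin_two]

lemma quartic_mem_of_v_mem {I : Ideal S} (hv : ∀ j, v j ∈ I) (k : Fin 5) :
    quartic A k u v ∈ I := by
  refine I.mul_mem_left _ ?_
  rw [horizontalQuadric_eq]
  have hadj (B : Matrix (Fin 2) (Fin 2) S) := mulVec_mem B.adjugate hv
  exact sub_mem (sub_mem (wedge_mem_left (hadj _) _)
    (I.mul_mem_left _ (wedge_mem_right _ (hadj _)))) (I.mul_mem_left _ (wedge_mem_left (hadj _) _))

lemma quartic_mem_of_graph_mem {I : Ideal S} {i : Fin 4} (hi : ∀ j, (v - A i *ᵥ u) j ∈ I)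
    (k : Fin 5) : quartic A k u v ∈ I := by
  have hadj := mulVec_mem (A i).adjugate hi
  have hsplit : ∀ k i, ∃ p, splitting k p = i := by decide
  obtain ⟨p, rfl⟩ := hsplit k i
  fin_cases p
  · exact I.mul_mem_right _ (wedge_mem_left hi _)
  · exact I.mul_mem_right _ (wedge_mem_right _ hi)
  · exact I.mul_mem_left _ (wedge_mem_left hadj _)
  · exact I.mul_mem_left _ (wedge_mem_right _ hadj)

lemma quartic_mem_of_u_mem {J : Ideal S} (hu : ∀ j, u j ∈ J) (k : Fin 5) :
    quartic A k u v ∈ J := by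
  refine J.mul_mem_right _ ?_
  rw [verticalQuadric_eq]
  exact add_mem (wedge_mem_right _ (mulVec_mem _ hu)) (wedge_mem_left (mulVec_mem _ hu) _)

variable (A u v) in
/-- The part of `quartic A k u v` which is linear in `u`. -/
def conormalQuartic (k : Fin 5) : S :=
  wedge v ((A (splitting k 0) - A (splitting k 1)) *ᵥ u) *
    wedge ((A (splitting k 2)).adjugate *ᵥ v) ((A (splitting k 3)).adjugate *ᵥ v)

lemma quartic_sub_conormalQuartic_mem {J : Ideal S} (hu : ∀ j, u j ∈ J) (k : Fin 5) :
    quartic A k u v - conormalQuartic A u v k ∈ J ^ 2 := by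
  rw [quartic, conormalQuartic, verticalQuadric_eq, horizontalQuadric_eq]
  set a := (A (splitting k 2)).det
  set b := (A (splitting k 3)).det
  set p := wedge v ((A (splitting k 0) - A (splitting k 1)) *ᵥ u)
  set p' := wedge (A (splitting k 0) *ᵥ u) (A (splitting k 1) *ᵥ u)
  set q := wedge ((A (splitting k 2)).adjugate *ᵥ v) ((A (splitting k 3)).adjugate *ᵥ v)
  set q₁ := wedge u ((A (splitting k 3)).adjugate *ᵥ v)
  set q₂ := wedge ((A (splitting k 2)).adjugate *ᵥ v) u
  have hp : p ∈ J := wedge_mem_right _ (mulVec_mem _ hu)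
  have hp' : p' ∈ J ^ 2 := wedge_mem_sq (mulVec_mem _ hu) (mulVec_mem _ hu)
  have hq₁ : p * q₁ ∈ J ^ 2 := sq J ▸ Ideal.mul_mem_mul hp (wedge_mem_left hu _)
  have hq₂ : p * q₂ ∈ J ^ 2 := sq J ▸ Ideal.mul_mem_mul hp (wedge_mem_right _ hu)
  have hdiff : (p + p') * (q - a * q₁ - b * q₂) - p * q =
      p' * (q - a * q₁ - b * q₂) - a * (p * q₁) - b * (p * q₂) := by ring
  rw [hdiff]
  exact sub_mem (sub_mem (Ideal.mul_mem_right _ _ hp') (Ideal.mul_mem_left _ _ hq₁))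
    (Ideal.mul_mem_left _ _ hq₂)

lemma isHomogeneous_quartic {R : Type*} [CommRing R] (B : Fin 4 → Matrix (Fin 2) (Fin 2) R)
    (k : Fin 5) : (quartic (fun i => (B i).map C) k (fun i => X (.inl i)) fun j => X (.inr j) :
      MvPolynomial (Fin 2 ⊕ Fin 2) R).IsHomogeneous 4 := by
  have hmulVec (M : Matrix (Fin 2) (Fin 2) R) {x : Fin 2 → MvPolynomial (Fin 2 ⊕ Fin 2) R}
      (hx : ∀ j, (x j).IsHomogeneous 1) (i : Fin 2) : ((M.map C *ᵥ x) i).IsHomogeneous 1 :=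
    IsHomogeneous.sum _ _ _ fun j _ => (hx j).C_mul _
  have hgraph (i : Fin 4) (j : Fin 2) : (X (.inr j) - ((B i).map C *ᵥ fun i => X (.inl i)) j :
      MvPolynomial (Fin 2 ⊕ Fin 2) R).IsHomogeneous 1 :=
    (isHomogeneous_X _ _).sub (hmulVec _ (fun _ => isHomogeneous_X _ _) j)
  have hadj (M : Matrix (Fin 2) (Fin 2) R) : (M.map C).adjugate = M.adjugate.map C :=
    (RingHom.map_adjugate (C : R →+* MvPolynomial (Fin 2 ⊕ Fin 2) R) M).symm
  rw [quartic, verticalQuadric, horizontalQuadric]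
  refine (isHomogeneous_wedge (d := 1) (e := 1) (hgraph _) (hgraph _)).mul
    (isHomogeneous_wedge (d := 1) (e := 1) ?_ ?_) <;>
  · intro j
    rw [hadj]
    exact hmulVec _ (hgraph _) j

end Quartics

section Syzygies

variable {S S' : Type*} [CommRing S] [CommRing S']

/-- The monomials of degree `d` in two variables. -/
def binaryMonomial (d : ℕ) (v : Fin 2 → S) (i : Fin (d + 1)) : S :=
  v 0 ^ (d - i : ℕ) * v 1 ^ (i : ℕ)

variable (A : Fin 4 → Matrix (Fin 2) (Fin 2) S)

/-- The coefficients, as a binary cubic in `v`, of `u e` in `conormalQuartic A u v k`. -/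
def conormalCoeff (k : Fin 5) (e : Fin 2) : Fin 4 → S :=
  let w := (A (splitting k 0) - A (splitting k 1)).col e
  let P := (A (splitting k 2)).adjugate.col
  let Q := (A (splitting k 3)).adjugate.col
  let q₀ := wedge (P 0) (Q 0)
  let q₁ := wedge (P 0) (Q 1) + wedge (P 1) (Q 0)
  let q₂ := wedge (P 1) (Q 1)
  ![w 1 * q₀, w 1 * q₁ - w 0 * q₀, w 1 * q₂ - w 0 * q₁, -w 0 * q₂]

lemma conormalQuartic_eq_sum (u v : Fin 2 → S) (k : Fin 5) :
    conormalQuartic A u v k =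
      ∑ e, u e * ∑ t, binaryMonomial 3 v t * conormalCoeff A k e t := by
  have hsum (f : Fin (3 + 1) → S) : ∑ t, f t = f 0 + f 1 + f 2 + f 3 := Fin.sum_univ_four f
  simp only [conormalQuartic, conormalCoeff, binaryMonomial, wedge, Fin.sum_univ_two, hsum,
    Matrix.mulVec, dotProduct, Matrix.sub_apply, Matrix.col_apply, Matrix.cons_val,
    Fin.coe_ofNat_eq_mod]
  ring

/-- The matrix whose kernel consists of the relations `∑ c (k, l) * v ^ l * (quartic k) ≡ 0` modulo
the square of the ideal of `u = 0`, with coefficients of degree two in `v`. -/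
def syzygyMatrix : Matrix (Fin 2 × Fin 6) (Fin 5 × Fin 3) S :=
  Matrix.of fun em kl => ∑ t : Fin 4,
    if (kl.2 + t : ℕ) = em.2 then conormalCoeff A kl.1 em.1 t else 0

variable {A}

lemma map_syzygyMatrix (f : S →+* S') :
    (syzygyMatrix A).map f = syzygyMatrix fun i => (A i).map f := by
  have hcoeff (k : Fin 5) (e : Fin 2) (t : Fin 4) :
      f (conormalCoeff A k e t) = conormalCoeff (fun i => (A i).map f) k e t := by
    fin_cases t <;> simp [conormalCoeff, wedge, Matrix.adjugate_fin_two]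
  ext em kl
  simp only [syzygyMatrix, Matrix.map_apply, Matrix.of_apply, map_sum, apply_ite f, map_zero,
    hcoeff]

lemma vecMul_syzygyMatrix (u v : Fin 2 → S) (kl : Fin 5 × Fin 3) :
    ((fun em => u em.1 * binaryMonomial 5 v em.2) ᵥ* syzygyMatrix A) kl =
      binaryMonomial 2 v kl.2 * conormalQuartic A u v kl.1 := by
  have hshift (t : Fin 4) (c : S) :
      ∑ m : Fin 6, binaryMonomial 5 v m * (if (kl.2 + t : ℕ) = m then c else 0) =
        binaryMonomial 2 v kl.2 * (binaryMonomial 3 v t * c) := by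
    rw [Finset.sum_eq_single ⟨kl.2 + t, by omega⟩ (fun m _ hm => ?_) (by simp), if_pos rfl]
    · have hexp : 5 - (kl.2 + t : ℕ) = (2 - kl.2) + (3 - t) := by omega
      simp only [binaryMonomial, hexp, pow_add]
      ring
    · rw [if_neg fun h => hm (Fin.ext h.symm), mul_zero]
  simp only [Matrix.vecMul, dotProduct, syzygyMatrix, Matrix.of_apply, Fintype.sum_prod_type,
    conormalQuartic_eq_sum, Finset.mul_sum]
  refine Finset.sum_congr rfl fun e _ => ?_
  rw [Finset.sum_comm]
  refine Finset.sum_congr rfl fun t _ => ?_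
  rw [mul_left_comm, ← hshift, Finset.mul_sum]
  simp only [mul_assoc]

lemma sum_binaryMonomial_mul_quartic_mem {J : Ideal S} {u v : Fin 2 → S} (hu : ∀ j, u j ∈ J)
    {c : Fin 5 × Fin 3 → S} (hc : syzygyMatrix A *ᵥ c = 0) :
    ∑ kl, binaryMonomial 2 v kl.2 * quartic A kl.1 u v * c kl ∈ J ^ 2 := by
  have hzero : ∑ kl, binaryMonomial 2 v kl.2 * conormalQuartic A u v kl.1 * c kl = 0 := by
    simp only [← vecMul_syzygyMatrix]
    change (_ ᵥ* syzygyMatrix A) ⬝ᵥ c = 0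
    rw [← Matrix.dotProduct_mulVec, hc, dotProduct_zero]
  rw [← sub_zero (∑ kl, _), ← hzero, ← Finset.sum_sub_distrib]
  refine Ideal.sum_mem _ fun kl _ => ?_
  rw [← sub_mul, ← mul_sub]
  exact Ideal.mul_mem_right _ _ (Ideal.mul_mem_left _ _ (quartic_sub_conormalQuartic_mem hu _))

end Syzygies

section Base

/-- An integral configuration at which `surface` is easy to evaluate and does not vanish. Its lines
need not be skew, since it only serves to see that `surface` is not identically zero. -/
def baseMatrices : Fin 4 → Matrix (Fin 2) (Fin 2) ℤ :=
  ![!![-1, 0; 0, -1], !![0, 1; 1, -1], !![-1, 1; 1, -1], !![0, 0; 0, 1]]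

/-- A right inverse, up to the factor two, of the syzygy matrix of `baseMatrices`. -/
def baseRightInverse : Matrix (Fin 5 × Fin 3) (Fin 2 × Fin 6) ℤ :=
  Matrix.submatrix
    !![-2,  2,  0,  0,  0,  0,  2, -2,  2,  0,  0,  4;
        0,  0,  0,  0,  0,  0,  0,  0,  0,  0,  0,  0;
        0,  0,  0,  0,  0,  4,  0,  0,  0,  0,  2, -4;
        0, -2,  0,  0,  0,  0, -3,  2, -2,  0,  0, -4;
        0, -2,  0,  0,  0,  0,  0,  0,  0,  0,  0,  0;
        0,  0,  0,  0,  0,  0,  1,  0,  0,  2, -2,  6;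
       -1,  0,  0,  0,  0,  0,  0, -1,  0,  0,  0,  0;
        0,  0,  0,  0,  0,  0,  0,  0,  0,  0,  0,  0;
        0,  0,  0,  0,  0,  2,  0,  0,  0,  0,  0,  0;
       -3,  2, -2,  0,  0, -4,  2, -3,  2, -2,  0,  4;
       -1,  0,  0, -2,  0,  0,  0, -1,  0,  0,  0,  0;
        0,  0,  0,  0, -2,  6,  0,  0,  0,  0,  2, -6;
        0,  0,  0,  0,  0,  0, -1,  0,  0,  0,  0,  0;
        0,  0,  0,  0,  0,  0,  0,  0,  0,  0,  0,  0;
        0,  0,  0,  0,  0,  0,  0,  0,  0,  0,  0,  2]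
    finProdFinEquiv finProdFinEquiv

lemma syzygyMatrix_baseMatrices_mul_baseRightInverse :
    syzygyMatrix baseMatrices * baseRightInverse = (2 : ℤ) • 1 := by
  ext i j
  revert i j
  simp only [Matrix.mul_apply, syzygyMatrix, conormalCoeff, Matrix.adjugate_fin_two]
  decide +kernel

end Base

section Surface

variable {S S' : Type*} [CommRing S] [CommRing S'] (A : Fin 4 → Matrix (Fin 2) (Fin 2) S)

/-- Three elements of the kernel of the syzygy matrix, defined for all `A` at once. For
`baseMatrices` they are, up to a power of two, the basis of the kernel dual to the three zero rows
of `baseRightInverse`. -/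
def syzygy (j : Fin 3) : Fin 5 × Fin 3 → S :=
  cramerKernel (syzygyMatrix A) (baseRightInverse.map (Int.castRingHom S))
    (Pi.single (![0, 2, 4] j, 1) 1)

/-- Contracting each `syzygy` with the quartics turns its coefficients, which are binary quadratic
forms in `v`, into a row of three quartic forms: the coefficients of the binary monomials. -/
def syzygyForms (u v : Fin 2 → S) : Matrix (Fin 3) (Fin 3) S :=
  Matrix.of fun j l => ∑ k, syzygy A j (k, l) * quartic A k u v

/-- The form of degree twelve cutting out the surface. The rows of `syzygyForms` annihilate
`binaryMonomial 2 v` modulo the square of the ideal of `u = 0`, so by Cramer's rule the determinant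
vanishes there to order four instead of three. -/
def surface (u v : Fin 2 → S) : S := (syzygyForms A u v).det

variable {A} {u v : Fin 2 → S}

lemma map_syzygy (f : S →+* S') (j : Fin 3) (kl : Fin 5 × Fin 3) :
    f (syzygy A j kl) = syzygy (fun i => (A i).map f) j kl := by
  have hT : (baseRightInverse.map (Int.castRingHom S)).map f =
      baseRightInverse.map (Int.castRingHom S') := by
    ext; simp
  have hw (i : Fin 5 × Fin 3) : f ∘ Pi.single i 1 = (Pi.single i 1 : Fin 5 × Fin 3 → S') := by
    ext i'; simp [Pi.single_apply, apply_ite f]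
  have := congrFun (map_cramerKernel f (syzygyMatrix A) (baseRightInverse.map (Int.castRingHom S))
    (Pi.single (![0, 2, 4] j, 1) 1)) kl
  rwa [map_syzygyMatrix, hT, hw] at this

lemma map_surface (f : S →+* S') :
    f (surface A u v) = surface (fun i => (A i).map f) (f ∘ u) (f ∘ v) := by
  rw [surface, RingHom.map_det, surface]
  congr 1
  ext j l
  simp [syzygyForms, map_syzygy, map_quartic]

lemma syzygyForms_mem {I : Ideal S} (hI : ∀ k, quartic A k u v ∈ I) (j l : Fin 3) :
    syzygyForms A u v j l ∈ I := by
  rw [syzygyForms, Matrix.of_apply]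
  exact Ideal.sum_mem _ fun k _ => I.mul_mem_left _ (hI k)

lemma surface_mem_cube {I : Ideal S} (hI : ∀ k, quartic A k u v ∈ I) :
    surface A u v ∈ I ^ 3 := by
  simpa [surface] using det_mem_pow (syzygyForms_mem hI)

lemma mul_surface_mem_pow_four {J : Ideal S} (hu : ∀ j, u j ∈ J) :
    v 0 ^ 2 * surface A u v ∈ J ^ 4 := by
  have hrel (j : Fin 3) : (syzygyForms A u v *ᵥ binaryMonomial 2 v) j ∈ J ^ 2 := by
    have hj : (syzygyForms A u v *ᵥ binaryMonomial 2 v) j =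
        ∑ kl, binaryMonomial 2 v kl.2 * quartic A kl.1 u v * syzygy A j kl := by
      simp only [Matrix.mulVec, dotProduct, syzygyForms, Matrix.of_apply, Finset.sum_mul,
        Fintype.sum_prod_type]
      rw [Finset.sum_comm]
      refine Finset.sum_congr rfl fun k _ => Finset.sum_congr rfl fun l _ => by ring
    rw [hj]
    exact sum_binaryMonomial_mul_quartic_mem hu (mulVec_cramerKernel _ _ _)
  simpa [surface, binaryMonomial] using
    mul_det_mem_pow (syzygyForms_mem (quartic_mem_of_u_mem hu)) hrel 0

lemma syzygy_baseMatrices (j : Fin 3) : syzygy baseMatrices j = (2 ^ 11 : ℤ) •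
    ((2 : ℤ) • Pi.single (![0, 2, 4] j, 1) 1 -
      baseRightInverse *ᵥ syzygyMatrix baseMatrices *ᵥ Pi.single (![0, 2, 4] j, 1) 1) := by
  have hcast : baseRightInverse.map (Int.castRingHom ℤ) = baseRightInverse := by
    ext; simp
  rw [syzygy, hcast,
    cramerKernel_of_mul_eq_smul_one syzygyMatrix_baseMatrices_mul_baseRightInverse]
  rfl

lemma quartic_baseMatrices (k : Fin 5) :
    quartic baseMatrices k ![0, 1] ![1, 0] = ![1, 0, -2, 0, 0] k := by
  revert k
  simp only [quartic, horizontalQuadric, Matrix.adjugate_fin_two]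
  decide

lemma syzygyForms_baseMatrices : syzygyForms baseMatrices ![0, 1] ![1, 0] =
    (2 ^ 11 : ℤ) • !![0, 2, 0; 4, -4, 0; 0, 0, -2] := by
  ext j l
  rw [syzygyForms, Matrix.of_apply, Matrix.smul_apply]
  simp only [quartic_baseMatrices, syzygy_baseMatrices, Matrix.mulVec_single_one, Pi.smul_apply,
    Pi.sub_apply, syzygyMatrix, conormalCoeff, Matrix.adjugate_fin_two]
  revert j l
  decide +kernel

lemma surface_baseMatrices : surface baseMatrices ![0, 1] ![1, 0] = 2 ^ 37 := by
  have hdet : !![0, 2, 0; 4, -4, 0; 0, 0, -2].det = (16 : ℤ) := by decide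
  rw [surface, syzygyForms_baseMatrices, Matrix.det_smul, hdet]
  norm_num

end Surface

section CoordinateSurface

variable {R : Type*} [CommRing R] (B : Fin 4 → Matrix (Fin 2) (Fin 2) R)

/-- The form of degree twelve in the coordinates `u`, `v` attached to the lines `v = B i u`. -/
def surfaceForm : MvPolynomial (Fin 2 ⊕ Fin 2) R :=
  surface (fun i => (B i).map C) (fun i => X (.inl i)) fun j => X (.inr j)

lemma isHomogeneous_surfaceForm : (surfaceForm B).IsHomogeneous 12 := by
  refine isHomogeneous_det (d := 4) fun j l => ?_
  rw [syzygyForms, Matrix.of_apply]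
  refine IsHomogeneous.sum _ _ _ fun k _ => ?_
  rw [← map_syzygy C]
  exact (isHomogeneous_quartic B k).C_mul _

lemma surfaceForm_mem_axisIdeal_pow [IsDomain R] :
    surfaceForm B ∈ axisIdeal (Fin 2) (Fin 2) R ^ 4 := by
  have hu (i : Fin 2) : X (.inl i) ∈ axisIdeal (Fin 2) (Fin 2) R :=
    Ideal.subset_span (Set.mem_range_self i)
  have hmul := mul_surface_mem_pow_four (A := fun i => (B i).map C) (v := fun j => X (.inr j)) hu
  refine mem_axisIdeal_pow_of_mul_mem ?_ hmul
  rw [map_pow, aeval_X]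
  exact pow_ne_zero _ (X_ne_zero _)

lemma surfaceForm_mem_graphIdeal_zero_pow :
    surfaceForm B ∈ graphIdeal (0 : Matrix (Fin 2) (Fin 2) R) ^ 3 := by
  refine surface_mem_cube (quartic_mem_of_v_mem fun j => Ideal.subset_span ⟨j, ?_⟩)
  simp

lemma surfaceForm_mem_graphIdeal_pow (i : Fin 4) : surfaceForm B ∈ graphIdeal (B i) ^ 3 :=
  surface_mem_cube (quartic_mem_of_graph_mem (i := i) fun j =>
    Ideal.subset_span (Set.mem_range_self j))

lemma eval₂_surfaceForm {S : Type*} [CommRing S] (f : R →+* S) (u v : Fin 2 → S) :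
    eval₂ f (Sum.elim u v) (surfaceForm B) = surface (fun i => (B i).map f) u v := by
  rw [← coe_eval₂Hom, surfaceForm, map_surface]
  simp [Function.comp_def]

end CoordinateSurface

section Deformation

variable {K : Type*} [Field K] {m n : Type*}

/-- The line through `A` (at `s = 0`) and `B` (at `s = 1`) in the space of matrices. -/
def matrixLine (A B : Matrix m n K) : Matrix m n (Polynomial K) :=
  A.map .C + (Polynomial.X : Polynomial K) • (B - A).map .C

lemma map_eval_zero_matrixLine (A B : Matrix m n K) :
    (matrixLine A B).map (Polynomial.eval 0) = A := by
  ext; simp [matrixLine]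

lemma map_eval_one_matrixLine (A B : Matrix m n K) :
    (matrixLine A B).map (Polynomial.eval 1) = B := by
  ext; simp [matrixLine]

/-- The normal form of the theorem, by specialization from the generic point of the line joining
`A` to `baseMatrices`. -/
theorem exists_form_of_graphs [NeZero (2 : K)] (A : Fin 4 → Matrix (Fin 2) (Fin 2) K) :
    ∃ F : MvPolynomial (Fin 2 ⊕ Fin 2) K, F ≠ 0 ∧ F.IsHomogeneous 12 ∧
      F ∈ axisIdeal (Fin 2) (Fin 2) K ^ 4 ∧
      F ∈ graphIdeal (0 : Matrix (Fin 2) (Fin 2) K) ^ 3 ∧ ∀ i, F ∈ graphIdeal (A i) ^ 3 := by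
  let B i := matrixLine ((baseMatrices i).map (Int.castRingHom K)) (A i)
  have hbase : eval₂ (Polynomial.evalRingHom 0)
      (Sum.elim (Int.castRingHom K ∘ ![0, 1]) (Int.castRingHom K ∘ ![1, 0])) (surfaceForm B) =
        2 ^ 37 := by
    have hB : (fun i => (B i).map (Polynomial.evalRingHom 0)) =
        fun i => (baseMatrices i).map (Int.castRingHom K) :=
      funext fun i => map_eval_zero_matrixLine _ _
    rw [eval₂_surfaceForm, hB, ← map_surface, surface_baseMatrices]
    norm_num
  have hF : surfaceForm B ≠ 0 := fun h => by
    rw [h, eval₂_zero] at hbase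
    exact pow_ne_zero 37 two_ne_zero hbase.symm
  obtain ⟨G, hG, hhom, haxis, hgraph⟩ := exists_specialization hF 1
  refine ⟨G, hG, hhom _ (isHomogeneous_surfaceForm B),
    haxis _ (surfaceForm_mem_axisIdeal_pow B), ?_, fun i => ?_⟩
  · simpa using hgraph _ _ (surfaceForm_mem_graphIdeal_zero_pow B)
  · simpa only [B, map_eval_one_matrixLine] using
      hgraph _ _ (surfaceForm_mem_graphIdeal_pow B i)

end Deformation

section LinearSubstitution

variable {σ τ R : Type*} [CommRing R] [Fintype σ] [DecidableEq σ]

/-- The pullback of polynomial functions along a linear map. -/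
def linearSubst (f : (σ → R) →ₗ[R] τ → R) : MvPolynomial τ R →ₐ[R] MvPolynomial σ R :=
  bind₁ (LinearMap.toMatrix' f).toMvPolynomial

lemma aeval_linearSubst (f : (σ → R) →ₗ[R] τ → R) (x : σ → R) (p : MvPolynomial τ R) :
    aeval x (linearSubst f p) = aeval (f x) p := by
  rw [linearSubst, aeval_bind₁]
  congr 2
  ext i
  rw [aeval_eq_eval, Matrix.toMvPolynomial_eval_eq_apply, LinearMap.toMatrix'_mulVec]

lemma isHomogeneous_linearSubst (f : (σ → R) →ₗ[R] τ → R) {p : MvPolynomial τ R} {d : ℕ}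
    (hp : p.IsHomogeneous d) : (linearSubst f p).IsHomogeneous d := by
  simpa only [linearSubst, bind₁, one_mul] using
    hp.aeval _ (Matrix.toMvPolynomial_isHomogeneous _)

lemma linearSubst_injective [Finite τ] (e : (σ → R) ≃ₗ[R] τ → R) :
    Function.Injective (linearSubst e.toLinearMap) := by
  classical
  cases nonempty_fintype τ
  have hinv : (linearSubst e.symm.toLinearMap).comp (linearSubst e.toLinearMap) =
      AlgHom.id R _ := by
    ext i : 1
    rw [AlgHom.comp_apply, linearSubst, linearSubst, bind₁_X_right, ← Matrix.toMvPolynomial_mul,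
      ← LinearMap.toMatrix'_comp, LinearEquiv.comp_symm, LinearMap.toMatrix'_id,
      Matrix.toMvPolynomial_one, AlgHom.id_apply]
  exact Function.LeftInverse.injective (g := linearSubst e.symm.toLinearMap)
    (DFunLike.congr_fun hinv)

end LinearSubstitution

section AdaptedCoordinates

variable {K V : Type*} [Field K] [AddCommGroup V] [Module K V]
  {m n : Type*} [Fintype m]

lemma exists_linearEquiv_prod_of_disjoint [FiniteDimensional K V] [Fintype n]
    {P M : Submodule K V} (hPM : Disjoint M P) (hP : Module.finrank K P = Fintype.card n)
    (hV : Module.finrank K V = Fintype.card m + Fintype.card n) :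
    ∃ e : V ≃ₗ[K] (m → K) × (n → K), (∀ x, (e x).1 = 0 ↔ x ∈ P) ∧ ∀ x ∈ M, (e x).2 = 0 := by
  obtain ⟨Q, hMQ, hQP⟩ := hPM.exists_isCompl
  have hQ : Module.finrank K Q = Fintype.card m := by
    have := Submodule.finrank_add_eq_of_isCompl hQP
    omega
  let eQ : Q ≃ₗ[K] m → K := .ofFinrankEq _ _ (by simpa using hQ)
  let eP : P ≃ₗ[K] n → K := .ofFinrankEq _ _ (by simpa using hP)
  refine ⟨(Submodule.prodEquivOfIsCompl Q P hQP).symm.trans (eQ.prodCongr eP),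
    fun x => ?_, fun x hx => ?_⟩
  · simp
  · simpa using hMQ hx

lemma exists_matrix_of_disjoint_ker (f : V →ₗ[K] m → K) (g : V →ₗ[K] n → K)
    {L : Submodule K V} (hL : Disjoint (LinearMap.ker f) L) :
    ∃ A : Matrix n m K, ∀ x ∈ L, g x = A *ᵥ f x := by
  classical
  obtain ⟨h, hh⟩ := (f.domRestrict L).exists_leftInverse_of_injective <| by
    rw [LinearMap.ker_domRestrict, ← Submodule.disjoint_iff_comap_eq_bot]
    exact hL.symm
  refine ⟨LinearMap.toMatrix' (g ∘ₗ L.subtype ∘ₗ h), fun x hx => ?_⟩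
  rw [LinearMap.toMatrix'_mulVec]
  have : h (f x) = ⟨x, hx⟩ := DFunLike.congr_fun hh (⟨x, hx⟩ : L)
  simp [this]

end AdaptedCoordinates

section Pullback

variable {σ m n K : Type*} [Field K] [Fintype σ] [DecidableEq σ]

lemma axisIdeal_le_comap_linearSubst {f : (σ → K) →ₗ[K] m ⊕ n → K} {P : Set (σ → K)}
    (hP : ∀ x ∈ P, ∀ i, f x (.inl i) = 0) :
    axisIdeal m n K ≤ (vanishingIdeal K P).comap (linearSubst f) := by
  rw [axisIdeal, Ideal.span_le]
  rintro _ ⟨i, rfl⟩ x hx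
  rw [aeval_linearSubst]
  simpa using hP x hx i

lemma graphIdeal_le_comap_linearSubst [Fintype m] {f : (σ → K) →ₗ[K] m ⊕ n → K}
    {A : Matrix n m K} {L : Set (σ → K)}
    (hL : ∀ x ∈ L, ∀ j, f x (.inr j) = (A *ᵥ fun i => f x (.inl i)) j) :
    graphIdeal A ≤ (vanishingIdeal K L).comap (linearSubst f) := by
  rw [graphIdeal, Ideal.span_le]
  rintro _ ⟨j, rfl⟩ x hx
  rw [aeval_linearSubst]
  simpa [Matrix.mulVec, dotProduct, sub_eq_zero] using hL x hx j

end Pullback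

lemma lineIdeal_eq_vanishingIdeal (L : Submodule ℂ C4) :
    lineIdeal L = vanishingIdeal ℂ (L : Set C4) :=
  rfl

end SkewLines

open SkewLines in
theorem stmt_10_general {K : Type*} [Field K] [NeZero (2 : K)] (L₀ : Submodule K (Fin 4 → K))
    (L : Fin 5 → Submodule K (Fin 4 → K)) (hdim : Module.finrank K L₀ = 2)
    (hskew : ∀ i, Disjoint L₀ (L i)) :
    ∃ F : MvPolynomial (Fin 4) K, F ≠ 0 ∧ F.IsHomogeneous 12 ∧
      F ∈ vanishingIdeal K (L₀ : Set (Fin 4 → K)) ^ 4 ∧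
      ∀ i, F ∈ vanishingIdeal K (L i : Set (Fin 4 → K)) ^ 3 := by
  obtain ⟨e, hP, hM⟩ := exists_linearEquiv_prod_of_disjoint (m := Fin 2) (n := Fin 2)
    (hskew 0).symm (by simpa using hdim) (by simp)
  have hker (i : Fin 4) : Disjoint (LinearMap.ker (LinearMap.fst K _ _ ∘ₗ e.toLinearMap))
      (L i.succ) := by
    have : LinearMap.ker (LinearMap.fst K _ _ ∘ₗ e.toLinearMap) = L₀ := Submodule.ext hP
    exact this ▸ hskew i.succ
  choose A hA using fun i => exists_matrix_of_disjoint_ker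
    (LinearMap.fst K _ _ ∘ₗ e.toLinearMap) (LinearMap.snd K _ _ ∘ₗ e.toLinearMap) (hker i)
  obtain ⟨F, hF, hhom, haxis, hzero, hgraph⟩ := exists_form_of_graphs A
  let e' := e.trans (LinearEquiv.sumArrowLequivProdArrow (Fin 2) (Fin 2) K K).symm
  refine ⟨linearSubst e'.toLinearMap F,
    (map_ne_zero_iff _ (linearSubst_injective e')).2 hF, isHomogeneous_linearSubst _ hhom,
    map_mem_pow_of_le_comap (axisIdeal_le_comap_linearSubst fun x hx => ?_) haxis,
    Fin.cases ?_ fun i => ?_⟩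
  · exact congrFun ((hP x).2 hx)
  · refine map_mem_pow_of_le_comap (graphIdeal_le_comap_linearSubst fun x hx j => ?_) hzero
    rw [Matrix.zero_mulVec]
    exact congrFun (hM x hx) j
  · exact map_mem_pow_of_le_comap
      (graphIdeal_le_comap_linearSubst fun x hx => congrFun (hA i x hx)) (hgraph i)

/-- For every configuration of six pairwise skew lines in `P^3` there is a
surface of degree 12 vanishing to order 4 along the first line and to order 3
along the remaining five. -/
theorem stmt_10 (L : Fin 6 → Submodule ℂ C4)
    (hdim : ∀ i, Module.finrank ℂ ↥(L i) = 2)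
    (hskew : ∀ i j, i ≠ j → L i ⊓ L j = ⊥) :
    ∃ F : R3, F ≠ 0 ∧ F.IsHomogeneous 12 ∧
      F ∈ (lineIdeal (L 0)) ^ 4 ∧ ∀ i, i ≠ 0 → F ∈ (lineIdeal (L i)) ^ 3 := by
  obtain ⟨F, hF, hhom, hzero, hsucc⟩ := stmt_10_general (L 0) (fun i => L i.succ) (hdim 0)
    fun i => disjoint_iff.2 (hskew _ _ (Fin.succ_ne_zero i).symm)
  refine ⟨F, hF, hhom, SkewLines.lineIdeal_eq_vanishingIdeal (L 0) ▸ hzero, fun i hi => ?_⟩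
  obtain ⟨j, rfl⟩ := Fin.exists_succ_eq.2 hi
  exact SkewLines.lineIdeal_eq_vanishingIdeal (L j.succ) ▸ hsucc j
end
end
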